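/- Right-wing Bäcklund transformations for the Wronskian supercharacters. For any fixed b ∈ B1 and f ∈ F1, writing B1′ = B1 with b removed and F1′ = F1 with f removed, the Wronskian supercharacters satisfy, for all a, s ∈ ℤ: (1) χ_{a+1,s}·χ^{B1′}_{a,s} − χ_{a,s}·χ^{B1′}_{a+1,s} = z_b·χ_{a+1,s−1}·χ^{B1′}_{a,s+1}; (2) χ_{a,s+1}·χ^{B1′}_{a,s} − χ_{a,s}·χ^{B1′}_{a,s+1} = z_b·χ_{a+1,s}·χ^{B1′}_{a−1,s+1}; (3) χ^{F1′}_{a+1,s}·χ_{a,s} − χ^{F1′}_{a,s}·χ_{a+1,s} = z_f·χ^{F1′}_{a+1,s−1}·χ_{a,s+1}; (4) χ^{F1′}_{a,s+1}·χ_{a,s} − χ^{F1′}_{a,s}·χ_{a,s+1} = z_f·χ^{F1′}_{a+1,s}·χ_{a−1,s+1}. Here χ = χ^{B1,B2,F1,F2}, χ^{B1′} denotes the Wronskian supercharacter built with B1 replaced by B1′ (so m1 decreased by 1, all other data unchanged), and χ^{F1′} that built with F1 replaced by F1′ (n1 decreased by 1). -/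

import Mathlib

open scoped BigOperators

namespace Stmt1

/-- The integer segment tuple `⟨a,b⟩ = (a, a+1, …, b)`, empty when `b < a`. -/
def seg (a b : ℤ) : List ℤ := (List.range (b - a + 1).toNat).map (fun k => a + (k : ℤ))

/-- Product of `g x y` over ordered pairs `x ≺ y` in the list `L`. -/
def pairProd {ι : Type*} (L : List ι) (g : ι → ι → ℂ) : ℂ :=
  ∏ i : Fin L.length, ∏ j : Fin L.length, if i < j then g (L.get i) (L.get j) else 1

/-- Product of `g x` over a list. -/
def prodL {ι : Type*} (L : List ι) (g : ι → ℂ) : ℂ := (L.map g).prod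

/-- Product of `g x y` over pairs `(x, y) ∈ L × M`. -/
def prodLL {ι : Type*} (L M : List ι) (g : ι → ι → ℂ) : ℂ :=
  (L.map (fun x => (M.map (g x)).prod)).prod

/-- Determinant of the square matrix whose rows and columns are labelled by the given
key lists (by convention `0` if the two lists have different lengths). -/
noncomputable def listDet {α β : Type*} (rows : List α) (cols : List β) (e : α → β → ℂ) : ℂ :=
  if h : rows.length = cols.length then
    Matrix.det (Matrix.of fun i j : Fin rows.length =>
      e (rows.get i) (cols.get (Fin.cast h j)))
  else 0

/-- The sparse determinant `Δ^{B1,B2,R,(η)}_{F,S,T1,T2}`. -/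
noncomputable def Delta {ι : Type*} (z : ι → ℂ) (B1 B2 F : List ι)
    (R S T1 T2 : List ℤ) (η : ℤ) : ℂ :=
  listDet
    ((B1.map (Sum.inl : ι → ι ⊕ (ι ⊕ ℤ)) ++
      B2.map (fun b => (Sum.inr (Sum.inl b) : ι ⊕ (ι ⊕ ℤ))) ++
      R.map (fun r => (Sum.inr (Sum.inr r) : ι ⊕ (ι ⊕ ℤ)))))
    ((F.map (Sum.inl : ι → ι ⊕ (ℤ ⊕ (ℤ ⊕ ℤ))) ++
      S.map (fun j => (Sum.inr (Sum.inl j) : ι ⊕ (ℤ ⊕ (ℤ ⊕ ℤ)))) ++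
      T1.map (fun j => (Sum.inr (Sum.inr (Sum.inl j)) : ι ⊕ (ℤ ⊕ (ℤ ⊕ ℤ)))) ++
      T2.map (fun j => (Sum.inr (Sum.inr (Sum.inr j)) : ι ⊕ (ℤ ⊕ (ℤ ⊕ ℤ))))))
    (fun row col =>
      match row, col with
      | Sum.inl b, Sum.inl f => 1 / (z b - z f)
      | Sum.inl b, Sum.inr (Sum.inl j) => z b ^ (j - 1)
      | Sum.inl b, Sum.inr (Sum.inr (Sum.inl j)) => z b ^ (j - 1)
      | Sum.inl _, Sum.inr (Sum.inr (Sum.inr _)) => 0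
      | Sum.inr (Sum.inl b), Sum.inl f => (-z f / z b) ^ η / (z b - z f)
      | Sum.inr (Sum.inl b), Sum.inr (Sum.inl j) => z b ^ (j - 1)
      | Sum.inr (Sum.inl _), Sum.inr (Sum.inr (Sum.inl _)) => 0
      | Sum.inr (Sum.inl b), Sum.inr (Sum.inr (Sum.inr j)) => z b ^ (j - 1)
      | Sum.inr (Sum.inr r), Sum.inl f => (-z f) ^ (r - 1)
      | Sum.inr (Sum.inr _), Sum.inr _ => 0)

/-- The denominator formula `D(B|F)`. -/
noncomputable def Dden {ι : Type*} (z : ι → ℂ) (B F : List ι) : ℂ :=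
  pairProd B (fun b b' => z b - z b') * pairProd F (fun f f' => z f' - z f) /
    prodLL B F (fun b f => z b - z f)

/-- `χ` is the Wronskian supercharacter family for the data `(z, B1, B2, F1, F2)`:
it vanishes outside the generalized T-hook and is given by the eight regional
sparse determinant formulas inside the hook. -/
def IsChi {ι : Type*} (z : ι → ℂ) (B1 B2 F1 F2 : List ι) (χ : ℤ → ℤ → ℂ) : Prop :=
  let m1 : ℤ := B1.length
  let m2 : ℤ := B2.length
  let n1 : ℤ := F1.length
  let n2 : ℤ := F2.length
  let η1 : ℤ := m1 - n1
  let η2 : ℤ := m2 - n2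
  let θ : ℤ := (m1 + m2) * (m1 + m2 - 1) / 2 + (n1 + n2) * (n1 + n2 - 1) / 2
  let F : List ι := F1 ++ F2
  let Dd : ℂ := Dden z (B1 ++ B2) F
  (∀ a s : ℤ, (a < 0 ∨ (m1 < a ∧ n1 < s) ∨ (m2 < a ∧ s < -n2)) → χ a s = 0) ∧
  (∀ a s : ℤ, s + η1 ≤ a → -s + η2 ≤ a → 0 ≤ a → -η1 ≤ s → s ≤ η2 →
    χ a s = (-1 : ℂ) ^ ((s + η1) * (s + n2) + θ) *
      Delta z B1 B2 F [] [] (seg 1 (s + η1)) (seg (s - a + η1 + 1) (-a + η1 + η2))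
        (a - s - η1) / Dd) ∧
  (∀ a s : ℤ, s + η1 ≤ a → -s + η2 ≤ a → 0 ≤ a → -η1 ≤ s → η2 ≤ s →
    χ a s = (-1 : ℂ) ^ ((s + η1) * (s + n2) + θ) *
      Delta z B1 B2 F (seg (a - s - η1 + 1) (a - η1 - η2)) [] (seg 1 (s + η1)) []
        (a - s - η1) / Dd) ∧
  (∀ a s : ℤ, s + η1 ≤ a → -s + η2 ≤ a → 0 ≤ a → s ≤ -η1 → s ≤ η2 →
    χ a s = (-1 : ℂ) ^ ((s + η1) * m2 + θ) *
      Delta z B1 B2 F (seg 1 (-s - η1)) [] [] (seg (s - a + η1 + 1) (-a + η1 + η2))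
        (a - s - η1) / Dd) ∧
  (∀ a s : ℤ, s + η1 ≤ a → -s + η2 ≤ a → 0 ≤ a → η2 ≤ s → s ≤ -η1 →
    χ a s = (-1 : ℂ) ^ ((s + η1) * m2 + θ) *
      Delta z B1 B2 F (seg 1 (-s - η1) ++ seg (a - s - η1 + 1) (a - η1 - η2)) [] [] []
        (a - s - η1) / Dd) ∧
  (∀ a s : ℤ, a ≤ s + η1 → a ≤ η1 + η2 →
    χ a s = (-1 : ℂ) ^ (a * m2 + θ) *
      Delta z B1 B2 F [] (seg 1 (-a + η1 + η2)) (seg (s - a + η1 + 1) (s + η1)) [] 0 / Dd) ∧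
  (∀ a s : ℤ, η1 + η2 ≤ a → a ≤ s + η1 →
    χ a s = (-1 : ℂ) ^ (a * (η1 + n2 + 1) + θ) *
      Delta z B1 B2 F (seg 1 (a - η1 - η2)) [] (seg (s - a + η1 + 1) (s + η1)) [] 0 / Dd) ∧
  (∀ a s : ℤ, a ≤ -s + η2 → a ≤ η1 + η2 →
    χ a s = (-1 : ℂ) ^ (a * (1 + m2) + θ) *
      Delta z B1 B2 F [] (seg 1 (-a + η1 + η2)) [] (seg (s - a + η1 + 1) (s + η1)) 0 / Dd) ∧
  (∀ a s : ℤ, η1 + η2 ≤ a → a ≤ -s + η2 →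
    χ a s = (-1 : ℂ) ^ (a * (η1 + n2) + θ) *
      Delta z B1 B2 F (seg 1 (a - η1 - η2)) [] [] (seg (s - a + η1 + 1) (s + η1)) 0 / Dd)

section ListDet
variable {α β γ : Type*}

theorem listDet_eq {n : ℕ} {rows : List α} {cols : List β} (hr : rows.length = n)
    (hc : cols.length = n) (e : α → β → ℂ) :
    listDet rows cols e = Matrix.det (Matrix.of fun i j : Fin n =>
      e (rows[(i : ℕ)]'(by omega)) (cols[(j : ℕ)]'(by omega))) := by
  subst hr
  rw [listDet, dif_pos hc.symm]
  rfl

theorem listDet_ne {rows : List α} {cols : List β} (h : rows.length ≠ cols.length)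
    (e : α → β → ℂ) : listDet rows cols e = 0 := by
  rw [listDet, dif_neg h]

theorem listDet_congr {rows : List α} {cols : List β} {e e' : α → β → ℂ}
    (h : ∀ r ∈ rows, ∀ c ∈ cols, e r c = e' r c) : listDet rows cols e = listDet rows cols e' := by
  by_cases hl : rows.length = cols.length
  · rw [listDet_eq rfl hl.symm, listDet_eq rfl hl.symm]
    congr 1
    ext i j
    simp only [Matrix.of_apply]
    exact h _ (List.getElem_mem _) _ (List.getElem_mem _)
  · rw [listDet_ne hl, listDet_ne hl]

theorem listDet_map {α' β' : Type*} (rows : List α') (cols : List β') (g : α' → α) (h : β' → β)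
    (e : α → β → ℂ) :
    listDet (rows.map g) (cols.map h) e = listDet rows cols (fun r c => e (g r) (h c)) := by
  by_cases hl : rows.length = cols.length
  · rw [listDet_eq (n := rows.length) (by simp) (by simp [hl]), listDet_eq rfl hl.symm]
    simp
  · rw [listDet_ne hl, listDet_ne (by simpa using hl)]

theorem listDet_transpose (rows : List α) (cols : List β) (e : α → β → ℂ) :
    listDet rows cols e = listDet cols rows (fun c r => e r c) := by
  by_cases hl : rows.length = cols.length
  · rw [listDet_eq (n := rows.length) rfl hl.symm, listDet_eq (n := rows.length) hl.symm rfl,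
      ← Matrix.det_transpose]
    rfl
  · rw [listDet_ne hl, listDet_ne (Ne.symm hl)]

theorem list_sum_eq_fin {n : ℕ} (ks : List γ) (hk : ks.length = n) (g : γ → ℂ) :
    (ks.map g).sum = ∑ i : Fin n, g (ks[(i : ℕ)]'(by omega)) := by
  subst hk
  exact (Fin.sum_univ_fun_getElem ks g).symm

theorem list_prod_eq_fin {n : ℕ} (ks : List γ) (hk : ks.length = n) (g : γ → ℂ) :
    (ks.map g).prod = ∏ i : Fin n, g (ks[(i : ℕ)]'(by omega)) := by
  subst hk
  exact (Fin.prod_univ_fun_getElem ks g).symm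

theorem listDet_mul {rows : List α} {ks : List γ} {cols : List β}
    (h1 : rows.length = ks.length) (h2 : ks.length = cols.length)
    (A : α → γ → ℂ) (B : γ → β → ℂ) :
    listDet rows ks A * listDet ks cols B =
      listDet rows cols (fun r c => (ks.map (fun k => A r k * B k c)).sum) := by
  rw [listDet_eq (n := ks.length) h1 rfl, listDet_eq (n := ks.length) rfl h2.symm,
    listDet_eq (n := ks.length) h1 h2.symm, ← Matrix.det_mul]
  congr 1
  ext i j
  simp only [Matrix.of_apply, Matrix.mul_apply]
  rw [list_sum_eq_fin ks rfl]

theorem listDet_rank {rows : List α} {ks : List γ} {cols : List β}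
    (h1 : ks.length < rows.length)
    (A : α → γ → ℂ) (B : γ → β → ℂ) :
    listDet rows cols (fun r c => (ks.map (fun k => A r k * B k c)).sum) = 0 := by
  by_cases hl : rows.length = cols.length
  · rw [listDet_eq (n := rows.length) rfl hl.symm]
    have : (Matrix.of fun i j : Fin rows.length =>
        (ks.map (fun k => A (rows[(i : ℕ)]) k * B k (cols[(j : ℕ)]))).sum) =
        (Matrix.of fun (i : Fin rows.length) (k : Fin ks.length) => A (rows[(i : ℕ)]) (ks[(k:ℕ)])) *
        (Matrix.of fun (k : Fin ks.length) (j : Fin rows.length) => B (ks[(k:ℕ)]) (cols[(j : ℕ)])) := by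
      ext i j
      simp only [Matrix.of_apply, Matrix.mul_apply]
      rw [list_sum_eq_fin ks rfl]
    rw [this]
    by_contra hd
    have hu := Matrix.rank_of_isUnit _ ((Matrix.isUnit_iff_isUnit_det _).2 (isUnit_iff_ne_zero.2 hd))
    have h3 := (Matrix.rank_mul_le_left (Matrix.of fun (i : Fin rows.length) (k : Fin ks.length) =>
      A (rows[(i : ℕ)]) (ks[(k:ℕ)])) (Matrix.of fun (k : Fin ks.length) (j : Fin rows.length) =>
      B (ks[(k:ℕ)]) (cols[(j : ℕ)]))).trans (Matrix.rank_le_card_width _)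
    rw [hu] at h3
    simp at h3
    omega
  · rw [listDet_ne hl]

theorem listDet_scale (rows : List α) (cols : List β) (u : α → ℂ) (v : β → ℂ) (e : α → β → ℂ) :
    listDet rows cols (fun r c => u r * v c * e r c) =
      (rows.map u).prod * (cols.map v).prod * listDet rows cols e := by
  by_cases hl : rows.length = cols.length
  · rw [listDet_eq (n := rows.length) rfl hl.symm, listDet_eq (n := rows.length) rfl hl.symm,
      list_prod_eq_fin rows rfl, list_prod_eq_fin cols hl.symm, mul_assoc, ← Matrix.det_mul_row,
      ← Matrix.det_mul_column]
    congr 1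
    ext i j
    simp [mul_assoc]
  · rw [listDet_ne hl, listDet_ne hl, mul_zero]

theorem listDet_block_aux {r1 r2 : List α} {c1 c2 : List β} (h1 : r1.length = c1.length)
    (h2 : r2.length = c2.length) (e : α → β → ℂ) :
    listDet (r1 ++ r2) (c1 ++ c2) e = Matrix.det (Matrix.fromBlocks
      (Matrix.of fun i j : Fin r1.length => e (r1[(i:ℕ)]) (c1[(j:ℕ)]))
      (Matrix.of fun (i : Fin r1.length) (j : Fin r2.length) => e (r1[(i:ℕ)]) (c2[(j:ℕ)]))
      (Matrix.of fun (i : Fin r2.length) (j : Fin r1.length) => e (r2[(i:ℕ)]) (c1[(j:ℕ)]))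
      (Matrix.of fun i j : Fin r2.length => e (r2[(i:ℕ)]) (c2[(j:ℕ)]))) := by
  rw [listDet_eq (n := r1.length + r2.length) (by simp) (by simp [h1, h2]),
    ← Matrix.det_submatrix_equiv_self finSumFinEquiv]
  congr 1
  ext i j
  have hi : ∀ i : Fin r1.length, (r1 ++ r2)[(i : ℕ)]'(by simp; omega) = r1[(i : ℕ)] := fun i =>
    List.getElem_append_left i.2
  have hj : ∀ j : Fin r1.length, (c1 ++ c2)[(j : ℕ)]'(by simp; omega) = c1[(j : ℕ)] := fun j =>
    List.getElem_append_left (by omega)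
  rcases i with i | i <;> rcases j with j | j <;>
    simp [List.getElem_append_right, h1, hi, hj]

/-- block lower triangular -/
theorem listDet_block {r1 r2 : List α} {c1 c2 : List β} (h1 : r1.length = c1.length)
    (h2 : r2.length = c2.length) (e : α → β → ℂ) (h : ∀ r ∈ r1, ∀ c ∈ c2, e r c = 0) :
    listDet (r1 ++ r2) (c1 ++ c2) e = listDet r1 c1 e * listDet r2 c2 e := by
  rw [listDet_block_aux h1 h2, listDet_eq (n := r1.length) rfl h1.symm,
    listDet_eq (n := r2.length) rfl h2.symm]
  have : (Matrix.of fun (i : Fin r1.length) (j : Fin r2.length) => e (r1[(i:ℕ)]) (c2[(j:ℕ)])) = 0 := by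
    ext i j
    exact h _ (List.getElem_mem _) _ (List.getElem_mem _)
  rw [this, Matrix.det_fromBlocks_zero₁₂]

/-- block upper triangular -/
theorem listDet_block' {r1 r2 : List α} {c1 c2 : List β} (h1 : r1.length = c1.length)
    (h2 : r2.length = c2.length) (e : α → β → ℂ) (h : ∀ r ∈ r2, ∀ c ∈ c1, e r c = 0) :
    listDet (r1 ++ r2) (c1 ++ c2) e = listDet r1 c1 e * listDet r2 c2 e := by
  rw [listDet_transpose, listDet_block h1.symm h2.symm _ (fun r hr c hc => h c hc r hr),
    listDet_transpose r1, listDet_transpose r2]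

theorem listDet_adj (rows : List α) (c1 c2 : List β) (x y : β) (e : α → β → ℂ) :
    listDet rows (c1 ++ x :: y :: c2) e = - listDet rows (c1 ++ y :: x :: c2) e := by
  by_cases hl : rows.length = (c1 ++ x :: y :: c2).length
  · have hl' : rows.length = (c1 ++ y :: x :: c2).length := by simpa using hl
    rw [listDet_eq (n := rows.length) rfl hl.symm, listDet_eq (n := rows.length) rfl hl'.symm]
    have hlen : rows.length = c1.length + (c2.length + 2) := by simpa using hl
    have hne : (⟨c1.length, by omega⟩ : Fin rows.length) ≠ ⟨c1.length + 1, by omega⟩ := by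
      simp [Fin.ext_iff]
    have := Matrix.det_permute' (Equiv.swap (⟨c1.length, by omega⟩ : Fin rows.length)
      ⟨c1.length + 1, by omega⟩) (Matrix.of fun i j : Fin rows.length =>
        e (rows[(i : ℕ)]) ((c1 ++ y :: x :: c2)[(j : ℕ)]'(by omega)))
    rw [Equiv.Perm.sign_swap hne] at this
    simp only [Units.val_neg, Units.val_one, Int.cast_neg, Int.cast_one, neg_mul, one_mul] at this
    rw [← this]
    congr 1
    ext i j
    simp only [Matrix.submatrix_apply, id, Matrix.of_apply]
    congr 1
    by_cases hj : j = ⟨c1.length, by omega⟩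
    · subst hj
      rw [Equiv.swap_apply_left]
      simp
    · by_cases hj2 : j = ⟨c1.length + 1, by omega⟩
      · subst hj2
        rw [Equiv.swap_apply_right]
        simp
      · rw [Equiv.swap_apply_of_ne_of_ne hj hj2]
        have h1 : (j : ℕ) ≠ c1.length := fun h => hj (Fin.ext h)
        have h2 : (j : ℕ) ≠ c1.length + 1 := fun h => hj2 (Fin.ext h)
        simp only [List.getElem_append]
        split_ifs with h
        · rfl
        · obtain ⟨d, hd⟩ : ∃ d, (j : ℕ) - c1.length = d + 2 := ⟨j - c1.length - 2, by omega⟩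
          simp [hd]
  · rw [listDet_ne hl, listDet_ne (by simpa using hl), neg_zero]

theorem listDet_move (rows : List α) (c1 c2 c3 : List β) (x : β) (e : α → β → ℂ) :
    listDet rows (c1 ++ x :: (c2 ++ c3)) e =
      (-1) ^ c2.length * listDet rows (c1 ++ (c2 ++ x :: c3)) e := by
  induction c2 generalizing c1 with
  | nil => simp
  | cons y c2 ih =>
    have := ih (c1 ++ [y])
    simp only [List.append_assoc, List.cons_append, List.nil_append] at this
    rw [List.cons_append, listDet_adj, this]
    simp [pow_succ]

/-- swapping two adjacent blocks of columns -/
theorem listDet_swap (rows : List α) (c1 c2 c3 c4 : List β) (e : α → β → ℂ) :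
    listDet rows (c1 ++ (c2 ++ (c3 ++ c4))) e =
      (-1) ^ (c2.length * c3.length) * listDet rows (c1 ++ (c3 ++ (c2 ++ c4))) e := by
  induction c2 generalizing c1 with
  | nil => simp
  | cons x c2 ih =>
    have := ih (c1 ++ [x])
    simp only [List.append_assoc, List.cons_append, List.nil_append] at this
    rw [List.cons_append, this, listDet_move]
    simp [← mul_assoc, ← pow_add, Nat.succ_mul]

end ListDet

/-- arithmetic segment of length `n` -/
def sg (a : ℤ) (n : ℕ) : List ℤ := (List.range n).map (fun k : ℕ => a + (k : ℤ))

theorem seg_eq (a b : ℤ) : seg a b = sg a (b - a + 1).toNat := by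
  simp only [seg, sg, List.pure_def, List.bind_eq_flatMap]
  rw [← List.map_eq_flatMap, List.map_map]
  rfl

@[simp] theorem sg_length (a : ℤ) (n : ℕ) : (sg a n).length = n := by simp [sg]

@[simp] theorem sg_zero (a : ℤ) : sg a 0 = [] := rfl

theorem mem_sg {a : ℤ} {n : ℕ} {x : ℤ} : x ∈ sg a n ↔ a ≤ x ∧ x < a + n := by
  simp only [sg, List.mem_map, List.mem_range]
  constructor
  · rintro ⟨k, hk, rfl⟩; omega
  · rintro ⟨h1, h2⟩; exact ⟨(x - a).toNat, by omega, by omega⟩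

theorem sg_append (a b : ℤ) (n k : ℕ) (h : b = a + n) : sg a n ++ sg b k = sg a (n + k) := by
  subst h
  simp only [sg, List.range_add, List.map_append, List.map_map]
  congr 1
  apply List.map_congr_left
  intro x _
  simp [add_assoc]

theorem sg_succ (a : ℤ) (n : ℕ) : sg a (n + 1) = a :: sg (a + 1) n := by
  rw [Nat.add_comm, ← sg_append a (a + 1) 1 n (by simp)]
  simp [sg]

theorem sg_getElem (a : ℤ) (n i : ℕ) (h : i < (sg a n).length) : (sg a n)[i] = a + i := by
  simp [sg]

theorem sg_eq_map (a c : ℤ) (n : ℕ) : sg a n = (sg (a - c) n).map (fun x => x + c) := by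
  simp only [sg, List.map_map]
  apply List.map_congr_left
  intro x _
  simp; ring

/-- reversal sign for antitriangular matrices -/
theorem listDet_anti (n : ℕ) (a b : ℤ) (e : ℤ → ℤ → ℂ)
    (h0 : ∀ i j : ℕ, i + j + 1 < n → e (a + i) (b + j) = 0)
    (h1 : ∀ i j : ℕ, i + j + 1 = n → e (a + i) (b + j) = 1) :
    listDet (sg a n) (sg b n) e = (-1) ^ (n * (n - 1) / 2) := by
  induction n generalizing a with
  | zero => rw [listDet_eq (n := 0) rfl rfl]; simp
  | succ n ih =>
    have hs : sg b (n + 1) = sg b n ++ [b + n] := by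
      rw [← sg_append b (b + n) n 1 rfl]; simp [sg]
    have := listDet_move (sg a (n + 1)) [] (sg b n) [] (b + n) e
    simp only [List.nil_append, List.append_nil] at this
    have h2 : ((-1 : ℂ)) ^ n * (-1) ^ n = 1 := by rw [← mul_pow]; simp
    have h3 : listDet (sg a (n + 1)) (sg b (n + 1)) e =
        (-1) ^ n * listDet (sg a (n + 1)) ((b + n) :: sg b n) e := by
      rw [hs, this, sg_length, ← mul_assoc, h2, one_mul]
    rw [h3, sg_succ a n]
    have h4 := listDet_block (r1 := [a]) (r2 := sg (a + 1) n) (c1 := [b + (n:ℤ)]) (c2 := sg b n) rfl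
      (by simp) e (by
        intro r hr c hc
        rw [List.mem_singleton] at hr
        rw [mem_sg] at hc
        subst hr
        have := h0 0 (c - b).toNat (by omega)
        rw [show b + (((c - b).toNat : ℕ) : ℤ) = c by omega] at this
        simpa using this)
    rw [List.singleton_append, List.singleton_append] at h4
    rw [h4, ih (a + 1)]
    · have h5 : listDet [a] [b + (n:ℤ)] e = 1 := by
        rw [listDet_eq (n := 1) rfl rfl]
        have := h1 0 n (by omega)
        simpa using this
      rw [h5, one_mul, ← pow_add]
      congr 1
      rw [Nat.triangle_succ, add_comm]
    · intro i j hij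
      have := h0 (i + 1) j (by omega)
      push_cast at this
      rw [← this]; congr 1; ring
    · intro i j hij
      have := h1 (i + 1) j (by omega)
      push_cast at this
      rw [← this]; congr 1; ring

theorem listDet_unitri (n : ℕ) (a b : ℤ) (e : ℤ → ℤ → ℂ)
    (h0 : ∀ i j : ℕ, j < i → i < n → e (a + i) (b + j) = 0)
    (h1 : ∀ i : ℕ, i < n → e (a + i) (b + i) = 1) :
    listDet (sg a n) (sg b n) e = 1 := by
  rw [listDet_eq (n := n) (by simp) (by simp), Matrix.det_of_isUpperTriangular]
  · simp only [Matrix.of_apply, sg_getElem]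
    exact Finset.prod_eq_one (fun i _ => h1 i i.2)
  · intro i j hij
    simp only [Matrix.of_apply, sg_getElem]
    exact h0 i j hij i.2

/-- Lagrange weight -/
noncomputable def wt (X : List ℂ) (x : ℂ) : ℂ := Lagrange.nodalWeight X.toFinset id x

/-- nodal polynomial -/
noncomputable def Qp (X : List ℂ) (x : ℂ) : ℂ := (X.map (fun y => x - y)).prod

/-- complete symmetric functions (shifted) -/
noncomputable def Hh (X : List ℂ) (i : ℤ) : ℂ :=
  if 0 ≤ i then (X.map (fun x => x ^ i * wt X x)).sum
  else if i = -1 ∧ X = [] then 1 else 0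

/-- Vandermonde -/
noncomputable def Vd (X : List ℂ) : ℂ := listDet X (sg 0 X.length) (fun x i => x ^ i)

theorem Hh_pos {X : List ℂ} {i : ℤ} (h : 0 ≤ i) :
    Hh X i = (X.map (fun x => x ^ i * wt X x)).sum := by rw [Hh, if_pos h]

theorem Hh_coeff {X : List ℂ} (hX : X.Nodup) (i : ℕ) (h : i < X.length) :
    Hh X i = if X.length - 1 = i then 1 else 0 := by
  rw [Hh_pos (by omega), ← List.sum_toFinset _ hX]
  have hc : X.toFinset.card = X.length := List.toFinset_card_of_nodup hX
  have := Lagrange.coeff_eq_sum (s := X.toFinset) (v := id) (fun a _ b _ h => h)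
    (P := (Polynomial.X : Polynomial ℂ) ^ i) (by
      rw [Polynomial.degree_X_pow, hc]; exact_mod_cast h)
  rw [Polynomial.coeff_X_pow, hc] at this
  rw [this]
  refine Finset.sum_congr rfl fun x _ => ?_
  simp [wt, Lagrange.nodalWeight, div_eq_mul_inv]

theorem Hh_zero {X : List ℂ} (hX : X.Nodup) {i : ℤ} (h : i < X.length - 1) : Hh X i = 0 := by
  by_cases hi : 0 ≤ i
  · lift i to ℕ using hi
    rw [Hh_coeff hX i (by omega), if_neg (by omega)]
  · rw [Hh, if_neg hi, if_neg]
    rintro ⟨h1, rfl⟩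
    simp at h; omega

theorem Hh_one {X : List ℂ} (hX : X.Nodup) {i : ℤ} (h : i = X.length - 1) : Hh X i = 1 := by
  by_cases hi : 0 ≤ i
  · lift i to ℕ using hi
    rw [Hh_coeff hX i (by omega), if_pos (by omega)]
  · rw [Hh, if_neg hi, if_pos]
    have : X.length = 0 := by omega
    exact ⟨by omega, List.length_eq_zero_iff.1 this⟩

theorem Qp_ne {X : List ℂ} {x : ℂ} (h : x ∉ X) : Qp X x ≠ 0 := by
  rw [Qp]
  intro h0
  rw [List.prod_eq_zero_iff] at h0
  rw [List.mem_map] at h0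
  obtain ⟨y, hy, hxy⟩ := h0
  rw [sub_eq_zero] at hxy
  exact h (hxy ▸ hy)

theorem pf_base {X : List ℂ} (hX : X.Nodup) (hne : X ≠ []) {x : ℂ} (h : x ∉ X) :
    1 / Qp X x = (X.map (fun y => 1 / (x - y) * wt X y)).sum := by
  have h1 := Lagrange.eval_interpolate_not_at_node (s := X.toFinset) (v := id) (1 : ℂ → ℂ) (x := x)
    (by rintro i hi rfl; exact h (by simpa using hi))
  rw [Lagrange.interpolate_one (v := id) (fun a _ b _ h => h) (by simpa [Finset.nonempty_iff_ne_empty] using hne),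
    Lagrange.eval_nodal] at h1
  simp only [Polynomial.eval_one, id, Pi.one_apply, mul_one] at h1
  rw [List.prod_toFinset _ hX, List.sum_toFinset _ hX] at h1
  have := Qp_ne h
  rw [div_eq_iff this, Qp, mul_comm]
  refine h1.trans ?_
  congr 2
  apply List.map_congr_left
  intro y _
  simp [wt, mul_comm]

theorem listsum_sub {α : Type*} (L : List α) (f g : α → ℂ) :
    (L.map (fun x => f x - g x)).sum = (L.map f).sum - (L.map g).sum := by
  induction L with
  | nil => simp
  | cons a L ih => simp [ih]; ring

theorem listsum_add {α : Type*} (L : List α) (f g : α → ℂ) :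
    (L.map (fun x => f x + g x)).sum = (L.map f).sum + (L.map g).sum := by
  induction L with
  | nil => simp
  | cons a L ih => simp [ih]; ring

theorem listsum_mul {α : Type*} (L : List α) (c : ℂ) (g : α → ℂ) :
    (L.map (fun x => c * g x)).sum = c * (L.map g).sum := by
  induction L with
  | nil => simp
  | cons a L ih => simp [ih]; ring

theorem listsum_zero {α : Type*} (L : List α) (g : α → ℂ) (h : ∀ x ∈ L, g x = 0) :
    (L.map g).sum = 0 := by
  apply List.sum_eq_zero
  simpa using h

theorem listsum_congr {α : Type*} {L : List α} {f g : α → ℂ} (h : ∀ x ∈ L, f x = g x) :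
    (L.map f).sum = (L.map g).sum := by
  rw [List.map_congr_left h]

/-- partial fractions -/
theorem pf {X : List ℂ} (hX : X.Nodup) {x : ℂ} (h : x ∉ X) (i p : ℕ) (hi : i < X.length + p) :
    x ^ (i : ℤ) / Qp X x = (X.map (fun y => 1 / (x - y) * (y ^ (i : ℤ) * wt X y))).sum +
      ((sg 1 p).map (fun j => x ^ (j - 1) * Hh X (i - j))).sum := by
  induction i generalizing p with
  | zero =>
    by_cases hne : X = []
    · subst hne
      obtain ⟨q, rfl⟩ : ∃ q, p = q + 1 := ⟨p - 1, by simp at hi; omega⟩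
      rw [sg_succ, List.map_cons, List.sum_cons, listsum_zero (sg _ _)]
      · simp [Qp, Hh]
      · intro j hj
        rw [mem_sg] at hj
        rw [Hh_zero hX (by simp; omega), mul_zero]
    · have : 0 < X.length := List.length_pos_iff.2 hne
      rw [listsum_zero (sg _ _)]
      · simpa using pf_base hX hne h
      · intro j hj
        rw [mem_sg] at hj
        rw [Hh_zero hX (by simp; omega), mul_zero]
  | succ i ih =>
    have h1 : (X.map (fun y => 1 / (x - y) * (y ^ ((i + 1 : ℕ) : ℤ) * wt X y))).sum =
        x * (X.map (fun y => 1 / (x - y) * (y ^ (i : ℤ) * wt X y))).sum - Hh X i := by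
      rw [Hh_pos (by omega), ← listsum_mul, ← listsum_sub]
      refine listsum_congr fun y hy => ?_
      have : x - y ≠ 0 := by
        rw [sub_ne_zero]; rintro rfl; exact h hy
      simp only [zpow_natCast]
      field_simp
      ring
    rw [h1]
    cases p with
    | zero =>
      have h2 := ih 0 (by omega)
      simp only [sg_zero, List.map_nil, List.sum_nil, add_zero] at h2 ⊢
      rw [← h2, Hh_zero hX (by omega)]
      simp only [zpow_natCast]
      ring
    | succ p =>
      have h2 := ih p (by omega)
      rw [sg_succ, List.map_cons, List.sum_cons, sg_eq_map (1 + 1) 1, List.map_map]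
      have h3 : ((sg (1 + 1 - 1) p).map ((fun j => x ^ (j - 1) * Hh X (((i + 1 : ℕ) : ℤ) - j)) ∘
          fun x => x + 1)).sum = x * ((sg 1 p).map (fun j => x ^ (j - 1) * Hh X (i - j))).sum := by
        rw [← listsum_mul]
        refine listsum_congr fun j hj => ?_
        rw [mem_sg] at hj
        simp only [Function.comp]
        rw [← mul_assoc]
        congr 1
        · lift j to ℕ using (by omega) with j'
          obtain ⟨k, rfl⟩ : ∃ k, j' = k + 1 := ⟨j' - 1, by omega⟩
          push_cast
          rw [show (k : ℤ) + 1 + 1 - 1 = ((k + 1 : ℕ) : ℤ) by push_cast; ring,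
            show (k : ℤ) + 1 - 1 = (k : ℤ) by ring, zpow_natCast, zpow_natCast]
          ring
        · congr 1; push_cast; ring
      rw [h3]
      have h4 : ((i + 1 : ℕ) : ℤ) - 1 = i := by push_cast; ring
      rw [h4]
      have h5 : x ^ ((i + 1 : ℕ) : ℤ) / Qp X x = x * (x ^ (i : ℤ) / Qp X x) := by
        simp only [zpow_natCast]; ring
      rw [h5, h2]
      simp
      ring

theorem Vd_L {X : List ℂ} (hX : X.Nodup) :
    listDet (sg 0 X.length) X (fun j x => x ^ j * wt X x) * Vd X =
      (-1) ^ (X.length * (X.length - 1) / 2) := by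
  rw [Vd, listDet_mul (by simp) (by simp)]
  rw [← listDet_anti X.length 0 0 (fun i j => Hh X (i + j))]
  · apply listDet_congr
    intro r hr c hc
    rw [mem_sg] at hr hc
    rw [Hh_pos (by omega)]
    refine listsum_congr fun x _ => ?_
    lift r to ℕ using (by omega)
    lift c to ℕ using (by omega)
    rw [← Nat.cast_add]
    simp only [zpow_natCast]
    ring
  · intro i j hij
    exact Hh_zero hX (by omega)
  · intro i j hij
    exact Hh_one hX (by omega)

theorem Vd_ne {X : List ℂ} (hX : X.Nodup) : Vd X ≠ 0 := by
  intro h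
  have := Vd_L hX
  rw [h, mul_zero] at this
  exact pow_ne_zero _ (by norm_num) this.symm

theorem neg_one_pow_sq (k : ℕ) : ((-1 : ℂ)) ^ k * (-1) ^ k = 1 := by rw [← mul_pow]; simp

theorem detL {X : List ℂ} (hX : X.Nodup) :
    listDet (sg 0 X.length) X (fun j x => x ^ j * wt X x) =
      (-1) ^ (X.length * (X.length - 1) / 2) / Vd X := by
  rw [eq_div_iff (Vd_ne hX), Vd_L hX]

theorem prod_wt {X : List ℂ} (hX : X.Nodup) :
    (X.map (wt X)).prod = (-1) ^ (X.length * (X.length - 1) / 2) / Vd X ^ 2 := by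
  have h := Vd_L hX
  have h2 := listDet_scale (sg 0 X.length) X (fun _ => 1) (wt X) (fun j x => x ^ j)
  have h3 : listDet (sg 0 X.length) X (fun j x => x ^ j) = Vd X := by
    rw [listDet_transpose]; rfl
  rw [h3] at h2
  have h4 : listDet (sg 0 X.length) X (fun j x => x ^ j * wt X x) =
     listDet (sg 0 X.length) X (fun r c => 1 * wt X c * c ^ r) := by
    congr 1; ext j x; ring
  rw [h4, h2] at h
  simp only [List.map_const', List.prod_replicate, one_pow, one_mul] at h
  rw [eq_div_iff (pow_ne_zero 2 (Vd_ne hX)), ← h]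
  ring

theorem pairProd_nil {ι : Type*} (g : ι → ι → ℂ) : pairProd [] g = 1 := by simp [pairProd]

theorem pairProd_cons {ι : Type*} (x : ι) (L : List ι) (g : ι → ι → ℂ) :
    pairProd (x :: L) g = (L.map (g x)).prod * pairProd L g := by
  simp only [pairProd, List.length_cons]
  rw [Fin.prod_univ_succ]
  congr 1
  · rw [Fin.prod_univ_succ, list_prod_eq_fin L rfl]
    simp
  · refine Finset.prod_congr rfl fun i _ => ?_
    rw [Fin.prod_univ_succ]
    simp

theorem pairProd_neg (X : List ℂ) :
    pairProd X (fun x y => x - y) = (-1) ^ (X.length * (X.length - 1) / 2) *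
      pairProd X (fun x y => y - x) := by
  induction X with
  | nil => simp [pairProd_nil]
  | cons x L ih =>
    rw [pairProd_cons, pairProd_cons, ih, List.length_cons, Nat.triangle_succ, pow_add]
    have : (L.map (fun y => x - y)).prod = (-1) ^ L.length * (L.map (fun y => y - x)).prod := by
      clear ih
      induction L with
      | nil => simp
      | cons a L ih => simp [ih, pow_succ]; ring
    rw [this]
    ring

theorem Vd_eq (X : List ℂ) : Vd X = pairProd X (fun x y => y - x) := by
  rw [Vd, listDet_eq (n := X.length) rfl (by simp)]
  have := Matrix.det_vandermonde (fun i : Fin X.length => X[(i : ℕ)])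
  rw [pairProd]
  have h2 : (Matrix.of fun i j : Fin X.length => X[(i : ℕ)] ^ ((sg 0 X.length)[(j : ℕ)]'(by simp))) =
     Matrix.vandermonde (fun i : Fin X.length => X[(i : ℕ)]) := by
    ext i j
    simp [sg_getElem, Matrix.vandermonde]
  rw [h2, this]
  refine Finset.prod_congr rfl fun i _ => ?_
  rw [← Finset.prod_filter]
  apply Finset.prod_congr _ (fun _ _ => rfl)
  ext j; simp

theorem Dden_eq (B F : List ℂ) :
    Dden id B F = (-1) ^ (B.length * (B.length - 1) / 2) * Vd B * Vd F / (B.map (Qp F)).prod := by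
  rw [Dden, Vd_eq, Vd_eq]
  simp only [id]
  rw [pairProd_neg]
  rfl

section Plu
variable {α β : Type*}

theorem listDet_top {rows : List α} {cols : List β} (hl : cols.length = rows.length + 1)
    (e : α → β → ℂ) (cf : Fin rows.length → ℂ) :
    ∑ j : Fin (rows.length + 1), (-1) ^ (j : ℕ) *
      (∑ i : Fin rows.length, cf i * e rows[(i : ℕ)] (cols[(j : ℕ)]'(by omega))) *
      listDet rows (cols.eraseIdx j) e = 0 := by
  let M : Matrix (Fin rows.length) (Fin (rows.length + 1)) ℂ :=
    Matrix.of fun i j => e rows[(i : ℕ)] (cols[(j : ℕ)]'(by omega))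
  let N : Matrix (Fin (rows.length + 1)) (Fin (rows.length + 1)) ℂ :=
    Matrix.of (Fin.cons (fun j => ∑ i, cf i * M i j) M)
  have hN : N.det = 0 := by
    rw [← Matrix.exists_vecMul_eq_zero_iff]
    refine ⟨Fin.cons (-1) cf, ?_, ?_⟩
    · intro h
      have := congrFun h 0
      simp at this
    · ext j
      simp only [Matrix.vecMul, dotProduct, Fin.sum_univ_succ, N, Matrix.of_apply, Fin.cons_zero,
        Fin.cons_succ, Pi.zero_apply]
      change -1 * (∑ i, cf i * M i j) + ∑ i, cf i * M i j = 0
      ring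
  rw [Matrix.det_succ_row_zero] at hN
  rw [← hN]
  refine Finset.sum_congr rfl fun j _ => ?_
  congr 1
  · rw [listDet_eq (n := rows.length) rfl (by rw [List.length_eraseIdx]; split_ifs <;> omega)]
    congr 1
    ext i k
    simp only [Matrix.of_apply, Matrix.submatrix_apply, N, M]
    congr 1
    rw [List.getElem_eraseIdx]
    simp only [Fin.succAbove, Fin.lt_def]
    split_ifs with h1 h2 <;> simp_all

theorem listDet_col (rows : List α) (cols : List β) (e : α → β → ℂ)
    (hl : rows.length = cols.length + 1) : ∃ cf : Fin rows.length → ℂ, ∀ v,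
    listDet rows (v :: cols) e = ∑ i : Fin rows.length, cf i * e rows[(i : ℕ)] v := by
  obtain ⟨n, hn⟩ : ∃ n, rows.length = n + 1 := ⟨_, hl⟩
  have hc : cols.length = n := by omega
  let M : Matrix (Fin (n + 1)) (Fin n) ℂ :=
    Matrix.of fun i j => e (rows[(i : ℕ)]'(by omega)) (cols[(j : ℕ)]'(by omega))
  refine ⟨fun i => (-1) ^ (i : ℕ) * (M.submatrix (Fin.succAbove (Fin.cast hn i)) id).det, fun v => ?_⟩
  rw [listDet_eq hn (by simp [hc]), Matrix.det_succ_column_zero]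
  rw [← Equiv.sum_comp (finCongr hn)]
  refine Finset.sum_congr rfl fun i _ => ?_
  simp only [finCongr_apply, Fin.val_cast, Matrix.of_apply, Fin.val_zero, List.getElem_cons_zero]
  rw [mul_right_comm]
  congr 2

theorem listDet_dup (rows : List α) (cols : List β) (e : α → β → ℂ) (v : β) (h : v ∈ cols) :
    listDet rows (v :: cols) e = 0 := by
  by_cases hl : rows.length = (v :: cols).length
  · obtain ⟨k, hk, hv⟩ := List.getElem_of_mem h
    rw [listDet_eq rfl hl.symm]
    simp at hl
    apply Matrix.det_zero_of_column_eq (i := ⟨0, by omega⟩) (j := ⟨k + 1, by omega⟩)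
    · simp
    · intro i; simp [hv]
  · exact listDet_ne hl _

theorem pluecker (rows : List α) (X : List β) (x1 x2 x3 y : β) (e : α → β → ℂ) :
    listDet rows (x1 :: (X ++ [y])) e * listDet rows (x2 :: x3 :: X) e
    - listDet rows (x2 :: (X ++ [y])) e * listDet rows (x1 :: x3 :: X) e
    + listDet rows (x3 :: (X ++ [y])) e * listDet rows (x1 :: x2 :: X) e = 0 := by
  by_cases hl : rows.length = X.length + 2
  · obtain ⟨cf, hcf⟩ := listDet_col rows (X ++ [y]) e (by simp [hl])
    have h := listDet_top (rows := rows) (cols := x1 :: x2 :: x3 :: X) (by simp [hl]) e cf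
    simp only [← hcf] at h
    have hs : ∀ g : Fin (rows.length + 1) → ℂ, (∑ j, g j) = ∑ j : Fin (X.length + 3),
        g (Fin.cast (by omega) j) := fun g => by
      rw [← Equiv.sum_comp (finCongr (by omega : X.length + 3 = rows.length + 1))]
      rfl
    rw [hs, Fin.sum_univ_succ, Fin.sum_univ_succ, Fin.sum_univ_succ, Finset.sum_eq_zero] at h
    · have h2 : 2 % (X.length + 3) = 2 := Nat.mod_eq_of_lt (by omega)
      simp [h2] at h
      rw [← h]; ring
    · intro j _
      have : listDet rows (X[(j : ℕ)] :: (X ++ [y])) e = 0 := listDet_dup _ _ _ _ (by simp)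
      simp [this]
  · simp [listDet_ne (rows := rows) (cols := x2 :: x3 :: X) (by simpa using hl),
      listDet_ne (rows := rows) (cols := x1 :: x3 :: X) (by simpa using hl),
      listDet_ne (rows := rows) (cols := x1 :: x2 :: X) (by simpa using hl)]

end Plu

/-- Hankel determinant -/
noncomputable def Hk (t : ℤ → ℂ) (a : ℕ) (c : ℤ) : ℂ :=
  listDet (sg 0 a) (sg c a) (fun i k => t (i + k))

theorem Hk_zero (t : ℤ → ℂ) (c : ℤ) : Hk t 0 c = 1 := by
  rw [Hk, listDet_eq (n := 0) rfl rfl]; simp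

theorem sg_nodup (a : ℤ) (n : ℕ) : (sg a n).Nodup := by
  rw [sg]
  apply List.Nodup.map _ List.nodup_range
  intro x y h
  simpa using h

theorem sum_ite (L : List ℤ) (h : L.Nodup) (i : ℤ) (hi : i ∈ L) (g : ℤ → ℂ) :
    (L.map (fun k => (if k = i then 1 else 0) * g k)).sum = g i := by
  rw [← List.sum_toFinset _ h]
  simp [hi]

theorem Hk_shift (t : ℤ → ℂ) (a : ℕ) (r c : ℤ) :
    listDet (sg r a) (sg c a) (fun i k => t (i + k)) = Hk t a (c + r) := by
  rw [Hk, sg_eq_map r r, sg_eq_map c (-r), listDet_map]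
  simp only [sub_self, sub_neg_eq_add]
  apply listDet_congr
  intros; congr 1; ring

/-- entries for the Hankel Plücker relation -/
noncomputable def hE (t : ℤ → ℂ) (z : ℂ) (last : ℤ) (r : ℤ) : ℤ ⊕ ℕ → ℂ
  | Sum.inl k => t (r + k)
  | Sum.inr 0 => if r = 0 then 1 else 0
  | Sum.inr 1 => z ^ r
  | Sum.inr _ => if r = last then 1 else 0

theorem hE_inl (t : ℤ → ℂ) (z : ℂ) (last r : ℤ) (n a : ℕ) (c : ℤ) :
    listDet (sg r n) ((sg c a).map Sum.inl) (hE t z last) =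
    listDet (sg r n) (sg c a) (fun i k => t (i + k)) := by
  have := listDet_map (sg r n) (sg c a) id Sum.inl (hE t z last)
  rw [List.map_id] at this
  rw [this]
  rfl

theorem hE_e0 (t : ℤ → ℂ) (z : ℂ) (last : ℤ) (N : ℕ) (C : List (ℤ ⊕ ℕ)) (hC : C.length = N) :
    listDet (sg 0 (N + 1)) (Sum.inr 0 :: C) (hE t z last) = listDet (sg 1 N) C (hE t z last) := by
  rw [sg_succ]
  have := listDet_block' (r1 := [0]) (r2 := sg (0 + 1) N) (c1 := [Sum.inr 0]) (c2 := C) rfl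
    (by simp [hC]) (hE t z last) (by
      intro r hr c hc
      rw [mem_sg] at hr
      rw [List.mem_singleton] at hc
      subst hc
      simp only [hE]
      rw [if_neg (by omega)])
  rw [List.singleton_append, List.singleton_append] at this
  rw [this, listDet_eq (n := 1) rfl rfl]
  simp [hE]

theorem hE_el (t : ℤ → ℂ) (z : ℂ) (r : ℤ) (N : ℕ) (C : List (ℤ ⊕ ℕ)) (hC : C.length = N) :
    listDet (sg r (N + 1)) (C ++ [Sum.inr 2]) (hE t z (r + N)) =
      listDet (sg r N) C (hE t z (r + N)) := by
  rw [← sg_append r (r + N) N 1 rfl, listDet_block (by simp [hC]) (by simp)]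
  · have : listDet (sg (r + N) 1) [Sum.inr 2] (hE t z (r + N)) = 1 := by
      rw [sg_succ, sg_zero, listDet_eq (n := 1) rfl rfl]
      simp [hE]
    rw [this, mul_one]
  · intro r' hr c hc
    rw [mem_sg] at hr
    rw [List.mem_singleton] at hc
    subst hc
    simp only [hE]
    rw [if_neg (by omega)]

theorem hE_delta (t : ℤ → ℂ) (z : ℂ) (hz : z ≠ 0) (last r : ℤ) (N : ℕ) (c : ℤ) :
    listDet (sg r (N + 1)) (Sum.inr 1 :: (sg c N).map Sum.inl) (hE t z last) =
      z ^ r * Hk (fun i => t (i + 1) - z * t i) N (c + r) := by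
  have hU : listDet (sg r (N + 1)) (sg r (N + 1)) (fun i k =>
      (if k = i then (1 : ℂ) else 0) - z * (if i = r then 0 else if k = i - 1 then 1 else 0)) = 1 := by
    rw [listDet_transpose]
    apply listDet_unitri
    · intro i j h1 h2
      rw [if_neg (by omega), if_neg (by omega : ¬ (r + (i : ℤ) = r + j - 1))]
      simp
    · intro i h
      rw [if_pos rfl, if_neg (by omega : ¬ (r + (i : ℤ) = r + i - 1))]
      simp
  have h1 := listDet_mul (rows := sg r (N + 1)) (ks := sg r (N + 1))
    (cols := Sum.inr 1 :: (sg c N).map Sum.inl) rfl (by simp) (fun i k =>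
      (if k = i then (1 : ℂ) else 0) - z * (if i = r then 0 else if k = i - 1 then 1 else 0))
      (hE t z last)
  rw [hU, one_mul] at h1
  have h2 : ∀ i ∈ sg r (N + 1), ∀ c' : ℤ ⊕ ℕ, ((sg r (N + 1)).map (fun k =>
     ((if k = i then (1 : ℂ) else 0) - z * (if i = r then 0 else if k = i - 1 then 1 else 0)) *
      hE t z last k c')).sum = hE t z last i c' - if i = r then 0 else z * hE t z last (i - 1) c' := by
    intro i hi c'
    simp only [sub_mul]
    rw [listsum_sub, sum_ite _ (sg_nodup _ _) i hi]
    congr 1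
    split_ifs with h
    · exact listsum_zero _ _ (by simp)
    · simp only [mul_assoc]
      rw [listsum_mul, sum_ite _ (sg_nodup _ _) (i - 1)]
      rw [mem_sg] at hi ⊢
      omega
  rw [h1, listDet_congr (fun i hi c' _ => h2 i hi c')]
  rw [sg_succ]
  have h3 := listDet_block' (r1 := [r]) (r2 := sg (r + 1) N) (c1 := [Sum.inr 1])
    (c2 := (sg c N).map Sum.inl) rfl
    (by simp) (fun i c' => hE t z last i c' - if i = r then 0 else z * hE t z last (i - 1) c') (by
      intro i hi c hc
      rw [mem_sg] at hi
      rw [List.mem_singleton] at hc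
      subst hc
      rw [if_neg (by omega)]
      simp only [hE]
      rw [zpow_sub_one₀ hz]
      field_simp
      ring)
  rw [List.singleton_append, List.singleton_append] at h3
  rw [h3]
  congr 1
  · rw [listDet_eq (n := 1) rfl rfl]
    simp [hE]
  · rw [← Hk_shift, sg_eq_map (r + 1) 1, listDet_map]
    rw [show r + 1 - 1 = r by ring]
    apply listDet_congr
    intro i hi k hk
    rw [mem_sg] at hi
    rw [if_neg (by omega)]
    simp only [hE]
    rw [show i + 1 + k = i + k + 1 by ring, show i + 1 - 1 + k = i + k by ring]

theorem listDet_swap01 {α β : Type*} (rows : List α) (x y : β) (C : List β) (e : α → β → ℂ) :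
    listDet rows (x :: y :: C) e = - listDet rows (y :: x :: C) e :=
  listDet_adj rows [] C x y e

theorem hankel1 (t : ℤ → ℂ) (z : ℂ) (hz : z ≠ 0) (a : ℕ) (c : ℤ) :
    Hk t (a + 1) (c - 1) * Hk (fun i => t (i + 1) - z * t i) a (c - 1)
    - Hk t a c * Hk (fun i => t (i + 1) - z * t i) (a + 1) (c - 2)
    = z * Hk t (a + 1) (c - 2) * Hk (fun i => t (i + 1) - z * t i) a c := by
  have h := pluecker (sg 0 (a + 2)) ((sg (c - 1) a).map Sum.inl) (Sum.inr 0)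
    (Sum.inl (c - 2)) (Sum.inr 1) (Sum.inr 2) (hE t z (0 + ((a + 1 : ℕ) : ℤ)))
  have hs : (sg (c - 2) (a + 1)).map (Sum.inl : ℤ → ℤ ⊕ ℕ) =
      Sum.inl (c - 2) :: (sg (c - 1) a).map Sum.inl := by
    rw [sg_succ, List.map_cons]; congr 3; ring
  have e1 : listDet (sg 0 (a + 2)) (Sum.inr 0 :: ((sg (c - 1) a).map Sum.inl ++ [Sum.inr 2]))
      (hE t z (0 + ((a + 1 : ℕ) : ℤ))) = Hk t a c := by
    rw [hE_e0 _ _ _ _ _ (by simp)]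
    have := hE_el t z 1 a ((sg (c - 1) a).map Sum.inl) (by simp)
    rw [show (0 : ℤ) + ((a + 1 : ℕ) : ℤ) = 1 + a by push_cast; ring, this, hE_inl, Hk_shift]
    congr 1; ring
  have e2 : listDet (sg 0 (a + 2)) (Sum.inl (c - 2) :: Sum.inr 1 :: (sg (c - 1) a).map Sum.inl)
      (hE t z (0 + ((a + 1 : ℕ) : ℤ))) = - Hk (fun i => t (i + 1) - z * t i) (a + 1) (c - 2) := by
    rw [listDet_swap01, ← hs, hE_delta _ _ hz]
    simp
  have e3 : listDet (sg 0 (a + 2)) (Sum.inl (c - 2) :: ((sg (c - 1) a).map Sum.inl ++ [Sum.inr 2]))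
      (hE t z (0 + ((a + 1 : ℕ) : ℤ))) = Hk t (a + 1) (c - 2) := by
    rw [← List.cons_append, ← hs, hE_el _ _ _ _ _ (by simp), hE_inl, Hk_shift, add_zero]
  have e4 : listDet (sg 0 (a + 2)) (Sum.inr 0 :: Sum.inr 1 :: (sg (c - 1) a).map Sum.inl)
      (hE t z (0 + ((a + 1 : ℕ) : ℤ))) = z * Hk (fun i => t (i + 1) - z * t i) a c := by
    rw [hE_e0 _ _ _ _ _ (by simp), hE_delta _ _ hz]
    simp
  have e5 : listDet (sg 0 (a + 2)) (Sum.inr 1 :: ((sg (c - 1) a).map Sum.inl ++ [Sum.inr 2]))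
      (hE t z (0 + ((a + 1 : ℕ) : ℤ))) = Hk (fun i => t (i + 1) - z * t i) a (c - 1) := by
    rw [← List.cons_append, hE_el _ _ _ _ _ (by simp), hE_delta _ _ hz]
    simp
  have e6 : listDet (sg 0 (a + 2)) (Sum.inr 0 :: Sum.inl (c - 2) :: (sg (c - 1) a).map Sum.inl)
      (hE t z (0 + ((a + 1 : ℕ) : ℤ))) = Hk t (a + 1) (c - 1) := by
    rw [hE_e0 _ _ _ _ _ (by simp), ← hs, hE_inl, Hk_shift]
    congr 1; ring
  rw [e1, e2, e3, e4, e5, e6] at h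
  linear_combination h

theorem hankel2 (t : ℤ → ℂ) (z : ℂ) (hz : z ≠ 0) (q : ℕ) (c : ℤ) :
    Hk t (q + 1) (c + 1) * Hk (fun i => t (i + 1) - z * t i) (q + 1) (c - 1)
    - Hk t (q + 1) c * Hk (fun i => t (i + 1) - z * t i) (q + 1) c
    = - z * Hk t (q + 2) (c - 1) * Hk (fun i => t (i + 1) - z * t i) q (c + 1) := by
  have h := pluecker (sg 0 (q + 2)) ((sg c q).map Sum.inl) (Sum.inl (c - 1)) (Sum.inr 0)
    (Sum.inr 1) (Sum.inl (c + q)) (hE t z 0)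
  have hs1 : Sum.inl (c - 1) :: (sg c q).map Sum.inl =
      (sg (c - 1) (q + 1)).map (Sum.inl : ℤ → ℤ ⊕ ℕ) := by
    rw [sg_succ, List.map_cons]; congr 3; ring
  have hs2 : (sg c q).map Sum.inl ++ [Sum.inl (c + q)] =
      (sg c (q + 1)).map (Sum.inl : ℤ → ℤ ⊕ ℕ) := by
    rw [← sg_append c (c + q) q 1 rfl, List.map_append]; simp [sg_succ]
  have hs3 : Sum.inl (c - 1) :: (sg c (q + 1)).map Sum.inl =
      (sg (c - 1) (q + 2)).map (Sum.inl : ℤ → ℤ ⊕ ℕ) := by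
    rw [sg_succ _ (q + 1), List.map_cons]; congr 3; ring
  have e6 : listDet (sg 0 (q + 2)) (Sum.inl (c - 1) :: Sum.inr 0 :: (sg c q).map Sum.inl)
      (hE t z 0) = - Hk t (q + 1) c := by
    rw [listDet_swap01, hs1, hE_e0 _ _ _ _ _ (by simp), hE_inl, Hk_shift]
    congr 2; ring
  have e4 : listDet (sg 0 (q + 2)) (Sum.inl (c - 1) :: Sum.inr 1 :: (sg c q).map Sum.inl)
      (hE t z 0) = - Hk (fun i => t (i + 1) - z * t i) (q + 1) (c - 1) := by
    rw [listDet_swap01, hs1, hE_delta _ _ hz]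
    simp
  have e2 : listDet (sg 0 (q + 2)) (Sum.inr 0 :: Sum.inr 1 :: (sg c q).map Sum.inl)
      (hE t z 0) = z * Hk (fun i => t (i + 1) - z * t i) q (c + 1) := by
    rw [hE_e0 _ _ _ _ _ (by simp), hE_delta _ _ hz]
    simp
  rw [hs2, hs3, e2, e4, e6, hE_e0 _ _ _ _ _ (by simp), hE_inl, hE_inl, Hk_shift, Hk_shift,
    hE_delta _ _ hz, zpow_zero, one_mul, add_zero, add_zero] at h
  linear_combination h

section
variable {α β γ : Type*}

theorem listDet_id (T : List β) (h : T.Nodup) [DecidableEq β] :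
    listDet T T (fun x y => if x = y then 1 else 0) = 1 := by
  rw [listDet_eq (n := T.length) rfl rfl]
  have : (Matrix.of fun i j : Fin T.length => if T[(i : ℕ)] = T[(j : ℕ)] then (1 : ℂ) else 0) = 1 := by
    ext i j
    simp only [Matrix.of_apply, Matrix.one_apply]
    congr 1
    rw [List.Nodup.getElem_inj_iff h, Fin.ext_iff]
  rw [this, Matrix.det_one]

/-- right multiplication acting on the first block of columns -/
theorem listDet_mul_right (rows : List α) (C1 T : List β) (C1' : List γ)
    (h : C1.length = C1'.length) (hr : rows.length = C1.length + T.length) (hT : T.Nodup)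
    (e : α → β → ℂ) (g : β → γ → ℂ) :
    listDet rows (C1 ++ T) e * listDet C1 C1' g =
      listDet rows (C1'.map Sum.inl ++ T.map Sum.inr) (fun r c =>
        Sum.elim (fun k => (C1.map (fun x => e r x * g x k)).sum) (fun t => e r t) c) := by
  classical
  have h1 : listDet rows (C1 ++ T) e = listDet rows (C1.map Sum.inl ++ T.map Sum.inr)
      (fun r c => Sum.elim (e r) (e r) c) := by
    have := listDet_map rows (C1.map Sum.inl ++ T.map Sum.inr) id (Sum.elim id id) e
    rw [List.map_append, List.map_map, List.map_map] at this
    simp only [Sum.elim_comp_inl, Sum.elim_comp_inr, List.map_id, id] at this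
    rw [this]
    congr 1
    ext r c
    rcases c with c | c <;> rfl
  let G : β ⊕ β → γ ⊕ β → ℂ := fun k c => match k, c with
    | Sum.inl x, Sum.inl y => g x y
    | Sum.inr x, Sum.inr y => if x = y then 1 else 0
    | _, _ => 0
  have h2 : listDet C1 C1' g = listDet (C1.map Sum.inl ++ T.map Sum.inr)
      (C1'.map Sum.inl ++ T.map Sum.inr) G := by
    rw [listDet_block (by simp [h]) (by simp), listDet_map, listDet_map]
    · simp only [G]
      rw [listDet_id T hT, mul_one]
    · intro r hr c hc
      simp only [List.mem_map] at hr hc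
      obtain ⟨x, _, rfl⟩ := hr
      obtain ⟨y, _, rfl⟩ := hc
      rfl
  rw [h1, h2, listDet_mul (by simp [hr]) (by simp [h])]
  apply listDet_congr
  intro r _ c hc
  rw [List.map_append, List.sum_append, List.map_map, List.map_map]
  simp only [List.mem_append, List.mem_map] at hc
  rcases hc with ⟨y, hy, rfl⟩ | ⟨y, hy, rfl⟩
  · simp only [Sum.elim_inl]
    rw [listsum_zero T]
    · rw [add_zero]; rfl
    · intro x _; simp [G]
  · simp only [Sum.elim_inr]
    rw [listsum_zero C1, zero_add]
    · rw [← List.sum_toFinset _ hT, Finset.sum_eq_single y]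
      · simp [G]
      · intro x _ hxy
        simp [G, hxy]
      · intro hy'
        exact absurd (List.mem_toFinset.2 hy) hy'
    · intro x _; simp [G]

/-- left multiplication acting on the first block of rows -/
theorem listDet_mul_left (cols : List α) (C1 T : List β) (C1' : List γ)
    (h : C1.length = C1'.length) (hr : cols.length = C1.length + T.length) (hT : T.Nodup)
    (e : β → α → ℂ) (g : γ → β → ℂ) :
    listDet C1' C1 g * listDet (C1 ++ T) cols e =
      listDet (C1'.map Sum.inl ++ T.map Sum.inr) cols (fun r c =>
        Sum.elim (fun k => (C1.map (fun x => g k x * e x c)).sum) (fun t => e t c) r) := by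
  rw [listDet_transpose C1', listDet_transpose (C1 ++ T), mul_comm,
    listDet_mul_right _ _ _ _ h hr hT, listDet_transpose]
  congr 1
  ext r c
  rcases r with r | r
  · simp only [Sum.elim_inl]
    exact listsum_congr fun x _ => mul_comm _ _
  · rfl

end

/-- matrix entries of the wing determinant -/
noncomputable def wE (w : ℂ → ℂ) : ℂ ⊕ ℤ → ℂ ⊕ (ℤ ⊕ ℤ) → ℂ
  | Sum.inl b, Sum.inl f => 1 / (b - f)
  | Sum.inl b, Sum.inr (Sum.inl j) => b ^ (j - 1)
  | Sum.inl b, Sum.inr (Sum.inr j) => w b * b ^ (j - 1)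
  | Sum.inr r, Sum.inl f => f ^ (r - 1)
  | Sum.inr _, Sum.inr _ => 0

/-- change of basis -/
noncomputable def gE (F : List ℂ) : ℂ ⊕ ℤ → ℤ → ℂ
  | Sum.inl f, i => f ^ i * wt F f
  | Sum.inr j, i => Hh F (i - j)

theorem gE_det {F : List ℂ} (hF : F.Nodup) (p : ℕ) :
    listDet (F.map Sum.inl ++ (sg 1 p).map Sum.inr) (sg 0 (F.length + p)) (gE F) =
      (-1) ^ (F.length * (F.length - 1) / 2) / Vd F := by
  rw [← sg_append 0 F.length F.length p (by simp), listDet_block' (by simp) (by simp)]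
  · have h1 := listDet_map F (sg 0 F.length) Sum.inl id (gE F)
    have h2 := listDet_map (sg 1 p) (sg F.length p) Sum.inr id (gE F)
    rw [List.map_id] at h1 h2
    rw [h1, h2]
    simp only [gE, id]
    rw [listDet_transpose F, detL hF, listDet_unitri, mul_one]
    · intro i j h1 h2
      exact Hh_zero hF (by omega)
    · intro i h1
      exact Hh_one hF (by omega)
  · intro r hr c hc
    rw [List.mem_map] at hr
    obtain ⟨j, hj, rfl⟩ := hr
    rw [mem_sg] at hj hc
    exact Hh_zero hF (by omega)

theorem wing {B F : List ℂ} (hB : B.Nodup) (hF : F.Nodup) (hBF : ∀ b ∈ B, b ∉ F)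
    (hB0 : ∀ b ∈ B, b ≠ 0) (w : ℂ → ℂ) (D p k a : ℕ) (c : ℤ)
    (hn : F.length + p = D + k) (hpk : p = 0 ∨ k = 0) (hm : B.length = D + a) :
    listDet (B.map Sum.inl ++ (sg 1 k).map Sum.inr)
      (F.map Sum.inl ++ ((sg 1 p).map (fun j => Sum.inr (Sum.inl j)) ++
        (sg (c + 1) a).map (fun j => Sum.inr (Sum.inr j)))) (wE w) / Dden id B F =
    (-1) ^ (k * a + k * (k - 1) / 2 + D * a + D * (D - 1) / 2 + F.length * (F.length - 1) / 2) *
      Hk (fun i => (B.map (fun b => w b * (b ^ i * wt B b * Qp F b))).sum) a c := by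
  set W := listDet (B.map Sum.inl ++ (sg 1 k).map Sum.inr)
      (F.map Sum.inl ++ ((sg 1 p).map (fun j => Sum.inr (Sum.inl j)) ++
        (sg (c + 1) a).map (fun j => Sum.inr (Sum.inr j)))) (wE w) with hW
  set h : ℤ → ℂ := fun i => (B.map (fun b => w b * (b ^ i * wt B b * Qp F b))).sum with hh
  have hQ : (B.map (Qp F)).prod ≠ 0 := by
    intro h0
    rw [List.prod_eq_zero_iff, List.mem_map] at h0
    obtain ⟨b, hb, h1⟩ := h0
    exact Qp_ne (hBF b hb) h1
  -- step 1
  let e2 : ℂ ⊕ ℤ → ℤ ⊕ ℤ → ℂ := fun r c => match r, c with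
    | Sum.inl b, Sum.inl i => b ^ i / Qp F b
    | Sum.inl b, Sum.inr j => w b * b ^ (j - 1)
    | Sum.inr r, Sum.inl i => Hh F (i + r - 1)
    | Sum.inr _, Sum.inr _ => 0
  have s1 : W * ((-1) ^ (F.length * (F.length - 1) / 2) / Vd F) =
      listDet (B.map Sum.inl ++ (sg 1 k).map Sum.inr)
        ((sg 0 (F.length + p)).map Sum.inl ++ (sg (c + 1) a).map Sum.inr) e2 := by
    let ψ : ℂ ⊕ (ℤ ⊕ ℤ) → ℂ ⊕ ℤ := fun x => match x with
      | Sum.inl f => Sum.inl f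
      | Sum.inr (Sum.inl j) => Sum.inr j
      | Sum.inr (Sum.inr j) => Sum.inr j
    have hg : listDet (F.map Sum.inl ++ (sg 1 p).map (fun j => (Sum.inr (Sum.inl j) : ℂ ⊕ (ℤ ⊕ ℤ))))
        (sg 0 (F.length + p)) (fun x i => gE F (ψ x) i) =
        (-1) ^ (F.length * (F.length - 1) / 2) / Vd F := by
      rw [← gE_det hF p]
      have := listDet_map (F.map Sum.inl ++ (sg 1 p).map (fun j => (Sum.inr (Sum.inl j) : ℂ ⊕ (ℤ ⊕ ℤ))))
        (sg 0 (F.length + p)) ψ id (gE F)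
      rw [List.map_id, List.map_append, List.map_map, List.map_map] at this
      exact this.symm
    rw [← hg, hW, ← List.append_assoc, listDet_mul_right _ _ _ _ (by simp) (by simp; omega)
      ((sg_nodup _ _).map (by intro x y h; simpa using h))]
    have hmap := listDet_map (B.map Sum.inl ++ (sg 1 k).map Sum.inr)
      ((sg 0 (F.length + p)).map Sum.inl ++ (sg (c + 1) a).map Sum.inr)
      id (Sum.map (id : ℤ → ℤ) (fun j : ℤ => (Sum.inr (Sum.inr j) : ℂ ⊕ (ℤ ⊕ ℤ))))
       (fun r c => Sum.elim (fun k => ((F.map Sum.inl ++ (sg 1 p).map (fun j => (Sum.inr (Sum.inl j) : ℂ ⊕ (ℤ ⊕ ℤ)))).map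
        (fun x => wE w r x * gE F (ψ x) k)).sum) (fun t => wE w r t) c)
    rw [List.map_id, List.map_append, List.map_map, List.map_map] at hmap
    have hmm : (sg (c + 1) a).map ((Sum.map (id : ℤ → ℤ) (fun j : ℤ => (Sum.inr (Sum.inr j) : ℂ ⊕ (ℤ ⊕ ℤ)))) ∘ Sum.inr) =
      ((sg (c + 1) a).map (fun j : ℤ => (Sum.inr (Sum.inr j) : ℂ ⊕ (ℤ ⊕ ℤ)))).map Sum.inr := by
      rw [List.map_map]; rfl
    have hmm' : (sg 0 (F.length + p)).map ((Sum.map (id : ℤ → ℤ) (fun j : ℤ => (Sum.inr (Sum.inr j) : ℂ ⊕ (ℤ ⊕ ℤ)))) ∘ Sum.inl) =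
      (sg 0 (F.length + p)).map Sum.inl := rfl
    rw [hmm, hmm'] at hmap
    rw [hmap]
    apply listDet_congr
    intro r hr c' hc'
    simp only [List.mem_append, List.mem_map] at hr hc'
    rcases hc' with ⟨i, hi, rfl⟩ | ⟨j, hj, rfl⟩
    · simp only [Sum.map_inl, Sum.elim_inl, List.map_append, List.map_map, List.sum_append, id]
      rw [mem_sg] at hi
      rcases hr with ⟨b, hb, rfl⟩ | ⟨r, hr, rfl⟩
      · lift i to ℕ using hi.1
        exact (pf hF (hBF b hb) i p (by omega)).symm
      · rw [mem_sg] at hr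
        rw [listsum_zero (sg 1 p), add_zero]
        · simp only [e2]
          rw [Hh_pos (by omega)]
          refine listsum_congr fun f _ => ?_
          simp only [Function.comp, ψ, wE, gE]
          rw [← mul_assoc]
          congr 1
          lift i to ℕ using hi.1
          obtain ⟨q, rfl⟩ : ∃ q : ℕ, r = q + 1 := ⟨(r - 1).toNat, by omega⟩
          rw [show (q : ℤ) + 1 - 1 = q by ring, show (i : ℤ) + (q + 1) - 1 = ((i + q : ℕ) : ℤ) by
            push_cast; ring]
          simp only [zpow_natCast]
          ring
        · intro j _
          simp [wE]
    · rcases hr with ⟨b, hb, rfl⟩ | ⟨r, hr, rfl⟩ <;> rfl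
  -- step 2
  have s2 : listDet (B.map Sum.inl ++ (sg 1 k).map Sum.inr)
        ((sg 0 (F.length + p)).map Sum.inl ++ (sg (c + 1) a).map Sum.inr) e2 =
      (-1) ^ (k * a) * (listDet (B.map Sum.inl) ((sg 0 D).map Sum.inl ++ (sg (c + 1) a).map Sum.inr) e2 *
        (-1) ^ (k * (k - 1) / 2)) := by
    rw [hn, ← sg_append 0 D D k (by simp), List.map_append]
    have := listDet_swap (B.map Sum.inl ++ (sg 1 k).map Sum.inr) ((sg 0 D).map Sum.inl)
      ((sg D k).map Sum.inl) ((sg (c + 1) a).map Sum.inr) [] e2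
    rw [List.append_nil, List.append_nil, ← List.append_assoc, ← List.append_assoc] at this
    rw [this, listDet_block' (by simp [hm]) (by simp)]
    · simp only [List.length_map, sg_length]
      congr 2
      rw [listDet_map, ← listDet_anti k 1 D (fun r i => Hh F (i + r - 1))]
      · intro i j hij
        exact Hh_zero hF (by omega)
      · intro i j hij
        exact Hh_one hF (by omega)
    · intro r hr c' hc'
      simp only [List.mem_append, List.mem_map] at hr hc'
      obtain ⟨r, hr, rfl⟩ := hr
      rw [mem_sg] at hr
      rcases hc' with ⟨i, hi, rfl⟩ | ⟨j, hj, rfl⟩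
      · rw [mem_sg] at hi
        exact Hh_zero hF (by omega)
      · rfl
  -- step 3
  let e3 : ℤ → ℤ ⊕ ℤ → ℂ := fun j c => match c with
    | Sum.inl i => Hh B (j + i)
    | Sum.inr i => h (j + (i - 1))
  have s3 : (B.map (Qp F)).prod * ((-1) ^ (B.length * (B.length - 1) / 2) / Vd B) *
      listDet (B.map Sum.inl) ((sg 0 D).map Sum.inl ++ (sg (c + 1) a).map Sum.inr) e2 =
      listDet (sg 0 B.length) ((sg 0 D).map Sum.inl ++ (sg (c + 1) a).map Sum.inr) e3 := by
    rw [← detL hB]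
    have hsc := listDet_scale (sg 0 B.length) B (fun _ => 1) (Qp F) (fun j x => x ^ j * wt B x)
    simp only [List.map_const', List.prod_replicate, one_pow, one_mul] at hsc
    rw [← hsc]
    have hmap := listDet_map B ((sg 0 D).map Sum.inl ++ (sg (c + 1) a).map Sum.inr) Sum.inl id e2
    rw [List.map_id] at hmap
    rw [hmap, listDet_mul (by simp) (by simp [hm])]
    apply listDet_congr
    intro j hj c' hc'
    simp only [List.mem_append, List.mem_map] at hc'
    rw [mem_sg] at hj
    rcases hc' with ⟨i, hi, rfl⟩ | ⟨i, hi, rfl⟩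
    · simp only [e2, e3, id]
      rw [mem_sg] at hi
      rw [Hh_pos (by omega)]
      refine listsum_congr fun b hb => ?_
      have hq := Qp_ne (hBF b hb)
      rw [zpow_add₀ (hB0 b hb)]
      field_simp
    · simp only [e2, e3, id, h]
      refine listsum_congr fun b hb => ?_
      rw [zpow_add₀ (hB0 b hb)]
      ring
  have s4 : listDet (sg 0 B.length) ((sg 0 D).map Sum.inl ++ (sg (c + 1) a).map Sum.inr) e3 =
      (-1) ^ (D * a) * (Hk h a c * (-1) ^ (D * (D - 1) / 2)) := by
    have := listDet_swap (sg 0 B.length) [] ((sg 0 D).map Sum.inl) ((sg (c + 1) a).map Sum.inr) [] e3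
    simp only [List.append_nil, List.nil_append] at this
    rw [this, hm, Nat.add_comm D a, ← sg_append 0 a a D (by simp), listDet_block (by simp) (by simp)]
    · simp only [List.length_map, sg_length]
      congr 2
      · rw [Hk, sg_eq_map (c + 1) 1, List.map_map, show c + 1 - 1 = c by ring]
        have := listDet_map (sg 0 a) (sg c a) id (Sum.inr ∘ fun x => x + 1) e3
        rw [List.map_id] at this
        rw [this]
        simp [e3]
      · have := listDet_map (sg a D) (sg 0 D) id Sum.inl e3
        rw [List.map_id] at this
        rw [this]
        simp only [id]
        apply listDet_anti
        · intro i j hij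
          exact Hh_zero hB (by omega)
        · intro i j hij
          exact Hh_one hB (by omega)
    · intro j hj c' hc'
      rw [List.mem_map] at hc'
      obtain ⟨i, hi, rfl⟩ := hc'
      rw [mem_sg] at hi hj
      exact Hh_zero hB (by omega)
  have hVB := Vd_ne hB
  have hVF := Vd_ne hF
  rw [Dden_eq]
  rw [s2] at s1
  rw [s4] at s3
  have p1 := neg_one_pow_sq (F.length * (F.length - 1) / 2)
  have p2 := neg_one_pow_sq (B.length * (B.length - 1) / 2)
  generalize listDet (B.map Sum.inl) ((sg 0 D).map Sum.inl ++ (sg (c + 1) a).map Sum.inr) e2 = Y at s1 s3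
  have hpa : ((-1 : ℂ)) ^ (B.length * (B.length - 1) / 2) ≠ 0 := pow_ne_zero _ (by norm_num)
  have hpb : ((-1 : ℂ)) ^ (F.length * (F.length - 1) / 2) ≠ 0 := pow_ne_zero _ (by norm_num)
  rw [pow_add, pow_add, pow_add, pow_add]
  generalize (B.map (Qp F)).prod = P at *
  generalize ((-1 : ℂ)) ^ (B.length * (B.length - 1) / 2) = ε1 at *
  generalize ((-1 : ℂ)) ^ (F.length * (F.length - 1) / 2) = ε2 at *
  generalize ((-1 : ℂ)) ^ (k * a) = ε3 at *
  generalize ((-1 : ℂ)) ^ (k * (k - 1) / 2) = ε4 at *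
  generalize ((-1 : ℂ)) ^ (D * a) = ε5 at *
  generalize ((-1 : ℂ)) ^ (D * (D - 1) / 2) = ε6 at *
  generalize Hk h a c = H at *
  field_simp at s1 s3 ⊢
  have hW2 : W = ε2 * (Vd F * ε3 * Y * ε4) := by
    linear_combination (-W) * p1 + ε2 * s1
  rw [hW2]
  have hY : P * Y = ε1 * (Vd B * ε5 * H * ε6) := by
    linear_combination (-P * Y) * p2 + ε1 * s3
  linear_combination (ε2 * Vd F * ε3 * ε4) * hY

/-- row keys -/
inductive RK
  | f (x : ℂ) | b1 (x : ℂ) | b2 (x : ℂ) | r1 (r : ℤ) | r2 (r : ℤ) | gp (l : ℤ) | j (j : ℤ)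

/-- column keys -/
inductive CK
  | a (x : ℂ) | t1 (j : ℤ) | f (x : ℂ) | t2 (j : ℤ) | m1 (i : ℤ) | m2 (i : ℤ) | gp (l : ℤ)
  | ta (k : ℤ) | u (k : ℤ)

theorem sum_ite' {β : Type*} [DecidableEq β] (L : List β) (h : L.Nodup) (i : β) (hi : i ∈ L)
    (g : β → ℂ) : (L.map (fun k => (if i = k then 1 else 0) * g k)).sum = g i := by
  rw [← List.sum_toFinset _ h]
  simp [hi]

/-- strip determinant entries (sign free) -/
noncomputable def sE (η : ℤ) : RK → CK → ℂ
  | RK.b1 b, CK.f x => 1 / (b - x)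
  | RK.b1 b, CK.t1 j => b ^ (j - 1)
  | RK.b2 b, CK.f x => (x / b) ^ η / (b - x)
  | RK.b2 b, CK.t2 j => b ^ (j - 1 - η)
  | RK.r1 r, CK.f x => x ^ (r - 1)
  | RK.r2 r, CK.f x => x ^ (r - 1 + η)
  | _, _ => 0

open Classical in
/-- extended strip entries -/
noncomputable def yE (η : ℤ) : RK → CK → ℂ
  | RK.f x, CK.a y => (if x = y then 1 else 0) * (-1)
  | RK.f _, _ => 0
  | RK.b1 b, CK.a x => 1 / (b - x)
  | RK.r1 r, CK.a x => x ^ (r - 1)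
  | r, c => sE η r c

/-- the partial fraction matrix -/
noncomputable def xE (F : List ℂ) (η : ℤ) : CK → CK → ℂ
  | CK.a x, CK.m1 i => x ^ i * wt F x
  | CK.a x, CK.m2 i => - (x ^ (i - η) * wt F x)
  | CK.t1 j, CK.m1 i => Hh F (i - j)
  | CK.f x, CK.m2 i => x ^ (i - η) * wt F x
  | CK.t2 j, CK.m2 i => Hh F (i - j)
  | _, _ => 0

/-- the product matrix -/
noncomputable def pE (F : List ℂ) (η : ℤ) : RK → CK → ℂ
  | RK.f x, CK.m1 i => - (x ^ i * wt F x)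
  | RK.f x, CK.m2 i => x ^ (i - η) * wt F x
  | RK.b1 b, CK.m1 i => b ^ i / Qp F b
  | RK.b2 b, CK.m2 i => b ^ (i - η) / Qp F b
  | RK.r1 r, CK.m1 i => Hh F (i + r - 1)
  | RK.r2 r, CK.m2 i => Hh F (i + r - 1)
  | _, _ => 0

/-- the reduced matrix -/
noncomputable def qE (η : ℤ) : RK → CK → ℂ
  | RK.f x, CK.m1 i => - x ^ i
  | RK.f x, CK.m2 i => x ^ (i - η)
  | RK.b1 b, CK.m1 i => b ^ i
  | RK.b2 b, CK.m2 i => b ^ (i - η)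
  | _, _ => 0

theorem listDet_map_left {α α' β : Type*} (g : α' → α) (rows : List α') (cols : List β)
    (e : α → β → ℂ) : listDet (rows.map g) cols e = listDet rows cols (fun r c => e (g r) c) := by
  have := listDet_map rows cols g id e
  rwa [List.map_id] at this

theorem listDet_map_right {α β β' : Type*} (g : β' → β) (rows : List α) (cols : List β')
    (e : α → β → ℂ) : listDet rows (cols.map g) e = listDet rows cols (fun r c => e r (g c)) := by
  have := listDet_map rows cols id g e
  rwa [List.map_id] at this

theorem strip_s1 {F : List ℂ} (hF : F.Nodup) (R : List RK) (η : ℤ) (P1 P2 : ℕ)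
    (hR : ∀ r ∈ R, (∃ b, r = RK.b1 b) ∨ (∃ b, r = RK.b2 b) ∨ (∃ b, r = RK.r1 b) ∨ (∃ b, r = RK.r2 b))
    (hl : R.length = F.length + P1 + P2) :
    listDet (F.map RK.f ++ R) ((F.map CK.a ++ (sg 1 P1).map CK.t1) ++
      (F.map CK.f ++ (sg 1 P2).map CK.t2)) (yE η) =
    (-1) ^ (P1 * F.length + F.length) *
      listDet R (F.map CK.f ++ ((sg 1 P1).map CK.t1 ++ (sg 1 P2).map CK.t2)) (sE η) := by
  classical
  rw [List.append_assoc, listDet_swap, listDet_block (by simp) (by simp; omega), listDet_map]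
  · have h1 : listDet F F (fun r c => yE η (RK.f r) (CK.a c)) = (-1) ^ F.length := by
      have := listDet_scale F F (fun _ => 1) (fun _ => -1) (fun x y => if x = y then 1 else 0)
      rw [listDet_id F hF] at this
      simp only [List.map_const', List.prod_replicate, one_pow, one_mul, mul_one] at this
      rw [← this]
      apply listDet_congr
      intro x _ y _
      simp only [yE]
      rw [mul_comm]
    rw [h1, pow_add, mul_assoc]
    simp only [List.length_map, sg_length]
    congr 2
    apply listDet_congr
    intro r hr c hc
    simp only [List.mem_append, List.mem_map] at hc
    rcases hR r hr with ⟨b, rfl⟩ | ⟨b, rfl⟩ | ⟨b, rfl⟩ | ⟨b, rfl⟩ <;>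
    rcases hc with ⟨x, _, rfl⟩ | ⟨x, _, rfl⟩ | ⟨x, _, rfl⟩ <;> rfl
  · intro r hr c hc
    simp only [List.mem_append, List.mem_map] at hr hc
    obtain ⟨y, _, rfl⟩ := hr
    rcases hc with ⟨x, _, rfl⟩ | ⟨x, _, rfl⟩ | ⟨x, _, rfl⟩ <;> rfl

theorem xE_det {F : List ℂ} (hF : F.Nodup) (hF0 : ∀ x ∈ F, x ≠ 0) (η : ℤ) (P1 P2 : ℕ) :
    listDet ((F.map CK.a ++ (sg 1 P1).map CK.t1) ++ (F.map CK.f ++ (sg 1 P2).map CK.t2))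
      ((sg 0 (F.length + P1)).map CK.m1 ++ (sg 0 (F.length + P2)).map CK.m2) (xE F η) =
      1 / Vd F ^ 2 * (F.map (fun x => x ^ (-η))).prod := by
  rw [listDet_block' (by simp) (by simp)]
  · have h1 : listDet (F.map CK.a ++ (sg 1 P1).map CK.t1) ((sg 0 (F.length + P1)).map CK.m1) (xE F η)
        = (-1) ^ (F.length * (F.length - 1) / 2) / Vd F := by
      rw [← gE_det hF P1]
      have := listDet_map (F.map Sum.inl ++ (sg 1 P1).map Sum.inr) (sg 0 (F.length + P1))
        (Sum.elim CK.a CK.t1) CK.m1 (xE F η)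
      rw [List.map_append, List.map_map, List.map_map] at this
      simp only [Sum.elim_comp_inl, Sum.elim_comp_inr] at this
      rw [this]
      apply listDet_congr
      intro r hr c hc
      rcases r with r | r <;> rfl
    have h2 : listDet (F.map CK.f ++ (sg 1 P2).map CK.t2) ((sg 0 (F.length + P2)).map CK.m2) (xE F η)
        = (F.map (fun x => x ^ (-η))).prod * ((-1) ^ (F.length * (F.length - 1) / 2) / Vd F) := by
      rw [← gE_det hF P2]
      have := listDet_map (F.map Sum.inl ++ (sg 1 P2).map Sum.inr) (sg 0 (F.length + P2))
        (Sum.elim CK.f CK.t2) CK.m2 (xE F η)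
      rw [List.map_append, List.map_map, List.map_map] at this
      simp only [Sum.elim_comp_inl, Sum.elim_comp_inr] at this
      rw [this]
      have h3 := listDet_scale (F.map Sum.inl ++ (sg 1 P2).map Sum.inr) (sg 0 (F.length + P2))
        (Sum.elim (fun x => x ^ (-η)) (fun _ => 1)) (fun _ => 1) (gE F)
      rw [List.map_append, List.map_map, List.map_map, List.prod_append] at h3
      simp only [Sum.elim_comp_inl, Sum.elim_comp_inr, List.map_const', List.prod_replicate, one_pow,
        mul_one] at h3
      rw [← h3]
      apply listDet_congr
      intro r hr c hc
      simp only [List.mem_append, List.mem_map] at hr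
      rcases hr with ⟨x, hx, rfl⟩ | ⟨x, hx, rfl⟩
      · simp only [Sum.elim_inl, xE, gE]
        rw [sub_eq_neg_add, zpow_add₀ (hF0 x hx)]
        ring
      · simp only [Sum.elim_inr, xE, gE, one_mul]
    rw [h1, h2]
    have := neg_one_pow_sq (F.length * (F.length - 1) / 2)
    have hV := Vd_ne hF
    field_simp
    linear_combination (F.map (fun x => x ^ (-η))).prod * this
  · intro r hr c hc
    simp only [List.mem_append, List.mem_map] at hr hc
    obtain ⟨i, _, rfl⟩ := hc
    rcases hr with ⟨x, _, rfl⟩ | ⟨x, _, rfl⟩ <;> rfl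

theorem strip_s2 {F B1 B2 : List ℂ} (hF : F.Nodup) (hF0 : ∀ x ∈ F, x ≠ 0)
    (hB1 : ∀ b ∈ B1, b ∉ F) (hB2 : ∀ b ∈ B2, b ∉ F) (hB20 : ∀ b ∈ B2, b ≠ 0)
    (η : ℤ) (P1 P2 k1 k2 : ℕ)
    (hl : B1.length + B2.length + k1 + k2 = F.length + P1 + P2) :
    listDet (F.map RK.f ++ (B1.map RK.b1 ++ (B2.map RK.b2 ++
        ((sg 1 k1).map RK.r1 ++ (sg 1 k2).map RK.r2))))
      ((F.map CK.a ++ (sg 1 P1).map CK.t1) ++ (F.map CK.f ++ (sg 1 P2).map CK.t2)) (yE η) *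
    (1 / Vd F ^ 2 * (F.map (fun x => x ^ (-η))).prod) =
    listDet (F.map RK.f ++ (B1.map RK.b1 ++ (B2.map RK.b2 ++
        ((sg 1 k1).map RK.r1 ++ (sg 1 k2).map RK.r2))))
      ((sg 0 (F.length + P1)).map CK.m1 ++ (sg 0 (F.length + P2)).map CK.m2) (pE F η) := by
  classical
  rw [← xE_det hF hF0 η P1 P2, listDet_mul (by simp; omega) (by simp; omega)]
  apply listDet_congr
  intro r hr c hc
  simp only [List.map_append, List.map_map, List.sum_append, Function.comp_def]
  simp only [List.mem_append, List.mem_map] at hr hc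
  have hz : ∀ x : ℂ, x * 0 = 0 := mul_zero
  rcases hc with ⟨i, hi, rfl⟩ | ⟨i, hi, rfl⟩
  · rw [mem_sg] at hi
    rw [listsum_zero F (fun x => yE η r (CK.f x) * xE F η (CK.f x) (CK.m1 i)) (fun x _ => by simp [xE]),
      listsum_zero (sg 1 P2) _ (fun x _ => by simp [xE]), add_zero, add_zero]
    rcases hr with ⟨b, hb, rfl⟩ | ⟨b, hb, rfl⟩ | ⟨b, hb, rfl⟩ | ⟨b, hb, rfl⟩ | ⟨b, hb, rfl⟩
    · rw [listsum_zero (sg 1 P1) _ (fun x _ => by simp [yE]), add_zero]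
      simp only [yE, xE, pE, mul_assoc]
      rw [sum_ite' F hF b hb]
      ring
    · lift i to ℕ using hi.1
      exact (pf hF (hB1 b hb) i P1 (by omega)).symm
    · rw [listsum_zero (sg 1 P1) _ (fun x _ => by simp [yE, sE]), 
        listsum_zero F _ (fun x _ => by simp [yE, sE]), add_zero]
      rfl
    · rw [listsum_zero (sg 1 P1) _ (fun x _ => by simp [yE, sE]), add_zero]
      rw [mem_sg] at hb
      simp only [yE, xE, pE]
      rw [Hh_pos (by omega)]
      refine listsum_congr fun x hx => ?_
      rw [show i + b - 1 = (b - 1) + i by ring, zpow_add₀ (hF0 x hx)]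
      ring
    · rw [listsum_zero (sg 1 P1) _ (fun x _ => by simp [yE, sE]), 
        listsum_zero F _ (fun x _ => by simp [yE, sE]), add_zero]
      rfl
  · rw [mem_sg] at hi
    rw [listsum_zero (sg 1 P1) _ (fun x _ => by simp [xE]), add_zero]
    rcases hr with ⟨b, hb, rfl⟩ | ⟨b, hb, rfl⟩ | ⟨b, hb, rfl⟩ | ⟨b, hb, rfl⟩ | ⟨b, hb, rfl⟩
    · rw [listsum_zero F (fun x => yE η (RK.f b) (CK.f x) * xE F η (CK.f x) (CK.m2 i)) (fun x _ => by simp [yE]),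
        listsum_zero (sg 1 P2) _ (fun x _ => by simp [yE]), add_zero, add_zero]
      simp only [yE, xE, pE, mul_assoc]
      rw [sum_ite' F hF b hb]
      ring
    · rw [listsum_zero (sg 1 P2) _ (fun x _ => by simp [yE, sE]), add_zero, ← listsum_add,
        listsum_zero F _ (fun x _ => by simp [yE, sE, xE])]
      rfl
    · rw [listsum_zero F (fun x => yE η (RK.b2 b) (CK.a x) * xE F η (CK.a x) (CK.m2 i))
        (fun x _ => by simp [yE, sE]), zero_add]
      simp only [yE, sE, xE, pE]
      have hb0 := hB20 b hb
      lift i to ℕ using hi.1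
      have h := pf hF (hB2 b hb) i P2 (by omega)
      have h1 : b ^ ((i : ℤ) - η) / Qp F b = b ^ (-η) * (b ^ (i : ℤ) / Qp F b) := by
        rw [sub_eq_neg_add, zpow_add₀ hb0]; ring
      rw [h1, h, mul_add, ← listsum_mul, ← listsum_mul]
      congr 1
      · refine listsum_congr fun x hx => ?_
        rw [sub_eq_add_neg (i : ℤ), zpow_add₀ (hF0 x hx), div_zpow, zpow_neg, zpow_neg]
        have hx1 : x ^ η ≠ 0 := zpow_ne_zero _ (hF0 x hx)
        have hb1 : b ^ η ≠ 0 := zpow_ne_zero _ hb0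
        field_simp
      · refine listsum_congr fun j _ => ?_
        rw [show j - 1 - η = -η + (j - 1) by ring, zpow_add₀ hb0]
        ring
    · rw [listsum_zero (sg 1 P2) _ (fun x _ => by simp [yE, sE]), add_zero, ← listsum_add,
        listsum_zero F _ (fun x _ => by simp [yE, sE, xE])]
      rfl
    · rw [listsum_zero F (fun x => yE η (RK.r2 b) (CK.a x) * xE F η (CK.a x) (CK.m2 i))
        (fun x _ => by simp [yE, sE]), zero_add,
        listsum_zero (sg 1 P2) _ (fun x _ => by simp [yE, sE]), add_zero]
      rw [mem_sg] at hb
      simp only [yE, sE, xE, pE]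
      rw [Hh_pos (by omega)]
      refine listsum_congr fun x hx => ?_
      rw [← mul_assoc, ← zpow_add₀ (hF0 x hx)]
      congr 2
      ring

theorem strip_s3 {F B1 B2 : List ℂ} (hF : F.Nodup)
    (η : ℤ) (P1 P2 k1 k2 K1 K2 : ℕ) (h1 : F.length + P1 = K1 + k1) (h1' : P1 = 0 ∨ k1 = 0)
    (h2 : F.length + P2 = K2 + k2) (h2' : P2 = 0 ∨ k2 = 0)
    (hK : K1 + K2 = B1.length + B2.length + F.length) :
    listDet (F.map RK.f ++ (B1.map RK.b1 ++ (B2.map RK.b2 ++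
        ((sg 1 k1).map RK.r1 ++ (sg 1 k2).map RK.r2))))
      ((sg 0 (F.length + P1)).map CK.m1 ++ (sg 0 (F.length + P2)).map CK.m2) (pE F η) =
    (-1) ^ (k1 * K2 + k1 * (k1 - 1) / 2 + k2 * (k2 - 1) / 2) *
      listDet (F.map RK.f ++ (B1.map RK.b1 ++ B2.map RK.b2))
        ((sg 0 K1).map CK.m1 ++ (sg 0 K2).map CK.m2) (pE F η) := by
  rw [h1, h2, ← sg_append 0 K1 K1 k1 (by simp), ← sg_append 0 K2 K2 k2 (by simp), List.map_append,
    List.map_append, List.append_assoc, listDet_swap]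
  have ha : ∀ rows : List RK, rows = F.map RK.f ++ (B1.map RK.b1 ++ (B2.map RK.b2 ++
        ((sg 1 k1).map RK.r1 ++ (sg 1 k2).map RK.r2))) →
      rows = (F.map RK.f ++ (B1.map RK.b1 ++ B2.map RK.b2)) ++
        ((sg 1 k1).map RK.r1 ++ (sg 1 k2).map RK.r2) := by
    rintro _ rfl; simp
  rw [ha _ rfl, ← List.append_assoc ((sg 0 K1).map CK.m1), listDet_block' (by simp; omega) (by simp),
    listDet_block (r1 := (sg 1 k1).map RK.r1) (r2 := (sg 1 k2).map RK.r2)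
      (c1 := (sg K1 k1).map CK.m1) (c2 := (sg K2 k2).map CK.m2) (by simp) (by simp),
    listDet_map, listDet_map]
  · have e1 : listDet (sg 1 k1) (sg K1 k1) (fun r c => pE F η (RK.r1 r) (CK.m1 c)) =
        (-1) ^ (k1 * (k1 - 1) / 2) := by
      apply listDet_anti
      · intro i j hij
        exact Hh_zero hF (by omega)
      · intro i j hij
        exact Hh_one hF (by omega)
    have e2 : listDet (sg 1 k2) (sg K2 k2) (fun r c => pE F η (RK.r2 r) (CK.m2 c)) =
        (-1) ^ (k2 * (k2 - 1) / 2) := by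
      apply listDet_anti
      · intro i j hij
        exact Hh_zero hF (by omega)
      · intro i j hij
        exact Hh_one hF (by omega)
    rw [e1, e2, pow_add, pow_add]
    simp only [List.length_map, sg_length]
    ring
  · intro r hr c hc
    simp only [List.mem_map] at hr hc
    obtain ⟨y, _, rfl⟩ := hr
    obtain ⟨x, _, rfl⟩ := hc
    rfl
  · intro r hr c hc
    simp only [List.mem_map, List.mem_append] at hr hc
    rcases hr with ⟨y, hy, rfl⟩ | ⟨y, hy, rfl⟩ <;> rcases hc with ⟨x, hx, rfl⟩ | ⟨x, hx, rfl⟩ <;>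
    rw [mem_sg] at hx hy
    · exact Hh_zero hF (by omega)
    · rfl
    · rfl
    · exact Hh_zero hF (by omega)

theorem strip_s3b {F B1 B2 : List ℂ} (η : ℤ) (K1 K2 : ℕ) :
    listDet (F.map RK.f ++ (B1.map RK.b1 ++ B2.map RK.b2))
        ((sg 0 K1).map CK.m1 ++ (sg 0 K2).map CK.m2) (pE F η) =
    (F.map (wt F)).prod * ((B1 ++ B2).map (Qp F)).prod⁻¹ *
    listDet (F.map RK.f ++ (B1.map RK.b1 ++ B2.map RK.b2))
        ((sg 0 K1).map CK.m1 ++ (sg 0 K2).map CK.m2) (qE η) := by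
  let uu : RK → ℂ := fun r => match r with
    | RK.f x => wt F x
    | RK.b1 x => (Qp F x)⁻¹
    | RK.b2 x => (Qp F x)⁻¹
    | _ => 1
  have h := listDet_scale (F.map RK.f ++ (B1.map RK.b1 ++ B2.map RK.b2))
    ((sg 0 K1).map CK.m1 ++ (sg 0 K2).map CK.m2) uu (fun _ => 1) (qE η)
  have hp : ((F.map RK.f ++ (B1.map RK.b1 ++ B2.map RK.b2)).map uu).prod =
     (F.map (wt F)).prod * ((B1 ++ B2).map (Qp F)).prod⁻¹ := by
    simp only [List.map_append, List.map_map, List.prod_append, mul_inv, List.prod_inv]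
    rfl
  rw [hp] at h
  simp only [List.map_const', List.prod_replicate, one_pow, mul_one] at h
  rw [← h]
  apply listDet_congr
  intro r hr c hc
  simp only [List.mem_map, List.mem_append] at hr hc
  rcases hr with ⟨y, _, rfl⟩ | ⟨y, _, rfl⟩ | ⟨y, _, rfl⟩ <;> 
    rcases hc with ⟨x, _, rfl⟩ | ⟨x, _, rfl⟩ <;> simp only [uu, pE, qE] <;> ring

theorem listDet_diag (n : ℕ) (a b : ℤ) (s : ℂ) (e : ℤ → ℤ → ℂ)
    (h : ∀ i j : ℕ, i < n → j < n → e (a + i) (b + j) = if i = j then s else 0) :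
    listDet (sg a n) (sg b n) e = s ^ n := by
  rw [listDet_eq (n := n) (by simp) (by simp)]
  have : (Matrix.of fun i j : Fin n => e ((sg a n)[(i : ℕ)]'(by simp)) ((sg b n)[(j : ℕ)]'(by simp)))
      = Matrix.diagonal (fun _ => s) := by
    ext i j
    simp only [Matrix.of_apply, sg_getElem, Matrix.diagonal_apply]
    rw [h i j i.2 j.2]
    simp only [Fin.ext_iff]
  rw [this, Matrix.det_diagonal]
  simp

/-- middle matrix -/
noncomputable def midE (B : List ℂ) : RK → CK → ℂ
  | RK.f x, CK.ta k => - x ^ k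
  | RK.b1 b, CK.ta k => if 0 ≤ k then wt B b * b ^ k else 0
  | RK.b2 b, CK.ta k => if 0 ≤ k then 0 else - (wt B b * b ^ k)
  | RK.b1 b, CK.u k => wt B b * b ^ k
  | RK.b2 b, CK.u k => wt B b * b ^ k
  | RK.gp l, CK.ta k => if k = l then 1 else 0
  | _, _ => 0

/-- combinatorial matrix -/
noncomputable def YE (η : ℤ) : CK → CK → ℂ
  | CK.ta k, CK.m1 i => if k = i then 1 else 0
  | CK.ta k, CK.m2 i => if k = i - η then -1 else 0
  | CK.ta k, CK.gp l => if k = l then 1 else 0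
  | CK.u k, CK.m2 i => if k = i - η then 1 else 0
  | _, _ => 0

open Classical in
/-- left matrix -/
noncomputable def leftE (B : List ℂ) : RK → RK → ℂ
  | RK.f x, RK.f y => if x = y then 1 else 0
  | RK.j j, RK.b1 b => b ^ j
  | RK.j j, RK.b2 b => b ^ j
  | RK.j j, RK.gp l => Hh B (j + l)
  | _, _ => 0

/-- moments -/
noncomputable def tau (B1 B2 : List ℂ) (i : ℤ) : ℂ :=
  Hh (B1 ++ B2) i - (B2.map (fun b => b ^ i * wt (B1 ++ B2) b)).sum

/-- the big matrix -/
noncomputable def bigE (B1 B2 : List ℂ) : RK → CK → ℂ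
  | RK.f x, CK.ta k => - x ^ k
  | RK.j j, CK.ta k => tau B1 B2 (j + k)
  | RK.j j, CK.u k => Hh (B1 ++ B2) (j + k)
  | _, _ => 0

theorem YE_det (K1 e g d : ℕ) (hgd : d = 0 ∨ g = 0) :
    listDet ((sg (-(e + g : ℤ)) (e + g + K1)).map CK.ta ++ (sg 0 d).map CK.u)
      (((sg 0 K1).map CK.m1 ++ (sg 0 (e + d)).map CK.m2) ++ (sg (-(g : ℤ)) g).map CK.gp)
      (YE (e + g)) = (-1) ^ (K1 * (e + g) + e) := by
  have hdg : d * g = 0 := by rcases hgd with h | h <;> simp [h]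
  rw [add_assoc e g K1, ← sg_append (-(e + g : ℤ)) (-g) e (g + K1) (by ring),
    ← sg_append (-(g : ℤ)) 0 g K1 (by ring), ← sg_append 0 e e d (by ring)]
  simp only [List.map_append, List.append_assoc]
  rw [← List.append_assoc ((sg 0 K1).map CK.m1) ((sg 0 e).map CK.m2)]
  have h1 := listDet_swap ((sg (-(e + g : ℤ)) e).map CK.ta ++ ((sg (-(g : ℤ)) g).map CK.ta ++
    ((sg 0 K1).map CK.ta ++ (sg 0 d).map CK.u))) ((sg 0 K1).map CK.m1 ++ (sg 0 e).map CK.m2)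
    ((sg e d).map CK.m2) ((sg (-(g : ℤ)) g).map CK.gp) [] (YE (e + g))
  have h2 := listDet_swap ((sg (-(e + g : ℤ)) e).map CK.ta ++ ((sg (-(g : ℤ)) g).map CK.ta ++
    ((sg 0 K1).map CK.ta ++ (sg 0 d).map CK.u))) [] ((sg 0 K1).map CK.m1) ((sg 0 e).map CK.m2)
    ((sg (-(g : ℤ)) g).map CK.gp ++ (sg e d).map CK.m2) (YE (e + g))
  have h3 := listDet_swap ((sg (-(e + g : ℤ)) e).map CK.ta ++ ((sg (-(g : ℤ)) g).map CK.ta ++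
    ((sg 0 K1).map CK.ta ++ (sg 0 d).map CK.u))) ((sg 0 e).map CK.m2) ((sg 0 K1).map CK.m1)
    ((sg (-(g : ℤ)) g).map CK.gp) ((sg e d).map CK.m2) (YE (e + g))
  simp only [List.append_nil, List.nil_append, List.length_map, sg_length, List.append_assoc] at h1 h2 h3
  rw [List.append_assoc, h1, h2, h3, hdg]
  rw [listDet_block (by simp) (by simp), listDet_block (r1 := (sg (-(g : ℤ)) g).map CK.ta) (by simp) (by simp),
    listDet_block' (r1 := (sg 0 K1).map CK.ta) (by simp) (by simp)]
  · rw [listDet_map, listDet_map, listDet_map, listDet_map, listDet_diag e _ _ (-1), listDet_diag g _ _ 1,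
      listDet_diag K1 _ _ 1, listDet_diag d _ _ 1]
    · simp only [one_pow, mul_one, pow_zero, one_mul, ← pow_add]
      congr 1; ring
    · intro i j hi hj
      simp only [YE]
      have : g = 0 := by omega
      congr 1
      simp only [eq_iff_iff]
      omega
    · intro i j hi hj
      simp only [YE]
      congr 1
      simp only [eq_iff_iff]
      omega
    · intro i j hi hj
      simp only [YE]
      congr 1
      simp only [eq_iff_iff]
      omega
    · intro i j hi hj
      simp only [YE]
      congr 1
      simp only [eq_iff_iff]
      omega
  · intro r hr c hc
    simp only [List.mem_map, mem_sg] at hr hc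
    obtain ⟨k, hk, rfl⟩ := hr
    obtain ⟨i, hi, rfl⟩ := hc
    rfl
  · intro r hr c hc
    simp only [List.mem_map, List.mem_append, mem_sg] at hr hc
    obtain ⟨k, hk, rfl⟩ := hr
    rcases hc with ⟨i, hi, rfl⟩ | ⟨i, hi, rfl⟩ <;> simp only [YE] <;> rw [if_neg] <;> omega
  · intro r hr c hc
    simp only [List.mem_map, List.mem_append, mem_sg] at hr hc
    obtain ⟨k, hk, rfl⟩ := hr
    rcases hc with ⟨i, hi, rfl⟩ | ⟨i, hi, rfl⟩ | ⟨i, hi, rfl⟩ <;> simp only [YE] <;> rw [if_neg] <;> omega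

theorem sum_ite_z (a : ℤ) (n : ℕ) (i : ℤ) (g : ℤ → ℂ) (s : ℂ) :
    ((sg a n).map (fun k => g k * (if k = i then s else 0))).sum =
      if a ≤ i ∧ i < a + n then g i * s else 0 := by
  rw [← List.sum_toFinset _ (sg_nodup a n)]
  simp [mem_sg]

theorem mid_Y {F B1 B2 : List ℂ} (K1 e g d : ℕ) (hgd : d = 0 ∨ g = 0) (hdK : d ≤ K1)
    (hK : K1 + e + d = F.length + B1.length + B2.length) :
    listDet (F.map RK.f ++ (B1.map RK.b1 ++ B2.map RK.b2) ++ (sg (-(g : ℤ)) g).map RK.gp)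
      ((sg (-(e + g : ℤ)) (e + g + K1)).map CK.ta ++ (sg 0 d).map CK.u) (midE (B1 ++ B2)) *
      (-1) ^ (K1 * (e + g) + e) =
    ((B1 ++ B2).map (wt (B1 ++ B2))).prod *
    listDet (F.map RK.f ++ (B1.map RK.b1 ++ B2.map RK.b2))
        ((sg 0 K1).map CK.m1 ++ (sg 0 (e + d)).map CK.m2) (qE (e + g)) := by
  rw [← YE_det K1 e g d hgd, listDet_mul (by simp; omega) (by simp; omega),
    listDet_block' (by simp; omega) (by simp)]
  · have h1 : listDet ((sg (-(g : ℤ)) g).map RK.gp) ((sg (-(g : ℤ)) g).map CK.gp) (fun r c =>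
        (((sg (-(e + g : ℤ)) (e + g + K1)).map CK.ta ++ (sg 0 d).map CK.u).map
          (fun k => midE (B1 ++ B2) r k * YE (e + g) k c)).sum) = 1 := by
      rw [listDet_map, listDet_diag g _ _ 1, one_pow]
      intro i j hi hj
      simp only [List.map_append, List.map_map, List.sum_append, Function.comp_def, midE, YE]
      rw [sum_ite_z, listsum_zero _ _ (fun x _ => by simp), if_pos (by omega), add_zero, mul_one]
      congr 1
      simp only [eq_iff_iff]
      omega
    rw [h1, mul_one]
    let uu : RK → ℂ := fun r => match r with
      | RK.b1 x => wt (B1 ++ B2) x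
      | RK.b2 x => wt (B1 ++ B2) x
      | _ => 1
    have h := listDet_scale (F.map RK.f ++ (B1.map RK.b1 ++ B2.map RK.b2))
      ((sg 0 K1).map CK.m1 ++ (sg 0 (e + d)).map CK.m2) uu (fun _ => 1) (qE (e + g))
    have hp : ((F.map RK.f ++ (B1.map RK.b1 ++ B2.map RK.b2)).map uu).prod =
       ((B1 ++ B2).map (wt (B1 ++ B2))).prod := by
      simp only [List.map_append, List.map_map, List.prod_append]
      have : (F.map (uu ∘ RK.f)).prod = 1 := by
        have : uu ∘ RK.f = fun _ => 1 := rfl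
        rw [this]; simp
      rw [this, one_mul]
      rfl
    rw [hp] at h
    simp only [List.map_const', List.prod_replicate, one_pow, mul_one] at h
    rw [← h]
    apply listDet_congr
    intro r hr c hc
    simp only [List.mem_map, List.mem_append, mem_sg] at hr hc
    simp only [List.map_append, List.map_map, List.sum_append, Function.comp_def]
    rcases hr with ⟨y, _, rfl⟩ | ⟨y, _, rfl⟩ | ⟨y, _, rfl⟩ <;> 
      rcases hc with ⟨x, hx, rfl⟩ | ⟨x, hx, rfl⟩ <;> simp only [midE, YE, qE, uu]
    · rw [sum_ite_z, listsum_zero _ _ (fun x _ => by simp), if_pos (by omega)]; ring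
    · rw [sum_ite_z, listsum_zero _ _ (fun x _ => by simp), if_pos (by omega)]; ring
    · rw [sum_ite_z, listsum_zero _ _ (fun x _ => by simp), if_pos (by omega), if_pos (by omega)]; ring
    · rw [sum_ite_z, sum_ite_z, if_pos (by omega)]
      by_cases hh : 0 ≤ x - (e + g : ℤ)
      · rw [if_pos (by omega), if_pos (by omega)]; ring
      · rw [if_neg (by omega), if_neg (by omega)]; ring
    · rw [sum_ite_z, listsum_zero _ _ (fun x _ => by simp), if_pos (by omega), if_pos (by omega)]; ring
    · rw [sum_ite_z, sum_ite_z, if_pos (by omega)]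
      by_cases hh : 0 ≤ x - (e + g : ℤ)
      · rw [if_pos (by omega), if_pos (by omega)]; ring
      · rw [if_neg (by omega), if_neg (by omega)]; ring
  · intro r hr c hc
    simp only [List.mem_map, List.mem_append, mem_sg] at hr hc
    simp only [List.map_append, List.map_map, List.sum_append, Function.comp_def]
    obtain ⟨l, hl, rfl⟩ := hr
    rcases hc with ⟨x, hx, rfl⟩ | ⟨x, hx, rfl⟩ <;> simp only [midE, YE]
    · rw [sum_ite_z, listsum_zero _ _ (fun x _ => by simp)]
      split_ifs <;> first | omega | simp
    · rw [sum_ite_z, listsum_zero _ _ (fun x _ => by simp)]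
      split_ifs <;> first | omega | simp

theorem left_det {F B1 B2 : List ℂ} (hF : F.Nodup) (hB : (B1 ++ B2).Nodup) (g : ℕ) :
    listDet (F.map RK.f ++ (sg 0 (B1.length + B2.length + g)).map RK.j)
      (F.map RK.f ++ (B1.map RK.b1 ++ B2.map RK.b2) ++ (sg (-(g : ℤ)) g).map RK.gp) (leftE (B1 ++ B2))
    = Vd (B1 ++ B2) * (-1) ^ (g * (g - 1) / 2) := by
  classical
  rw [List.append_assoc, listDet_block rfl (by simp; ring)]
  · have h1 : listDet (F.map RK.f) (F.map RK.f) (leftE (B1 ++ B2)) = 1 := by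
      rw [listDet_map, ← listDet_id F hF]
      rfl
    rw [h1, one_mul, ← sg_append 0 (B1.length + B2.length : ℤ) (B1.length + B2.length) g (by push_cast; ring),
      List.map_append, listDet_block (by simp) (by simp)]
    · congr 1
      · rw [Vd, ← List.length_append, listDet_transpose, listDet_map_right]
        have := listDet_map_left (fun b => b) (B1 ++ B2) (sg 0 (B1 ++ B2).length) (fun x i => x ^ i)
        rw [listDet_transpose (B1 ++ B2), listDet_transpose]
        rw [listDet_transpose, ← listDet_transpose (B1 ++ B2)]
        have h2 := listDet_map (B1.map Sum.inl ++ B2.map Sum.inr) (sg 0 (B1 ++ B2).length)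
          (Sum.elim RK.b1 RK.b2) id (fun c r => leftE (B1 ++ B2) (RK.j r) c)
        have h3 := listDet_map (B1.map Sum.inl ++ B2.map Sum.inr) (sg 0 (B1 ++ B2).length)
          (Sum.elim id id) id (fun (c : ℂ) (r : ℤ) => c ^ r)
        rw [List.map_append, List.map_map, List.map_map] at h2 h3
        simp only [Sum.elim_comp_inl, Sum.elim_comp_inr, List.map_id] at h2 h3
        rw [h2, h3]
        apply listDet_congr
        intro r hr c hc
        rcases r with r | r <;> rfl
      · rw [listDet_map]
        apply listDet_anti
        · intro i j hij
          exact Hh_zero hB (by simp; omega)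
        · intro i j hij
          exact Hh_one hB (by simp; omega)
    · intro r hr c hc
      simp only [List.mem_map, mem_sg] at hr hc
      obtain ⟨y, hy, rfl⟩ := hr
      obtain ⟨x, hx, rfl⟩ := hc
      exact Hh_zero hB (by simp at *; omega)
  · intro r hr c hc
    simp only [List.mem_map, List.mem_append] at hr hc
    obtain ⟨y, hy, rfl⟩ := hr
    rcases hc with (⟨x, hx, rfl⟩ | ⟨x, hx, rfl⟩) | ⟨x, hx, rfl⟩ <;> rfl

/-- the big determinant -/
noncomputable def Tdet (F : List ℂ) (t : ℤ → ℂ) (η : ℤ) (a : ℕ) : ℂ :=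
  listDet (F.map Sum.inl ++ (sg 0 a).map Sum.inr) (sg (-η) (F.length + a))
    (fun r k => Sum.elim (fun x : ℂ => - x ^ k) (fun j : ℤ => t (j + k)) r)

theorem left_mid {F B1 B2 : List ℂ} (hF : F.Nodup) (hB : (B1 ++ B2).Nodup)
    (hB0 : ∀ b ∈ B1 ++ B2, b ≠ 0)
    (K1 e g d a : ℕ) (hgd : d = 0 ∨ g = 0) (ha : a + F.length = K1 + e + g)
    (hK : K1 + e + d = F.length + B1.length + B2.length) :
    (Vd (B1 ++ B2) * (-1) ^ (g * (g - 1) / 2)) *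
    listDet (F.map RK.f ++ (B1.map RK.b1 ++ B2.map RK.b2) ++ (sg (-(g : ℤ)) g).map RK.gp)
      ((sg (-(e + g : ℤ)) (e + g + K1)).map CK.ta ++ (sg 0 d).map CK.u) (midE (B1 ++ B2)) =
    Tdet F (tau B1 B2) (e + g) a * (-1) ^ (d * (d - 1) / 2) := by
  classical
  rw [← left_det hF hB g, listDet_mul (by simp; ring) (by simp; omega)]
  have hbig : Tdet F (tau B1 B2) (e + g) a * (-1) ^ (d * (d - 1) / 2) =
      listDet (F.map RK.f ++ (sg 0 (B1.length + B2.length + g)).map RK.j)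
      ((sg (-(e + g : ℤ)) (e + g + K1)).map CK.ta ++ (sg 0 d).map CK.u) (bigE B1 B2) := by
    rw [show B1.length + B2.length + g = a + d by omega, ← sg_append 0 a a d (by simp), List.map_append,
      ← List.append_assoc, listDet_block (by simp; omega) (by simp)]
    · congr 1
      · rw [Tdet, show e + g + K1 = F.length + a by omega, listDet_map_right]
        have h2 := listDet_map_left (Sum.elim RK.f RK.j) (F.map Sum.inl ++ (sg 0 a).map Sum.inr)
          (sg (-(e + g : ℤ)) (F.length + a)) (fun r c => bigE B1 B2 r (CK.ta c))
        rw [List.map_append, List.map_map, List.map_map] at h2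
        simp only [Sum.elim_comp_inl, Sum.elim_comp_inr] at h2
        rw [h2]
        apply listDet_congr
        intro r hr c hc
        rcases r with r | r <;> rfl
      · rw [listDet_map]
        symm
        apply listDet_anti
        · intro i j hij
          exact Hh_zero hB (by simp; omega)
        · intro i j hij
          exact Hh_one hB (by simp; omega)
    · intro r hr c hc
      simp only [List.mem_map, List.mem_append, mem_sg] at hr hc
      obtain ⟨x, hx, rfl⟩ := hc
      rcases hr with ⟨y, hy, rfl⟩ | ⟨y, hy, rfl⟩
      · rfl
      · exact Hh_zero hB (by simp; omega)
  rw [hbig]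
  apply listDet_congr
  intro r hr c hc
  simp only [List.mem_map, List.mem_append, mem_sg] at hr hc
  simp only [List.map_append, List.map_map, List.sum_append, Function.comp_def]
  rcases hr with ⟨y, hy, rfl⟩ | ⟨y, hy, rfl⟩ <;> rcases hc with ⟨x, hx, rfl⟩ | ⟨x, hx, rfl⟩ <;>
    simp only [leftE, midE, bigE]
  · rw [sum_ite' F hF y hy, listsum_zero _ _ (fun x _ => by simp), listsum_zero _ _ (fun x _ => by simp),
      listsum_zero _ _ (fun x _ => by simp)]
    ring
  · rw [listsum_zero _ _ (fun x _ => by simp), listsum_zero _ _ (fun x _ => by simp),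
      listsum_zero _ _ (fun x _ => by simp), listsum_zero _ _ (fun x _ => by simp)]
    ring
  · rw [listsum_zero _ _ (fun x _ => by simp), zero_add, tau]
    have hs : ((sg (-(g : ℤ)) g).map (fun l => Hh (B1 ++ B2) (y + l) * (if x = l then 1 else 0))).sum =
        if 0 ≤ x then 0 else Hh (B1 ++ B2) (y + x) := by
      simp only [eq_comm (a := x)]
      rw [sum_ite_z]
      by_cases h0 : 0 ≤ x
      · rw [if_neg (by omega), if_pos h0]
      · rw [if_neg h0]
        split_ifs with h1
        · rw [mul_one]
        · rw [Hh_zero hB]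
          simp; omega
    rw [hs]
    by_cases h0 : 0 ≤ x
    · simp only [if_pos h0]
      rw [Hh_pos (by omega), List.map_append, List.sum_append, listsum_zero B2 (fun b => b ^ y * 0) (by simp)]
      rw [add_zero, add_zero, add_sub_cancel_right]
      refine listsum_congr fun b hb => ?_
      rw [zpow_add₀ (hB0 b (by simp [hb]))]
      ring
    · simp only [if_neg h0]
      rw [listsum_zero B1 (fun b => b ^ y * 0) (by simp), zero_add, add_comm, sub_eq_add_neg]
      congr 1
      rw [← neg_one_mul, ← listsum_mul]
      refine listsum_congr fun b hb => ?_
      rw [zpow_add₀ (hB0 b (by simp [hb]))]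
      ring
  · rw [listsum_zero _ _ (fun x _ => by simp), listsum_zero (sg _ _) _ (fun x _ => by simp)]
    rw [Hh_pos (by omega), List.map_append, List.sum_append, zero_add, add_zero]
    congr 1
    all_goals
      refine listsum_congr fun b hb => ?_
      rw [zpow_add₀ (hB0 b (by simp [hb]))]
      ring

theorem listDet_colop {α : Type*} (rows : List α) (c : ℤ) (N : ℕ) (hr : rows.length = N) (x : ℂ)
    (e : α → ℤ → ℂ) :
    listDet rows (sg c N) e =
      listDet rows (sg c N) (fun r k => e r k - if c < k then x * e r (k - 1) else 0) := by
  have h := listDet_mul (rows := rows) (ks := sg c N) (cols := sg c N) (by simp [hr]) rfl e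
    (fun k i => (if k = i then 1 else 0) + if k = i - 1 then -x else 0)
  rw [listDet_unitri, mul_one] at h
  · rw [h]
    apply listDet_congr
    intro r _ k hk
    rw [mem_sg] at hk
    simp only [mul_add]
    rw [listsum_add, sum_ite_z, sum_ite_z, if_pos (by omega)]
    by_cases h1 : c < k
    · rw [if_pos (by omega), if_pos h1]; ring
    · rw [if_neg (by omega), if_neg h1]; ring
  · intro i j hij hi
    rw [if_neg (by omega), if_neg (by omega), add_zero]
  · intro i hi
    rw [if_pos (by omega), if_neg (by omega), add_zero]

/-- twisted moments -/
noncomputable def th : List ℂ → (ℤ → ℂ) → ℤ → ℂ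
  | [], t => t
  | x :: F, t => th F (fun i => t (i + 1) - x * t i)

theorem Tdet_cons (x : ℂ) (F : List ℂ) (hx : x ≠ 0) (hF0 : ∀ y ∈ F, y ≠ 0) (t : ℤ → ℂ) (η : ℤ) (a : ℕ) :
    Tdet (x :: F) t η a = - x ^ (-η) * (F.map (fun y => y - x)).prod *
      Tdet F (fun i => t (i + 1) - x * t i) η a := by
  rw [Tdet, List.length_cons, show F.length + 1 + a = F.length + a + 1 by ring,
    listDet_colop _ _ _ (by simp) x, sg_succ, List.map_cons, List.cons_append]
  have hc : ∀ L : List ℤ, (-η) :: L = [-η] ++ L := fun L => rfl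
  have hd : ∀ L : List (ℂ ⊕ ℤ), (Sum.inl x) :: L = [Sum.inl x] ++ L := fun L => rfl
  rw [hc, hd, listDet_block (by simp) (by simp)]
  · rw [listDet_eq (n := 1) rfl rfl]
    simp only [Matrix.det_unique, Matrix.of_apply]
    simp only [Fin.default_eq_zero, Fin.val_zero, List.getElem_cons_zero, Sum.elim_inl, lt_irrefl,
      if_false, sub_zero]
    rw [mul_assoc]
    congr 1
    have h := listDet_scale (F.map Sum.inl ++ (sg 0 a).map Sum.inr) (sg (-η) (F.length + a))
      (Sum.elim (fun y => y - x) (fun _ => 1)) (fun _ => 1)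
      (fun r k => Sum.elim (fun x : ℂ => - x ^ k)
        (fun j : ℤ => (fun i => t (i + 1) - x * t i) (j + k)) r)
    rw [List.map_append, List.map_map, List.map_map, List.prod_append] at h
    simp only [Sum.elim_comp_inl, Sum.elim_comp_inr, List.map_const', List.prod_replicate, one_pow,
        mul_one] at h
    rw [Tdet, ← h, sg_eq_map (-η + 1) 1, listDet_map_right, add_sub_cancel_right]
    apply listDet_congr
    intro r hr k hk
    rw [mem_sg] at hk
    simp only [List.mem_append, List.mem_map] at hr
    rw [if_pos (by omega), add_sub_cancel_right]
    rcases hr with ⟨y, hy, rfl⟩ | ⟨y, hy, rfl⟩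
    · simp only [Sum.elim_inl]
      rw [zpow_add_one₀ (hF0 y hy)]
      ring
    · simp only [Sum.elim_inr]
      rw [show y + (k + 1) = y + k + 1 by ring]
      ring
  · intro r hr k hk
    rw [mem_sg] at hk
    simp only [List.mem_singleton] at hr
    subst hr
    rw [if_pos (by omega)]
    simp only [Sum.elim_inl]
    rw [zpow_sub_one₀ hx]
    field_simp
    ring

theorem Tdet_eq (F : List ℂ) (hF0 : ∀ y ∈ F, y ≠ 0) (t : ℤ → ℂ) (η : ℤ) (a : ℕ) :
    Tdet F t η a = (-1) ^ F.length * (F.map (fun x => x ^ (-η))).prod * Vd F * Hk (th F t) a (-η) := by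
  induction F generalizing t with
  | nil =>
    simp only [Tdet, List.length_nil, zero_add, List.map_nil, List.nil_append, th, pow_zero, one_mul,
      List.prod_nil]
    rw [Vd_eq, pairProd_nil, one_mul, listDet_map_left]
    rfl
  | cons x F ih =>
    rw [Tdet_cons x F (hF0 x (by simp)) (fun y hy => hF0 y (by simp [hy])),
      ih (fun y hy => hF0 y (by simp [hy]))]
    rw [Vd_eq (x :: F), pairProd_cons, ← Vd_eq, th, List.map_cons, List.prod_cons, List.length_cons, pow_succ]
    ring

theorem neg_one_pow_inv (k : ℕ) : ((-1 : ℂ) ^ k)⁻¹ = (-1) ^ k :=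
  inv_eq_of_mul_eq_one_left (neg_one_pow_sq k)

theorem strip_alg (Δ M W H Q X VB VF c1 c2 c3 c4 s3 cn cd cY : ℂ) (hQ : Q ≠ 0) (hX : X ≠ 0)
    (hVB : VB ≠ 0) (hVF : VF ≠ 0) (q4 : c4 * c4 = 1) (q1 : c1 * c1 = 1) (q2 : c2 * c2 = 1)
    (q3 : c3 * c3 = 1)
    (s2 : c2 * c1 * Δ * (1 / VF ^ 2 * X) = s3 * (cn / VF ^ 2 * Q⁻¹ * W))
    (s5 : M * cY = c4 / VB ^ 2 * W) (s6 : VB * c3 * M = c1 * X * VF * H * cd) :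
    Δ / (c4 * VB * VF / Q) = c2 * s3 * cn * cd * c3 * cY * H := by
  have hc : ∀ c : ℂ, c * c = 1 → c ≠ 0 := by rintro c h rfl; simp at h
  have n4 := hc _ q4
  have hM : M = c3 * (c1 * X * VF * H * cd) / VB := by
    rw [eq_div_iff hVB, ← s6]
    linear_combination -M * VB * q3
  have hW : W = M * cY * c4 * VB ^ 2 := by
    rw [s5]
    have : W = W * (c4 * c4) := by rw [q4, mul_one]
    field_simp
    linear_combination this
  have hD : Δ = c1 * c2 * s3 * cn * W / (Q * X) := by
    rw [eq_div_iff (mul_ne_zero hQ hX)]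
    have h2 : c2 * c1 * Δ * X * Q = s3 * cn * W := by
      field_simp at s2
      linear_combination s2
    linear_combination c1 * c2 * h2 - Δ * X * Q * q1 - c1 * c1 * Δ * X * Q * q2
  rw [hD, hW, hM]
  have : c4⁻¹ = c4 := inv_eq_of_mul_eq_one_left q4
  field_simp
  linear_combination c2 * s3 * cn * cd * c3 * cY * H * q1

theorem strip {F B1 B2 : List ℂ} (hF : F.Nodup) (hF0 : ∀ x ∈ F, x ≠ 0) (hB : (B1 ++ B2).Nodup)
    (hB0 : ∀ b ∈ B1 ++ B2, b ≠ 0) (hBF : ∀ b ∈ B1 ++ B2, b ∉ F)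
    (P1 P2 k1 k2 K1 e g d a : ℕ) (h1 : F.length + P1 = K1 + k1) (h1' : P1 = 0 ∨ k1 = 0)
    (h2 : F.length + P2 = e + d + k2) (h2' : P2 = 0 ∨ k2 = 0)
    (hK : K1 + e + d = F.length + B1.length + B2.length)
    (hgd : d = 0 ∨ g = 0) (hdK : d ≤ K1) (ha : a + F.length = K1 + e + g) :
    listDet (B1.map RK.b1 ++ (B2.map RK.b2 ++ ((sg 1 k1).map RK.r1 ++ (sg 1 k2).map RK.r2)))
      (F.map CK.f ++ ((sg 1 P1).map CK.t1 ++ (sg 1 P2).map CK.t2)) (sE (e + g)) /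
      Dden id (B1 ++ B2) F =
    (-1) ^ (P1 * F.length + (k1 * (e + d) + k1 * (k1 - 1) / 2 + k2 * (k2 - 1) / 2) +
      F.length * (F.length - 1) / 2 + d * (d - 1) / 2 + g * (g - 1) / 2 + (K1 * (e + g) + e)) *
      Hk (th F (tau B1 B2)) a (-(e + g)) := by
  have s1 := strip_s1 hF (B1.map RK.b1 ++ (B2.map RK.b2 ++ ((sg 1 k1).map RK.r1 ++ (sg 1 k2).map RK.r2)))
    (e + g) P1 P2 (by
      intro r hr
      simp only [List.mem_append, List.mem_map] at hr
      rcases hr with ⟨x, _, rfl⟩ | ⟨x, _, rfl⟩ | ⟨x, _, rfl⟩ | ⟨x, _, rfl⟩ <;> simp) (by simp; omega)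
  have s2 := strip_s2 (B1 := B1) (B2 := B2) hF hF0 (fun b hb => hBF b (by simp [hb])) 
    (fun b hb => hBF b (by simp [hb])) (fun b hb => hB0 b (by simp [hb])) (e + g) P1 P2 k1 k2 (by omega)
  have s3 := strip_s3 (B1 := B1) (B2 := B2) hF (e + g) P1 P2 k1 k2 K1 (e + d) h1 h1' h2 h2' (by omega)
  have s4 := strip_s3b (F := F) (B1 := B1) (B2 := B2) (e + g) K1 (e + d)
  have s5 := mid_Y (F := F) (B1 := B1) (B2 := B2) K1 e g d hgd hdK hK
  have s6 := left_mid hF hB hB0 K1 e g d a hgd ha hK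
  have s7 := Tdet_eq F hF0 (tau B1 B2) (e + g) a
  have p1 := prod_wt hF
  have p2 := prod_wt hB
  have pD := Dden_eq (B1 ++ B2) F
  have hQ : ((B1 ++ B2).map (Qp F)).prod ≠ 0 := by
    apply List.prod_ne_zero
    simp only [List.mem_map, not_exists, not_and]
    exact fun b hb => Qp_ne (hBF b hb)
  have hX : (F.map (fun x => x ^ (-((e : ℤ) + g)))).prod ≠ 0 := by
    apply List.prod_ne_zero
    simp only [List.mem_map, not_exists, not_and]
    exact fun b hb => zpow_ne_zero _ (hF0 b hb)
  have hVF := Vd_ne hF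
  have hVB := Vd_ne hB
  rw [p2] at s5
  rw [p1] at s4
  rw [s7] at s6
  rw [s3, s4, s1] at s2
  rw [pD]
  generalize listDet (B1.map RK.b1 ++ (B2.map RK.b2 ++ ((sg 1 k1).map RK.r1 ++ (sg 1 k2).map RK.r2)))
      (F.map CK.f ++ ((sg 1 P1).map CK.t1 ++ (sg 1 P2).map CK.t2)) (sE (e + g)) = Δ' at *
  generalize listDet (F.map RK.f ++ (B1.map RK.b1 ++ B2.map RK.b2) ++ (sg (-(g : ℤ)) g).map RK.gp)
      ((sg (-(e + g : ℤ)) (e + g + K1)).map CK.ta ++ (sg 0 d).map CK.u) (midE (B1 ++ B2)) = M at *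
  generalize listDet (F.map RK.f ++ (B1.map RK.b1 ++ B2.map RK.b2))
        ((sg 0 K1).map CK.m1 ++ (sg 0 (e + d)).map CK.m2) (qE (e + g)) = W at *
  generalize Hk (th F (tau B1 B2)) a (-(e + g)) = H at *
  generalize ((B1 ++ B2).map (Qp F)).prod = Q at *
  generalize (F.map (fun x => x ^ (-((e : ℤ) + g)))).prod = X at *
  generalize Vd (B1 ++ B2) = VB at *
  generalize Vd F = VF at *
  clear s1 s3 s4 s7 p1 p2 pD
  have key := strip_alg Δ' M W H Q X VB VF _ _ _ _ _ _ _ _ hQ hX hVB hVF (neg_one_pow_sq _)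
    (neg_one_pow_sq F.length) (neg_one_pow_sq (P1 * F.length)) (neg_one_pow_sq (g * (g - 1) / 2))
    (by rw [← pow_add]; exact s2) s5 s6
  rw [key]
  simp only [pow_add]

theorem wt_cons {b x : ℂ} {B : List ℂ} (hx : x ≠ b) (hb : b ∉ B) :
    wt B x = wt (b :: B) x * (x - b) := by
  have h1 : x - b ≠ 0 := sub_ne_zero.2 hx
  simp only [wt, Lagrange.nodalWeight, List.toFinset_cons]
  rw [Finset.erase_insert_of_ne (Ne.symm hx), Finset.prod_insert (by simp [hb])]
  simp only [id]
  field_simp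

theorem wt_perm {X Y : List ℂ} (h : X.Perm Y) : wt X = wt Y := by
  funext x
  rw [wt, wt, List.toFinset_eq_of_perm _ _ h]

theorem Hh_perm {X Y : List ℂ} (h : X.Perm Y) (i : ℤ) : Hh X i = Hh Y i := by
  rw [Hh, Hh, wt_perm h, (h.map _).sum_eq]
  have : X = [] ↔ Y = [] := ⟨fun hx => by subst hx; exact h.nil_eq.symm, fun hx => by subst hx; exact h.eq_nil⟩
  simp only [this]

theorem tau_perm {X Y : List ℂ} (h : X.Perm Y) (B2 : List ℂ) : tau X B2 = tau Y B2 := by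
  funext i
  rw [tau, tau, wt_perm (h.append_right B2), Hh_perm (h.append_right B2)]

theorem Hh_cons {b : ℂ} {B : List ℂ} (hB : (b :: B).Nodup) (hB0 : ∀ x ∈ b :: B, x ≠ 0) (i : ℤ) :
    Hh B i = Hh (b :: B) (i + 1) - b * Hh (b :: B) i := by
  have hn := List.nodup_cons.1 hB
  by_cases hi : 0 ≤ i
  · rw [Hh_pos hi, Hh_pos hi, Hh_pos (by omega), ← listsum_mul, ← listsum_sub]
    rw [List.map_cons, List.sum_cons, zpow_add_one₀ (hB0 b (by simp))]
    rw [show b ^ i * b * wt (b :: B) b - b * (b ^ i * wt (b :: B) b) = 0 by ring, zero_add]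
    refine listsum_congr fun x hx => ?_
    have hxb : x ≠ b := by rintro rfl; exact hn.1 hx
    rw [wt_cons hxb hn.1, zpow_add_one₀ (hB0 x (by simp [hx]))]
    ring
  · by_cases h : i < B.length - 1
    · rw [Hh_zero hn.2 h, Hh_zero hB (by simp; omega), Hh_zero hB (by simp; omega)]; ring
    · rw [Hh_one hn.2 (by omega), Hh_one hB (by simp; omega), Hh_zero hB (by simp; omega)]; ring

theorem tau_cons {b : ℂ} {B1 B2 : List ℂ} (hB : (b :: (B1 ++ B2)).Nodup)
    (hB0 : ∀ x ∈ b :: (B1 ++ B2), x ≠ 0) (i : ℤ) :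
    tau B1 B2 i = tau (b :: B1) B2 (i + 1) - b * tau (b :: B1) B2 i := by
  have hn := List.nodup_cons.1 hB
  rw [tau, tau, tau, List.cons_append, Hh_cons hB hB0]
  have : (B2.map (fun x => x ^ i * wt (B1 ++ B2) x)).sum =
      (B2.map (fun x => x ^ (i + 1) * wt (b :: (B1 ++ B2)) x)).sum -
      b * (B2.map (fun x => x ^ i * wt (b :: (B1 ++ B2)) x)).sum := by
    rw [← listsum_mul, ← listsum_sub]
    refine listsum_congr fun x hx => ?_
    have hxb : x ≠ b := by rintro rfl; exact hn.1 (by simp [hx])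
    rw [wt_cons hxb hn.1, zpow_add_one₀ (hB0 x (by simp [hx]))]
    ring
  rw [this]
  ring

theorem th_lin (F : List ℂ) (t : ℤ → ℂ) (b : ℂ) (i : ℤ) :
    th F (fun i => t (i + 1) - b * t i) i = th F t (i + 1) - b * th F t i := by
  induction F generalizing t with
  | nil => rfl
  | cons x F ih =>
    rw [th, th, ← ih]
    congr 1
    funext k
    ring

theorem th_perm {F G : List ℂ} (h : F.Perm G) (t : ℤ → ℂ) : th F t = th G t := by
  induction h generalizing t with
  | nil => rfl
  | cons x _ ih => rw [th, th, ih]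
  | swap x y l =>
    simp only [th]
    congr 1
    funext k
    ring
  | trans _ _ ih1 ih2 => rw [ih1, ih2]

theorem th_cons (x : ℂ) (F : List ℂ) (t : ℤ → ℂ) (i : ℤ) :
    th (x :: F) t i = th F t (i + 1) - x * th F t i := by
  rw [th, th_lin]

theorem th_exp (F L : List ℂ) (u : ℂ → ℂ) (hL : ∀ b ∈ L, b ≠ 0) (t : ℤ → ℂ) (i : ℤ)
    (h : ∀ k : ℕ, k ≤ F.length → t (i + k) = (L.map (fun b => u b * b ^ (i + k))).sum) :
    th F t i = (L.map (fun b => u b * b ^ i * Qp F b)).sum := by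
  induction F generalizing i with
  | nil =>
    have := h 0 (by simp)
    simp only [Nat.cast_zero, add_zero] at this
    simp [th, Qp, this]
  | cons x F ih =>
    rw [th_cons, ih i (fun k hk => h k (by simp; omega)), ih (i + 1), ← listsum_mul, ← listsum_sub]
    · refine listsum_congr fun b hb => ?_
      simp only [Qp, List.map_cons, List.prod_cons]
      rw [zpow_add_one₀ (hL b hb)]
      ring
    · intro k hk
      have := h (k + 1) (by simp; omega)
      push_cast at this
      rw [show i + 1 + (k : ℤ) = i + (k + 1) by ring]
      exact this

theorem Tdet_zero {F B1 B2 : List ℂ} (hF : F.Nodup) (hB : (B1 ++ B2).Nodup)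
    (hB0 : ∀ b ∈ B1 ++ B2, b ≠ 0) (η : ℤ) (a : ℕ) (lo : ℤ) (q : ℕ)
    (hq : B1.length + B2.length + q < a) (hlo : lo + q ≤ 0)
    (hk : ∀ k, -η ≤ k → k < -η + F.length + a → k < 0 → 
      (lo ≤ k ∧ k < lo + q) ∨ k < B1.length + B2.length - a) :
    Tdet F (tau B1 B2) η a = 0 := by
  classical
  have h0 := listDet_rank (rows := F.map RK.f ++ (sg 0 a).map RK.j)
    (ks := F.map RK.f ++ (B1.map RK.b1 ++ (B2.map RK.b2 ++ (sg lo q).map RK.gp)))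
    (cols := (sg (-η) (F.length + a)).map CK.ta) (by simp; omega) (leftE (B1 ++ B2)) (midE (B1 ++ B2))
  have h2 := listDet_map_left (Sum.elim RK.f RK.j) (F.map Sum.inl ++ (sg 0 a).map Sum.inr)
          (sg (-η) (F.length + a)) (fun r c => bigE B1 B2 r (CK.ta c))
  rw [List.map_append, List.map_map, List.map_map] at h2
  simp only [Sum.elim_comp_inl, Sum.elim_comp_inr] at h2
  have h3 : Tdet F (tau B1 B2) η a = listDet (F.map RK.f ++ (sg 0 a).map RK.j)
      ((sg (-η) (F.length + a)).map CK.ta) (bigE B1 B2) := by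
    rw [listDet_map_right, h2, Tdet]
    apply listDet_congr
    intro r hr c hc
    rcases r with r | r <;> rfl
  rw [h3, ← h0]
  apply listDet_congr
  intro r hr c hc
  simp only [List.mem_map, List.mem_append, mem_sg] at hr hc
  simp only [List.map_append, List.map_map, List.sum_append, Function.comp_def]
  obtain ⟨x, hx, rfl⟩ := hc
  have hkx := hk x hx.1 (by push_cast at hx; omega)
  symm
  rcases hr with ⟨y, hy, rfl⟩ | ⟨y, hy, rfl⟩ <;> simp only [leftE, midE, bigE]
  · rw [sum_ite' F hF y hy, listsum_zero _ _ (fun x _ => by simp), listsum_zero _ _ (fun x _ => by simp),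
      listsum_zero _ _ (fun x _ => by simp)]
    ring
  · rw [listsum_zero _ _ (fun x _ => by simp), zero_add, tau]
    have hs : ((sg lo q).map (fun l => Hh (B1 ++ B2) (y + l) * (if x = l then 1 else 0))).sum =
        if 0 ≤ x then 0 else Hh (B1 ++ B2) (y + x) := by
      simp only [eq_comm (a := x)]
      rw [sum_ite_z]
      by_cases h0 : 0 ≤ x
      · rw [if_neg (by omega), if_pos h0]
      · rw [if_neg h0]
        split_ifs with h1
        · rw [mul_one]
        · rw [Hh_zero hB]
          simp; omega
    rw [hs]
    by_cases h0 : 0 ≤ x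
    · simp only [if_pos h0]
      rw [Hh_pos (by omega), List.map_append, List.sum_append, listsum_zero B2 (fun b => b ^ y * 0) (by simp)]
      rw [add_zero, add_zero, add_sub_cancel_right]
      refine listsum_congr fun b hb => ?_
      rw [zpow_add₀ (hB0 b (by simp [hb]))]
      ring
    · simp only [if_neg h0]
      rw [listsum_zero B1 (fun b => b ^ y * 0) (by simp), zero_add, add_comm, sub_eq_add_neg]
      congr 1
      rw [← neg_one_mul, ← listsum_mul]
      refine listsum_congr fun b hb => ?_
      rw [zpow_add₀ (hB0 b (by simp [hb]))]
      ring

theorem Hk_eq_zero {F B1 B2 : List ℂ} (hF : F.Nodup) (hF0 : ∀ y ∈ F, y ≠ 0) (hB : (B1 ++ B2).Nodup)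
    (hB0 : ∀ b ∈ B1 ++ B2, b ≠ 0) (c : ℤ) (a : ℕ) (lo : ℤ) (q : ℕ)
    (hq : B1.length + B2.length + q < a) (hlo : lo + q ≤ 0)
    (hk : ∀ k, c ≤ k → k < c + F.length + a → k < 0 → 
      (lo ≤ k ∧ k < lo + q) ∨ k < B1.length + B2.length - a) :
    Hk (th F (tau B1 B2)) a c = 0 := by
  have h := Tdet_zero hF hB hB0 (-c) a lo q hq hlo (by simpa using hk)
  rw [Tdet_eq F hF0, neg_neg] at h
  have hX : (F.map (fun x => x ^ c)).prod ≠ 0 := by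
    apply List.prod_ne_zero
    simp only [List.mem_map, not_exists, not_and]
    exact fun b hb => zpow_ne_zero _ (hF0 b hb)
  have := Vd_ne hF
  simpa [hX, this] using h

theorem prod_sgn (k : ℕ) :
    ((sg 1 k).map (fun r : ℤ => (-1 : ℂ) ^ (r - 1))).prod = (-1) ^ (k * (k - 1) / 2) := by
  induction k with
  | zero => simp
  | succ k ih =>
    rw [← sg_append 1 (1 + k) k 1 rfl, List.map_append, List.prod_append, ih]
    have : sg (1 + k) 1 = [(1 + k : ℤ)] := by simp [sg]
    rw [this]
    simp only [List.map_cons, List.map_nil, List.prod_cons, List.prod_nil, mul_one, add_sub_cancel_left,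
      zpow_natCast, ← pow_add]
    congr 1
    rw [Nat.triangle_succ]

/-- key maps -/
def rho (η : ℤ) : RK → ℂ ⊕ (ℂ ⊕ ℤ)
  | RK.b1 b => Sum.inl b
  | RK.b2 b => Sum.inr (Sum.inl b)
  | RK.r1 r => Sum.inr (Sum.inr r)
  | RK.r2 r => Sum.inr (Sum.inr (r + η))
  | RK.f x => Sum.inl x
  | RK.gp r => Sum.inr (Sum.inr r)
  | RK.j r => Sum.inr (Sum.inr r)

/-- key maps -/
def kap (η : ℤ) : CK → ℂ ⊕ (ℤ ⊕ (ℤ ⊕ ℤ))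
  | CK.f x => Sum.inl x
  | CK.t1 j => Sum.inr (Sum.inr (Sum.inl j))
  | CK.t2 j => Sum.inr (Sum.inr (Sum.inr (j - η)))
  | CK.a x => Sum.inl x
  | CK.m1 j => Sum.inr (Sum.inl j)
  | CK.m2 j => Sum.inr (Sum.inl j)
  | CK.gp j => Sum.inr (Sum.inl j)
  | CK.ta j => Sum.inr (Sum.inl j)
  | CK.u j => Sum.inr (Sum.inl j)

theorem Delta_strip (B1 B2 F : List ℂ) (k1 k2 P1 P2 η : ℕ) :
    Delta id B1 B2 F (sg 1 k1 ++ sg (η + 1) k2) [] (sg 1 P1) (sg (1 - η) P2) η =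
    (-1) ^ (η * (B2.length + P2 + k2) + (k1 * (k1 - 1) / 2 + k2 * (k2 - 1) / 2)) *
    listDet (B1.map RK.b1 ++ (B2.map RK.b2 ++ ((sg 1 k1).map RK.r1 ++ (sg 1 k2).map RK.r2)))
      (F.map CK.f ++ ((sg 1 P1).map CK.t1 ++ (sg 1 P2).map CK.t2)) (sE η) := by
  let uu : RK → ℂ := fun r => match r with
    | RK.b2 _ => (-1) ^ η
    | RK.r1 r => (-1) ^ (r - 1)
    | RK.r2 r => (-1) ^ η * (-1) ^ (r - 1)
    | _ => 1
  let vv : CK → ℂ := fun r => match r with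
    | CK.t2 _ => (-1) ^ η
    | _ => 1
  have h := listDet_scale (B1.map RK.b1 ++ (B2.map RK.b2 ++ ((sg 1 k1).map RK.r1 ++ (sg 1 k2).map RK.r2)))
      (F.map CK.f ++ ((sg 1 P1).map CK.t1 ++ (sg 1 P2).map CK.t2)) uu vv (sE η)
  have hu : ((B1.map RK.b1 ++ (B2.map RK.b2 ++ ((sg 1 k1).map RK.r1 ++ (sg 1 k2).map RK.r2))).map uu).prod =
      (-1) ^ (η * (B2.length + k2) + (k1 * (k1 - 1) / 2 + k2 * (k2 - 1) / 2)) := by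
    simp only [List.map_append, List.map_map, List.prod_append, Function.comp_def, uu,
      List.map_const', List.prod_replicate, one_pow, one_mul, prod_sgn, List.prod_map_mul, sg_length]
    simp only [pow_add, pow_mul, mul_add]
    ring
  have hv : ((F.map CK.f ++ ((sg 1 P1).map CK.t1 ++ (sg 1 P2).map CK.t2)).map vv).prod =
      (-1) ^ (η * P2) := by
    simp only [List.map_append, List.map_map, List.prod_append, Function.comp_def, vv,
      List.map_const', List.prod_replicate, one_pow, one_mul, sg_length]
    rw [pow_mul]
  rw [hu, hv, ← pow_add] at h
  rw [show η * (B2.length + P2 + k2) + (k1 * (k1 - 1) / 2 + k2 * (k2 - 1) / 2) =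
    η * (B2.length + k2) + (k1 * (k1 - 1) / 2 + k2 * (k2 - 1) / 2) + η * P2 by ring, ← h]
  rw [Delta]
  have hm := listDet_map (B1.map RK.b1 ++ (B2.map RK.b2 ++ ((sg 1 k1).map RK.r1 ++ (sg 1 k2).map RK.r2)))
      (F.map CK.f ++ ((sg 1 P1).map CK.t1 ++ (sg 1 P2).map CK.t2)) (rho η) (kap η)
  simp only [List.map_append, List.map_map, Function.comp_def, rho, kap] at hm
  rw [sg_eq_map (η + 1 : ℤ) η, sg_eq_map (1 - η : ℤ) (-η)]
  rw [show (η + 1 : ℤ) - η = 1 by ring, show (1 - η : ℤ) - -η = 1 by ring]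
  simp only [List.map_append, List.map_map, Function.comp_def, List.map_nil, List.append_nil,
    List.append_assoc, ← sub_eq_add_neg]
  rw [hm]
  apply listDet_congr
  intro r hr c hc
  simp only [List.mem_append, List.mem_map] at hr hc
  rcases hr with ⟨b, hb, rfl⟩ | ⟨b, hb, rfl⟩ | ⟨b, hb, rfl⟩ | ⟨b, hb, rfl⟩ <;>
  rcases hc with ⟨x, hx, rfl⟩ | ⟨x, hx, rfl⟩ | ⟨x, hx, rfl⟩ <;>
  simp only [rho, kap, uu, vv, sE, id, one_mul, mul_one, mul_zero]
  · rw [neg_div, zpow_natCast, zpow_natCast, neg_pow]; ring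
  · rw [neg_one_pow_sq, one_mul]; congr 1; ring
  · rw [← mul_zpow, neg_one_mul]
  · rw [← zpow_natCast, ← zpow_add₀ (by norm_num), show b + (η : ℤ) - 1 = b - 1 + η by ring, add_comm (η : ℤ),
      ← mul_zpow, neg_one_mul]

/-- key maps -/
def rhw : RK → ℂ ⊕ ℤ
  | RK.b1 b => Sum.inl b
  | RK.b2 b => Sum.inl b
  | RK.r1 r => Sum.inr r
  | RK.r2 r => Sum.inr r
  | RK.f x => Sum.inl x
  | RK.gp r => Sum.inr r
  | RK.j r => Sum.inr r

theorem Delta_wing (B1 B2 F : List ℂ) (k p a : ℕ) (c : ℤ) (w : ℂ → ℂ) (right : Bool)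
    (h1 : ∀ b ∈ B1, w b = if right then 1 else 0) (h2 : ∀ b ∈ B2, w b = if right then 0 else 1) :
    Delta id B1 B2 F (sg 1 k) (sg 1 p) (if right then sg (c + 1) a else [])
      (if right then [] else sg (c + 1) a) 0 =
    (-1) ^ (k * (k - 1) / 2) *
    listDet ((B1 ++ B2).map Sum.inl ++ (sg 1 k).map Sum.inr)
      (F.map Sum.inl ++ ((sg 1 p).map (fun j => Sum.inr (Sum.inl j)) ++
        (sg (c + 1) a).map (fun j => Sum.inr (Sum.inr j)))) (wE w) := by
  have hs := listDet_scale ((B1 ++ B2).map Sum.inl ++ (sg 1 k).map Sum.inr)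
      (F.map Sum.inl ++ ((sg 1 p).map (fun j => Sum.inr (Sum.inl j)) ++
        (sg (c + 1) a).map (fun j => Sum.inr (Sum.inr j))))
      (Sum.elim (fun _ => 1) (fun r => (-1) ^ (r - 1))) (fun _ => 1) (wE w)
  have hu : (((B1 ++ B2).map Sum.inl ++ (sg 1 k).map Sum.inr).map
      (Sum.elim (fun _ : ℂ => (1 : ℂ)) (fun r : ℤ => (-1) ^ (r - 1)))).prod = (-1) ^ (k * (k - 1) / 2) := by
    rw [List.map_append, List.map_map, List.map_map, List.prod_append]
    simp only [Sum.elim_comp_inl, Sum.elim_comp_inr, List.map_const', List.prod_replicate, one_pow,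
        mul_one, one_mul, prod_sgn]
  rw [hu] at hs
  simp only [List.map_const', List.prod_replicate, one_pow, mul_one] at hs
  rw [← hs]
  have hm := listDet_map_left rhw (B1.map RK.b1 ++ (B2.map RK.b2 ++ (sg 1 k).map RK.r1))
    (F.map Sum.inl ++ ((sg 1 p).map (fun j => Sum.inr (Sum.inl j)) ++
        (sg (c + 1) a).map (fun j => Sum.inr (Sum.inr j))))
    (fun r c => (Sum.elim (fun _ => 1) (fun r => (-1) ^ (r - 1)) r) * wE w r c)
  have hd := listDet_map_left (β := ℂ ⊕ (ℤ ⊕ (ℤ ⊕ ℤ))) (rho 0) (B1.map RK.b1 ++ (B2.map RK.b2 ++ (sg 1 k).map RK.r1))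
  simp only [List.map_append, List.map_map, Function.comp_def, rho, rhw] at hm hd
  rw [List.map_append, List.append_assoc, hm, Delta]
  simp only [List.append_assoc]
  rw [hd]
  have hc := listDet_map_right 
    (fun x : ℂ ⊕ (ℤ ⊕ ℤ) => Sum.elim (fun x => Sum.inl x) (fun y => Sum.elim (fun j => Sum.inr (Sum.inl j))
      (fun j => if right then Sum.inr (Sum.inr (Sum.inl j)) else Sum.inr (Sum.inr (Sum.inr j))) y) x
      : ℂ ⊕ (ℤ ⊕ ℤ) → ℂ ⊕ (ℤ ⊕ (ℤ ⊕ ℤ))) 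
    (B1.map RK.b1 ++ (B2.map RK.b2 ++ (sg 1 k).map RK.r1))
    (F.map Sum.inl ++ ((sg 1 p).map (fun j => Sum.inr (Sum.inl j)) ++
        (sg (c + 1) a).map (fun j => Sum.inr (Sum.inr j))))
  simp only [List.map_append, List.map_map, Function.comp_def, Sum.elim_inl, Sum.elim_inr] at hc
  have hcols : (if right then sg (c + 1) a else []).map
        (fun j => (Sum.inr (Sum.inr (Sum.inl j)) : ℂ ⊕ (ℤ ⊕ (ℤ ⊕ ℤ)))) ++
      (if right then [] else sg (c + 1) a).map
        (fun j => (Sum.inr (Sum.inr (Sum.inr j)) : ℂ ⊕ (ℤ ⊕ (ℤ ⊕ ℤ)))) =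
      (sg (c + 1) a).map (fun j => if right then Sum.inr (Sum.inr (Sum.inl j))
        else Sum.inr (Sum.inr (Sum.inr j))) := by
    cases right <;> simp
  rw [hcols, hc]
  apply listDet_congr
  intro r hr c hc
  simp only [List.mem_append, List.mem_map] at hr hc
  rcases hr with ⟨b, hb, rfl⟩ | ⟨b, hb, rfl⟩ | ⟨b, hb, rfl⟩ <;>
  rcases hc with ⟨x, hx, rfl⟩ | ⟨x, hx, rfl⟩ | ⟨x, hx, rfl⟩ <;> cases right <;>
  simp_all [rho, rhw, wE]
  · rw [← mul_zpow, neg_one_mul]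
  · rw [← mul_zpow, neg_one_mul]

theorem Delta_map {ι : Type*} (z : ι → ℂ) (B1 B2 F : List ι) (R S T1 T2 : List ℤ) (η : ℤ) :
    Delta z B1 B2 F R S T1 T2 η = Delta id (B1.map z) (B2.map z) (F.map z) R S T1 T2 η := by
  have hm := listDet_map ((B1.map (Sum.inl : ι → ι ⊕ (ι ⊕ ℤ)) ++
      B2.map (fun b => (Sum.inr (Sum.inl b) : ι ⊕ (ι ⊕ ℤ))) ++
      R.map (fun r => (Sum.inr (Sum.inr r) : ι ⊕ (ι ⊕ ℤ)))))
    ((F.map (Sum.inl : ι → ι ⊕ (ℤ ⊕ (ℤ ⊕ ℤ))) ++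
      S.map (fun j => (Sum.inr (Sum.inl j) : ι ⊕ (ℤ ⊕ (ℤ ⊕ ℤ)))) ++
      T1.map (fun j => (Sum.inr (Sum.inr (Sum.inl j)) : ι ⊕ (ℤ ⊕ (ℤ ⊕ ℤ)))) ++
      T2.map (fun j => (Sum.inr (Sum.inr (Sum.inr j)) : ι ⊕ (ℤ ⊕ (ℤ ⊕ ℤ))))))
    (Sum.map z (Sum.map z id)) (Sum.map z id)
  simp only [List.map_append, List.map_map, Function.comp_def, Sum.map_inl, Sum.map_inr, id] at hm
  rw [Delta, Delta]
  simp only [List.map_map, Function.comp_def]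
  rw [hm]
  apply listDet_congr
  intro r hr c hc
  rcases r with r | r | r <;> rcases c with c | c | c | c <;> rfl

theorem pairProd_map {ι : Type*} (z : ι → ℂ) (L : List ι) (g : ℂ → ℂ → ℂ) :
    pairProd (L.map z) g = pairProd L (fun x y => g (z x) (z y)) := by
  induction L with
  | nil => rw [List.map_nil, pairProd_nil, pairProd_nil]
  | cons x L ih => rw [List.map_cons, pairProd_cons, pairProd_cons, ih, List.map_map]; rfl

theorem Dden_map {ι : Type*} (z : ι → ℂ) (B F : List ι) :
    Dden z B F = Dden id (B.map z) (F.map z) := by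
  simp only [Dden, pairProd_map, prodLL, List.map_map, id, Function.comp_def]

theorem IsChi_map {ι : Type*} {z : ι → ℂ} {B1 B2 F1 F2 : List ι} {χ : ℤ → ℤ → ℂ}
    (h : IsChi z B1 B2 F1 F2 χ) : IsChi id (B1.map z) (B2.map z) (F1.map z) (F2.map z) χ := by
  simp only [IsChi, Delta_map z, Dden_map z, List.map_append] at h
  simpa only [IsChi, List.length_map] using h

/-- triangular number -/
def tri (k : ℕ) : ℕ := k * (k - 1) / 2

theorem tri_succ (k : ℕ) : tri (k + 1) = tri k + k := by
  rw [tri, tri, Nat.triangle_succ]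

theorem tri_add (x y : ℕ) : tri (x + y) = tri x + tri y + x * y := by
  induction y with
  | zero => simp [tri]
  | succ y ih => rw [← add_assoc, tri_succ, tri_succ, ih]; ring

theorem tri_int (x : ℕ) : ((x : ℤ) * (x - 1) / 2) = (tri x : ℤ) := by
  rw [tri]
  cases x with
  | zero => simp
  | succ x => push_cast; simp

theorem zpow_par (x : ℤ) (y : ℕ) (h : (x : ZMod 2) = (y : ZMod 2)) : (-1 : ℂ) ^ x = (-1) ^ y := by
  have h1 : ((x : ℤ) : ZMod 2) = ((y : ℤ) : ZMod 2) := by rw [h]; simp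
  rw [ZMod.intCast_eq_intCast_iff_dvd_sub] at h1
  obtain ⟨k, hk⟩ := h1
  have : x = y + 2 * (-k) := by push_cast at hk; linarith
  rw [this, zpow_add₀ (by norm_num), zpow_mul]
  simp

theorem npow_par (x y : ℕ) (h : (x : ZMod 2) = (y : ZMod 2)) : (-1 : ℂ) ^ x = (-1) ^ y := by
  rw [← zpow_par x y (by simpa using h), zpow_natCast]

theorem zmod_two_sub (x y : ZMod 2) : x - y = x + y := by
  revert x y; decide

theorem zmod_two_self (y : ZMod 2) : y + y = 0 := by
  revert y; decide

theorem zmod_two_sq (y : ZMod 2) : y * y = y := by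
  revert y; decide

theorem zmod_two_neg (y : ZMod 2) : -y = y := by
  revert y; decide

theorem strip_par1 (m1 m2 n1 n2 p1 e g X tm tn td tg ta q : ZMod 2)
    (ht : tm + td + tg + ta + g = (m1 + m2 + 1) * (p1 + e + g))
    (hq : q = m1 + m2 + n1 + n2 + p1) :
    (p1 * (p1 + m1 + n1 + n2) + (tm + tn)) + ((e + g) * (m2 + q) + X) +
      (p1 * (n1 + n2) + (0 * (m1 + m2 + p1) + X) + tn + td + tg + ((n1 + n2 + p1) * (e + g) + e)) =
      (p1 + e + g) * m2 + ta := by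
  have ht' : ta = (m1 + m2 + 1) * (p1 + e + g) + tm + td + tg + g := by
    rw [← ht, show tm + td + tg + ta + g + tm + td + tg + g = ta + ((tm + tm) + (td + td) + (tg + tg) + (g + g)) by ring]
    simp [zmod_two_self]
  subst ht' hq
  have hp : p1 * p1 = p1 := zmod_two_sq _
  rw [← sub_eq_zero, zmod_two_sub]
  ring_nf
  reduce_mod_char
  rw [pow_two, hp]; exact zmod_two_self p1

theorem strip_par2 (m1 m2 n1 n2 p1 e g X tm tn td tg ta q D : ZMod 2)
    (ht : tm + td + tg + ta + g = (m1 + m2 + 1) * (p1 + e + g))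
    (hq : q = m1 + m2 + n1 + n2 + p1) (hD : D = m1 + m2 + p1) :
    (p1 * m2 + (tm + tn)) + ((e + g) * (m2 + q) + X) +
      (0 * (n1 + n2) + (p1 * D + X) + tn + td + tg + ((n1 + n2 + p1) * (e + g) + e)) =
      (p1 + e + g) * m2 + ta := by
  have ht' : ta = (m1 + m2 + 1) * (p1 + e + g) + tm + td + tg + g := by
    rw [← ht, show tm + td + tg + ta + g + tm + td + tg + g = ta + ((tm + tm) + (td + td) + (tg + tg) + (g + g)) by ring]
    simp [zmod_two_self]
  subst ht' hq hD
  have hp : p1 * p1 = p1 := zmod_two_sq _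
  rw [← sub_eq_zero, zmod_two_sub]
  ring_nf
  reduce_mod_char
  rw [pow_two, hp]; exact zmod_two_self p1

theorem wing_val {F B1 B2 : List ℂ} (hF : F.Nodup) (hB : (B1 ++ B2).Nodup)
    (hB0 : ∀ b ∈ B1 ++ B2, b ≠ 0) (hBF : ∀ b ∈ B1 ++ B2, b ∉ F) (right : Bool)
    (D p k a : ℕ) (c : ℤ) (hn : F.length + p = D + k) (hpk : p = 0 ∨ k = 0)
    (hm : B1.length + B2.length = D + a)
    (hr : right = true → 0 ≤ c)
    (hl : right = false → c + 2 * a + F.length ≤ B1.length + B2.length) :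
    Delta id B1 B2 F (sg 1 k) (sg 1 p) (if right then sg (c + 1) a else [])
      (if right then [] else sg (c + 1) a) 0 / Dden id (B1 ++ B2) F =
    (-1) ^ (tri k + (k * a + tri k + D * a + tri D + tri F.length) + (if right then 0 else a)) *
      Hk (th F (tau B1 B2)) a c := by
  classical
  let w : ℂ → ℂ := fun b => if right then (if b ∈ B1 then 1 else 0) else (if b ∈ B1 then 0 else 1)
  have hd : ∀ b ∈ B2, b ∉ B1 := by
    intro b hb hb1
    rw [List.nodup_append] at hB
    exact hB.2.2 b hb1 b hb rfl
  have hw1 : ∀ b ∈ B1, w b = if right then 1 else 0 := by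
    intro b hb; simp only [w, if_pos hb]
  have hw2 : ∀ b ∈ B2, w b = if right then 0 else 1 := by
    intro b hb; simp only [w, if_neg (hd b hb)]
  rw [Delta_wing B1 B2 F k p a c w right hw1 hw2, mul_div_assoc,
    wing hB hF hBF hB0 w D p k a c hn hpk (by simpa using hm), ← mul_assoc,
    pow_add (-1 : ℂ) _ (if right then 0 else a), pow_add (-1 : ℂ) (tri k)]
  simp only [← tri.eq_1]
  rw [mul_assoc _ _ (Hk (th F (tau B1 B2)) a c)]
  congr 1
  have hs := listDet_scale (sg 0 a) (sg c a) (fun _ => if right then (1 : ℂ) else -1) (fun _ => 1)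
    (fun i k => th F (tau B1 B2) (i + k))
  rw [List.map_const', List.prod_replicate, List.map_const', List.prod_replicate, one_pow,
    sg_length, mul_one (_ ^ a)] at hs
  have h1 : (-1 : ℂ) ^ (if right then 0 else a) = (if right then (1 : ℂ) else -1) ^ a := by
    cases right <;> simp
  rw [h1]
  unfold Hk
  rw [← hs]
  apply listDet_congr
  intro i hi j hj
  rw [mem_sg] at hi hj
  have key : th F (tau B1 B2) (i + j) = ((B1 ++ B2).map (fun b => ((if right then (1 : ℂ) else -1) * w b * wt (B1 ++ B2) b)
      * b ^ (i + j) * Qp F b)).sum := by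
    apply th_exp _ _ _ hB0
    intro q hq
    rw [tau, List.map_append, List.sum_append]
    cases hright : right
    · have := hl hright
      rw [Hh_zero hB (by simp; omega), zero_sub, ← neg_one_mul, ← listsum_mul, listsum_zero B1, zero_add]
      · refine listsum_congr fun b hb => ?_
        rw [hw2 b hb, hright]; simp; ring
      · intro b hb
        rw [hw1 b hb, hright]; simp
    · have := hr hright
      rw [Hh_pos (by omega), List.map_append, List.sum_append, add_sub_cancel_right,
        listsum_zero B2 (fun b => _ * _ * _ * _), add_zero]
      · refine listsum_congr fun b hb => ?_
        rw [hw1 b hb, hright]; simp; ring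
      · intro b hb
        rw [hw2 b hb, hright]; simp
  rw [key, mul_one, ← listsum_mul]
  refine listsum_congr fun b hb => ?_
  cases right <;> simp <;> ring

/-- the Jacobi–Trudi value -/
noncomputable def JT (B1 B2 F1 F2 : List ℂ) (a : ℕ) (s : ℤ) : ℂ :=
  (-1) ^ (a * B2.length + tri a) *
    Hk (th (F1 ++ F2) (tau B1 B2)) a (s + ((B1.length : ℤ) - F1.length) - a)

theorem theta_eq (m1 m2 n1 n2 : ℕ) :
    ((m1 : ℤ) + m2) * ((m1 : ℤ) + m2 - 1) / 2 + ((n1 : ℤ) + n2) * ((n1 : ℤ) + n2 - 1) / 2 =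
      ((tri (m1 + m2) + tri (n1 + n2) : ℕ) : ℤ) := by
  rw [← Nat.cast_add, ← Nat.cast_add, tri_int, tri_int, Nat.cast_add]

theorem sign_mul {A : ℤ} {X Y : ℕ} (h : (A : ZMod 2) + X = Y) (H : ℂ) :
    (-1 : ℂ) ^ A * ((-1) ^ X * H) = (-1) ^ Y * H := by
  rw [← mul_assoc, ← zpow_natCast, ← zpow_add₀ (by norm_num), zpow_par (A + X) Y (by push_cast; exact h)]

theorem JT_wing {F1 F2 B1 B2 : List ℂ} (hF : (F1 ++ F2).Nodup) (hF0 : ∀ x ∈ F1 ++ F2, x ≠ 0) (hB : (B1 ++ B2).Nodup)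
    (hB0 : ∀ b ∈ B1 ++ B2, b ≠ 0) (hBF : ∀ b ∈ B1 ++ B2, b ∉ F1 ++ F2)
    {χ : ℤ → ℤ → ℂ} (hχ : IsChi id B1 B2 F1 F2 χ) (a : ℕ) (s : ℤ) (right : Bool)
    (h : (a : ℤ) ≤ if right then s + ((B1.length : ℤ) - F1.length) else -s + ((B2.length : ℤ) - F2.length)) :
    χ a s = JT B1 B2 F1 F2 a s := by
  obtain ⟨h0, -, -, -, -, h5, h6, h7, h8⟩ := hχ
  rw [theta_eq] at h5 h6 h7 h8
  by_cases ham : B1.length + B2.length < a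
  · rw [h0, JT, Hk_eq_zero hF hF0 hB hB0 _ a 0 0 (by omega) (by omega), mul_zero]
    · intro k hk1 hk2 hk3
      right
      simp only [List.length_append] at hk2
      cases right <;> simp at h <;> push_cast at hk2 <;> omega
    · cases right <;> simp at h <;> omega
  push Not at ham
  obtain ⟨D, hD⟩ := Nat.exists_eq_add_of_le' ham
  have hv := wing_val hF hB hB0 hBF right D
  have htm : (tri (B1.length + B2.length) : ZMod 2) = tri D + tri a + D * a := by
    rw [hD, tri_add]; push_cast; ring
  have hDz : (D : ZMod 2) = B1.length + B2.length + a := by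
    have : ((D + a : ℕ) : ZMod 2) = ((B1.length + B2.length : ℕ) : ZMod 2) := by rw [hD]
    push_cast at this
    rw [← this, add_assoc, zmod_two_self, add_zero]
  rcases le_total (a : ℤ) ((B1.length : ℤ) - F1.length + ((B2.length : ℤ) - F2.length)) with h1 | h1
  · obtain ⟨p, hp⟩ := Int.eq_ofNat_of_zero_le (sub_nonneg.2 h1)
    have hv := hv p 0 a (s + ((B1.length : ℤ) - F1.length) - a) (by simp; omega) (by simp) hD
      (by rintro rfl; simp at h; omega) (by rintro rfl; simp at h ⊢; omega)
    cases right
    · simp only [Bool.false_eq_true, if_false] at h hv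
      rw [h7 a s h h1, JT, mul_div_assoc, seg_eq, seg_eq,
        show (-(a : ℤ) + ((B1.length : ℤ) - F1.length) + ((B2.length : ℤ) - F2.length) - 1 + 1).toNat = p by omega,
        show (s + ((B1.length : ℤ) - F1.length) - (s - a + ((B1.length : ℤ) - F1.length) + 1) + 1).toNat = a by omega,
        show s - a + ((B1.length : ℤ) - F1.length) + 1 = s + ((B1.length : ℤ) - F1.length) - a + 1 by ring]
      rw [sg_zero] at hv
      rw [hv]
      apply sign_mul
      push_cast
      rw [htm, List.length_append]
      simp only [show tri 0 = 0 from rfl, Nat.cast_zero]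
      ring_nf
      reduce_mod_char
    · simp only [if_true] at h hv
      rw [h5 a s h h1, JT, mul_div_assoc, seg_eq, seg_eq,
        show (-(a : ℤ) + ((B1.length : ℤ) - F1.length) + ((B2.length : ℤ) - F2.length) - 1 + 1).toNat = p by omega,
        show (s + ((B1.length : ℤ) - F1.length) - (s - a + ((B1.length : ℤ) - F1.length) + 1) + 1).toNat = a by omega,
        show s - a + ((B1.length : ℤ) - F1.length) + 1 = s + ((B1.length : ℤ) - F1.length) - a + 1 by ring]
      rw [sg_zero] at hv
      rw [hv]
      apply sign_mul
      push_cast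
      rw [htm, List.length_append]
      simp only [show tri 0 = 0 from rfl, Nat.cast_zero]
      ring_nf
      reduce_mod_char
  · obtain ⟨k, hk⟩ := Int.eq_ofNat_of_zero_le (sub_nonneg.2 h1)
    have hv := hv 0 k a (s + ((B1.length : ℤ) - F1.length) - a) (by simp; omega) (by simp) hD
      (by rintro rfl; simp at h; omega) (by rintro rfl; simp at h ⊢; omega)
    have hkz : (k : ZMod 2) = a + B1.length + B2.length + F1.length + F2.length := by
      have : ((k : ℤ) : ZMod 2) = ((a - ((B1.length : ℤ) - F1.length + ((B2.length : ℤ) - F2.length)) : ℤ) : ZMod 2) := by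
        rw [hk]
      push_cast at this
      rw [this]
      simp only [zmod_two_sub]
      ring_nf
    cases right
    · simp only [Bool.false_eq_true, if_false] at h hv
      rw [h8 a s h1 h, JT, mul_div_assoc, seg_eq, seg_eq,
        show ((a : ℤ) - ((B1.length : ℤ) - F1.length) - ((B2.length : ℤ) - F2.length) - 1 + 1).toNat = k by omega,
        show (s + ((B1.length : ℤ) - F1.length) - (s - a + ((B1.length : ℤ) - F1.length) + 1) + 1).toNat = a by omega,
        show s - a + ((B1.length : ℤ) - F1.length) + 1 = s + ((B1.length : ℤ) - F1.length) - a + 1 by ring]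
      rw [sg_zero] at hv
      rw [hv]
      apply sign_mul
      push_cast
      rw [htm, List.length_append, hkz]
      simp only [zmod_two_sub]
      ring_nf
      reduce_mod_char
      rw [pow_two, zmod_two_sq]
      ring_nf
      reduce_mod_char
    · simp only [if_true] at h hv
      rw [h6 a s h1 h, JT, mul_div_assoc, seg_eq, seg_eq,
        show ((a : ℤ) - ((B1.length : ℤ) - F1.length) - ((B2.length : ℤ) - F2.length) - 1 + 1).toNat = k by omega,
        show (s + ((B1.length : ℤ) - F1.length) - (s - a + ((B1.length : ℤ) - F1.length) + 1) + 1).toNat = a by omega,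
        show s - a + ((B1.length : ℤ) - F1.length) + 1 = s + ((B1.length : ℤ) - F1.length) - a + 1 by ring]
      rw [sg_zero] at hv
      rw [hv]
      apply sign_mul
      push_cast
      rw [htm, List.length_append, hkz]
      simp only [zmod_two_sub]
      ring_nf
      reduce_mod_char
      rw [pow_two, zmod_two_sq]
      ring_nf
      reduce_mod_char

theorem tri_par {m a d g : ℕ} (h : a + d = m + g) (hdg : d = 0 ∨ g = 0) :
    (tri m + tri d + tri g + tri a + g : ZMod 2) = (m + 1) * a := by
  have hz : ((a + d : ℕ) : ZMod 2) = ((m + g : ℕ) : ZMod 2) := by rw [h]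
  have ht : ((tri (a + d) : ℕ) : ZMod 2) = ((tri (m + g) : ℕ) : ZMod 2) := by rw [h]
  rw [tri_add, tri_add] at ht
  push_cast at hz ht
  rcases hdg with rfl | rfl
  · simp only [Nat.cast_zero, add_zero, mul_zero, show tri 0 = 0 from rfl] at hz ht ⊢
    rw [ht, hz]
    generalize (tri m : ZMod 2) = x
    generalize (tri g : ZMod 2) = y
    generalize (m : ZMod 2) = x'
    generalize (g : ZMod 2) = y'
    revert x y x' y'; decide
  · simp only [Nat.cast_zero, add_zero, mul_zero, show tri 0 = 0 from rfl] at hz ht ⊢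
    rw [← ht, ← hz]
    generalize (tri a : ZMod 2) = x
    generalize (tri d : ZMod 2) = y
    generalize (a : ZMod 2) = x'
    generalize (d : ZMod 2) = y'
    revert x y x' y'; decide

theorem strip_val {F B1 B2 : List ℂ} (hF : F.Nodup) (hF0 : ∀ x ∈ F, x ≠ 0) (hB : (B1 ++ B2).Nodup)
    (hB0 : ∀ b ∈ B1 ++ B2, b ≠ 0) (hBF : ∀ b ∈ B1 ++ B2, b ∉ F)
    (P1 P2 k1 k2 K1 e g d a : ℕ) (h1 : F.length + P1 = K1 + k1) (h1' : P1 = 0 ∨ k1 = 0)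
    (h2 : F.length + P2 = e + d + k2) (h2' : P2 = 0 ∨ k2 = 0)
    (hK : K1 + e + d = F.length + B1.length + B2.length)
    (hgd : d = 0 ∨ g = 0) (hdK : d ≤ K1) (ha : a + F.length = K1 + e + g) :
    Delta id B1 B2 F (sg 1 k1 ++ sg ((e + g : ℕ) + 1) k2) [] (sg 1 P1) (sg (1 - (e + g : ℕ)) P2) (e + g : ℕ) /
      Dden id (B1 ++ B2) F =
    (-1) ^ (((e + g) * (B2.length + P2 + k2) + (tri k1 + tri k2)) +
      (P1 * F.length + (k1 * (e + d) + tri k1 + tri k2) +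
      tri F.length + tri d + tri g + (K1 * (e + g) + e))) *
      Hk (th F (tau B1 B2)) a (-((e + g : ℕ) : ℤ)) := by
  rw [Delta_strip, mul_div_assoc, Nat.cast_add, strip hF hF0 hB hB0 hBF P1 P2 k1 k2 K1 e g d a h1 h1' h2 h2' hK hgd hdK ha,
    ← mul_assoc, ← pow_add]
  rfl

theorem strip_par {m1 m2 n1 n2 P1 P2 k1 k2 K1 e g d a : ℕ} (h1 : n1 + n2 + P1 = K1 + k1) (h1' : P1 = 0 ∨ k1 = 0)
    (h2 : n1 + n2 + P2 = e + d + k2)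
    (hK : K1 + e + d = n1 + n2 + m1 + m2)
    (hgd : d = 0 ∨ g = 0) (ha : a + (n1 + n2) = K1 + e + g) (A p1 s : ℤ) (hp : p1 = P1 - k1)
    (hs : s = p1 - (m1 - n1))
    (hA1 : 0 ≤ p1 → A = p1 * (s + n2)) (hA2 : p1 ≤ 0 → A = p1 * m2) :
    ((A + ((tri (m1 + m2) + tri (n1 + n2) : ℕ) : ℤ) : ℤ) : ZMod 2) +
      ((((e + g) * (m2 + P2 + k2) + (tri k1 + tri k2)) +
      (P1 * (n1 + n2) + (k1 * (e + d) + tri k1 + tri k2) +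
      tri (n1 + n2) + tri d + tri g + (K1 * (e + g) + e)) : ℕ) : ZMod 2) = ((a * m2 + tri a : ℕ) : ZMod 2) := by
  have ht := tri_par (m := m1 + m2) (a := a) (d := d) (g := g) (by omega) hgd
  have hz {x y : ℕ} (h : x = y) : (x : ZMod 2) = y := by rw [h]
  have e1 := hz h1
  have e2 := hz h2
  have e3 := hz hK
  have e4 := hz ha
  push_cast at e1 e2 e3 e4 ht ⊢
  generalize (tri (m1 + m2) : ZMod 2) = tm at *
  generalize (tri (n1 + n2) : ZMod 2) = tn at *
  have mv : ∀ x y w : ZMod 2, x + y = w → x = w + y := by decide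
  have mv' : ∀ x y w : ZMod 2, w = x + y → x = w + y := by decide
  have f1 := mv' _ _ _ e1
  have f2 : (e : ZMod 2) + d = m1 + m2 + (P1 + k1) := by
    rw [add_assoc, add_comm] at e3
    rw [mv _ _ _ e3, f1]
    ring_nf; reduce_mod_char
  have f3 : (P2 : ZMod 2) + k2 = m1 + m2 + n1 + n2 + (P1 + k1) := by
    rw [f2, add_comm] at e2
    rw [mv _ _ _ e2]
    ring_nf; reduce_mod_char
  have f4 : (a : ZMod 2) = P1 + k1 + e + g := by
    rw [mv _ _ _ e4, f1]
    ring_nf; reduce_mod_char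
  rw [f4] at ht ⊢
  rw [add_assoc (m2 : ZMod 2)]
  rcases h1' with rfl | rfl
  · have := strip_par2 m1 m2 n1 n2 k1 e g (tri k1 + tri k2) tm tn (tri d) (tri g) (tri a) (P2 + k2) (e + d)
      (by simpa using ht) (by simpa using f3) (by simpa using f2)
    rw [hA2 (by omega), hp, f1]
    push_cast
    simp only [zmod_two_neg, zmod_two_sub, add_zero, zero_add]
    linear_combination this
  · have := strip_par1 m1 m2 n1 n2 P1 e g (tri 0 + tri k2) tm tn (tri d) (tri g) (tri a) (P2 + k2)
      (by simpa using ht) (by simpa using f3)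
    rw [hA1 (by omega), hs, hp, f1]
    push_cast
    simp only [zmod_two_neg, zmod_two_sub, add_zero, zero_add]
    linear_combination this

theorem pos_neg (x : ℤ) : ∃ P k : ℕ, x = P - k ∧ (P = 0 ∨ k = 0) :=
  ⟨x.toNat, (-x).toNat, by omega, by omega⟩

set_option maxHeartbeats 1000000 in
theorem JT_strip {F1 F2 B1 B2 : List ℂ} (hF : (F1 ++ F2).Nodup) (hF0 : ∀ x ∈ F1 ++ F2, x ≠ 0) (hB : (B1 ++ B2).Nodup)
    (hB0 : ∀ b ∈ B1 ++ B2, b ≠ 0) (hBF : ∀ b ∈ B1 ++ B2, b ∉ F1 ++ F2)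
    {χ : ℤ → ℤ → ℂ} (hχ : IsChi id B1 B2 F1 F2 χ) (a : ℕ) (s : ℤ)
    (ha1 : s + ((B1.length : ℤ) - F1.length) ≤ a) (ha2 : -s + ((B2.length : ℤ) - F2.length) ≤ a) :
    χ a s = JT B1 B2 F1 F2 a s := by
  obtain ⟨h0, h1, h2, h3, h4, -, -, -, -⟩ := hχ
  rw [theta_eq] at h1 h2 h3 h4
  by_cases hK1 : s + ((B1.length : ℤ) - F1.length) + (F1.length + F2.length) < 0
  · rw [h0 _ _ (by omega), JT, Hk_eq_zero hF hF0 hB hB0 _ a (B1.length + B2.length - a)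
      (a - (B1.length + B2.length) + (s + ((B1.length : ℤ) - F1.length) + (F1.length + F2.length))).toNat 
        (by omega) (by omega), mul_zero]
    intro k hk1 hk2 hk3
    simp only [List.length_append] at hk2
    push_cast at hk2
    omega
  by_cases hK2 : -s + ((B2.length : ℤ) - F2.length) + (F1.length + F2.length) < 0
  · rw [h0 _ _ (by omega), JT, Hk_eq_zero hF hF0 hB hB0 _ a (s + ((B1.length : ℤ) - F1.length) - a)
      (a - (s + ((B1.length : ℤ) - F1.length))).toNat 
        (by omega) (by omega), mul_zero]
    intro k hk1 hk2 hk3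
    omega
  push Not at hK1 hK2
  obtain ⟨P1, k1, hP1, hz1⟩ := pos_neg (s + ((B1.length : ℤ) - F1.length))
  obtain ⟨P2, k2, hP2, hz2⟩ := pos_neg (-s + ((B2.length : ℤ) - F2.length))
  obtain ⟨K1, hK⟩ := Int.eq_ofNat_of_zero_le hK1
  obtain ⟨d, g, hdg, hz3⟩ := pos_neg ((B1.length + B2.length : ℤ) - a)
  obtain ⟨e, he⟩ := Int.eq_ofNat_of_zero_le
    (show 0 ≤ a - (s + ((B1.length : ℤ) - F1.length)) - g by
      rcases hz3 with h | h <;> subst h <;> omega)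
  have hdK : d ≤ K1 := by
    rcases hz3 with h | h <;> subst h <;> omega
  have hη : ((e + g : ℕ) : ℤ) = a - s - ((B1.length : ℤ) - F1.length) := by omega
  have hv := strip_val hF hF0 hB hB0 hBF P1 P2 k1 k2 K1 e g d a (by simp; clear hz1 hz2 hz3; omega) hz1
    (by simp; clear hz1 hz2 hz3; omega) hz2 (by simp; clear hz1 hz2 hz3; omega) hz3 hdK
    (by simp; clear hz1 hz2 hz3; omega)
  rw [hη] at hv
  suffices hχv : ∃ A : ℤ, (0 ≤ s + ((B1.length : ℤ) - F1.length) → 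
        A = (s + ((B1.length : ℤ) - F1.length)) * (s + F2.length)) ∧
      (s + ((B1.length : ℤ) - F1.length) ≤ 0 → A = (s + ((B1.length : ℤ) - F1.length)) * B2.length) ∧
      χ a s = (-1) ^ (A + ((tri (B1.length + B2.length) + tri (F1.length + F2.length) : ℕ) : ℤ)) *
        Delta id B1 B2 (F1 ++ F2) (sg 1 k1 ++ sg (a - s - ((B1.length : ℤ) - F1.length) + 1) k2) [] (sg 1 P1)
          (sg (1 - (a - s - ((B1.length : ℤ) - F1.length))) P2) (a - s - ((B1.length : ℤ) - F1.length)) /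
          Dden id (B1 ++ B2) (F1 ++ F2) by
    obtain ⟨A, hA1, hA2, h⟩ := hχv
    rw [h, mul_div_assoc, hv, JT, show s + ((B1.length : ℤ) - F1.length) - a =
      -(a - s - ((B1.length : ℤ) - F1.length)) by ring]
    apply sign_mul
    rw [List.length_append]
    exact strip_par (by clear hz1 hz2 hz3; omega) hz1 (by clear hz1 hz2 hz3; omega)
      (by clear hz1 hz2 hz3; omega) hz3 (by clear hz1 hz2 hz3; omega) A
      (s + ((B1.length : ℤ) - F1.length)) s (by omega) (by omega) hA1 hA2
  clear hv hη he hdK hdg hz3 hK h0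
  have mulz : s + ((B1.length : ℤ) - F1.length) = 0 → ∀ x y : ℤ, 
    (s + ((B1.length : ℤ) - F1.length)) * x = (s + ((B1.length : ℤ) - F1.length)) * y := by
    intro h x y; rw [h, zero_mul, zero_mul]
  have e2 : s - a + ((B1.length : ℤ) - F1.length) + 1 = 1 - (a - s - ((B1.length : ℤ) - F1.length)) := by ring
  have l1 : (s + ((B1.length : ℤ) - F1.length) - 1 + 1).toNat = P1 := by omega
  have l2 : (-s - ((B1.length : ℤ) - F1.length) - 1 + 1).toNat = k1 := by omega
  have l3 : (-a + ((B1.length : ℤ) - F1.length) + ((B2.length : ℤ) - F2.length) - 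
    (1 - (a - s - ((B1.length : ℤ) - F1.length))) + 1).toNat = P2 := by omega
  have l4 : (a - ((B1.length : ℤ) - F1.length) - ((B2.length : ℤ) - F2.length) - 
    (a - s - ((B1.length : ℤ) - F1.length) + 1) + 1).toNat = k2 := by omega
  have h1 := h1 a s ha1 ha2 (by omega)
  have h2 := h2 a s ha1 ha2 (by omega)
  have h3 := h3 a s ha1 ha2 (by omega)
  have h4 := h4 a s ha1 ha2 (by omega)
  simp only [seg_eq, e2, l1, l2, l3, l4] at h1 h2 h3 h4
  rcases le_total 0 (s + ((B1.length : ℤ) - F1.length)) with hp1 | hp1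
  · refine ⟨(s + ((B1.length : ℤ) - F1.length)) * (s + F2.length), fun _ => rfl, fun h => mulz (by omega) _ _, ?_⟩
    have z1 : k1 = 0 := by omega
    rcases le_total 0 (-s + ((B2.length : ℤ) - F2.length)) with hp2 | hp2
    · have z2 : k2 = 0 := by omega
      rw [h1 (by omega) (by omega)]
      simp only [z1, z2, sg_zero, List.append_nil]
    · have z2 : P2 = 0 := by omega
      rw [h2 (by omega) (by omega)]
      simp only [z1, z2, sg_zero, List.nil_append]
  · refine ⟨(s + ((B1.length : ℤ) - F1.length)) * B2.length, fun h => mulz (by omega) _ _, fun _ => rfl, ?_⟩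
    have z1 : P1 = 0 := by omega
    rcases le_total 0 (-s + ((B2.length : ℤ) - F2.length)) with hp2 | hp2
    · have z2 : k2 = 0 := by omega
      rw [h3 (by omega) (by omega)]
      simp only [z1, z2, sg_zero, List.append_nil]
    · have z2 : P2 = 0 := by omega
      rw [h4 (by omega) (by omega)]
      simp only [z1, z2, sg_zero]

theorem JT_eq {F1 F2 B1 B2 : List ℂ} (hF : (F1 ++ F2).Nodup) (hF0 : ∀ x ∈ F1 ++ F2, x ≠ 0) (hB : (B1 ++ B2).Nodup)
    (hB0 : ∀ b ∈ B1 ++ B2, b ≠ 0) (hBF : ∀ b ∈ B1 ++ B2, b ∉ F1 ++ F2)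
    {χ : ℤ → ℤ → ℂ} (hχ : IsChi id B1 B2 F1 F2 χ) (a : ℕ) (s : ℤ) :
    χ a s = JT B1 B2 F1 F2 a s := by
  by_cases h1 : (a : ℤ) ≤ s + ((B1.length : ℤ) - F1.length)
  · exact JT_wing hF hF0 hB hB0 hBF hχ a s true (by simpa using h1)
  by_cases h2 : (a : ℤ) ≤ -s + ((B2.length : ℤ) - F2.length)
  · exact JT_wing hF hF0 hB hB0 hBF hχ a s false (by simpa using h2)
  · exact JT_strip hF hF0 hB hB0 hBF hχ a s (by omega) (by omega)

theorem baecklund_gen (X Y : ℤ → ℤ → ℂ) (t t' : ℤ → ℂ) (z : ℂ) (hz : z ≠ 0) (M : ℕ) (η η' : ℤ) (hη : η' = η - 1)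
    (ht : ∀ i, t' i = t (i + 1) - z * t i)
    (hX0 : ∀ a s, a < 0 → X a s = 0) (hY0 : ∀ a s, a < 0 → Y a s = 0)
    (hX : ∀ (a : ℕ) s, X a s = (-1) ^ (a * M + tri a) * Hk t a (s + η - a))
    (hY : ∀ (a : ℕ) s, Y a s = (-1) ^ (a * M + tri a) * Hk t' a (s + η' - a)) :
    (∀ a s : ℤ, X (a + 1) s * Y a s - X a s * Y (a + 1) s = z * X (a + 1) (s - 1) * Y a (s + 1)) ∧
    (∀ a s : ℤ, X a (s + 1) * Y a s - X a s * Y a (s + 1) = z * X (a + 1) s * Y (a - 1) (s + 1)) := by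
  have htt : t' = fun i => t (i + 1) - z * t i := funext ht
  subst htt hη
  constructor
  · intro a s
    by_cases ha : a < 0
    · rw [hX0 a s ha, hY0 a s ha, hY0 a (s + 1) ha]; ring
    push Not at ha
    lift a to ℕ using ha
    have h := hankel1 t z hz a (s + η - a)
    rw [show (a : ℤ) + 1 = ((a + 1 : ℕ) : ℤ) by push_cast; ring, hX, hX, hX, hY, hY, hY]
    push_cast
    rw [show s + η - ((a : ℤ) + 1) = s + η - a - 1 by ring, show s + (η - 1) - (a : ℤ) = s + η - a - 1 by ring,
      show s + (η - 1) - ((a : ℤ) + 1) = s + η - a - 2 by ring,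
      show s - 1 + η - ((a : ℤ) + 1) = s + η - a - 2 by ring,
      show s + 1 + (η - 1) - (a : ℤ) = s + η - a by ring]
    linear_combination ((-1) ^ ((a + 1) * M + tri (a + 1)) * (-1) ^ (a * M + tri a)) * h
  · intro a s
    by_cases ha : a < 0
    · rw [hX0 a s ha, hY0 a s ha, hY0 (a - 1) (s + 1) (by omega)]; ring
    push Not at ha
    lift a to ℕ using ha
    cases a with
    | zero =>
      rw [hY0 (_ - 1) (s + 1) (by simp), hX, hX, hY, hY]
      simp only [Hk_zero]
      ring
    | succ q =>
      have h := hankel2 t z hz q (s + η - (q + 1))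
      have e1 : ((q + 1 : ℕ) : ℤ) - 1 = (q : ℤ) := by push_cast; ring
      have e2 : ((q + 1 : ℕ) : ℤ) + 1 = ((q + 2 : ℕ) : ℤ) := by push_cast; ring
      rw [e1, e2, hX, hX, hX, hY, hY, hY]
      push_cast
      rw [show s + 1 + η - ((q : ℤ) + 1) = s + η - (q + 1) + 1 by ring,
        show s + (η - 1) - ((q : ℤ) + 1) = s + η - (q + 1) - 1 by ring,
        show s + 1 + (η - 1) - ((q : ℤ) + 1) = s + η - (q + 1) by ring,
        show s + η - ((q : ℤ) + 2) = s + η - (q + 1) - 1 by ring,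
        show s + 1 + (η - 1) - (q : ℤ) = s + η - (q + 1) + 1 by ring]
      have s1 := neg_one_pow_sq ((q + 1) * M + tri (q + 1))
      have s2 : (-1 : ℂ) ^ ((q + 2) * M + tri (q + 2)) * (-1) ^ (q * M + tri q) = -1 := by
        rw [← pow_add, tri_succ, tri_succ, show (q + 2) * M + (tri q + q + (q + 1)) + (q * M + tri q) =
          2 * ((q + 1) * M + tri q + q) + 1 by ring, pow_succ, pow_mul]
        simp
      linear_combination h + (Hk t (q + 1) (s + η - (q + 1) + 1) *
          Hk (fun i => t (i + 1) - z * t i) (q + 1) (s + η - (q + 1) - 1) -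
        Hk t (q + 1) (s + η - (q + 1)) * Hk (fun i => t (i + 1) - z * t i) (q + 1) (s + η - (q + 1))) * s1
        - z * Hk t (q + 2) (s + η - (q + 1) - 1) * Hk (fun i => t (i + 1) - z * t i) q (s + η - (q + 1) + 1) * s2

theorem backlund_right {ι : Type*} [DecidableEq ι] (z : ι → ℂ) (B1 B2 F1 F2 : List ι)
    (hnd : (B1 ++ B2 ++ F1 ++ F2).Nodup)
    (hz0 : ∀ i ∈ B1 ++ B2 ++ F1 ++ F2, z i ≠ 0)
    (hzd : ∀ i ∈ B1 ++ B2 ++ F1 ++ F2, ∀ j ∈ B1 ++ B2 ++ F1 ++ F2, i ≠ j → z i ≠ z j)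
    (b : ι) (hb : b ∈ B1) (f : ι) (hf : f ∈ F1)
    (χ χb χf : ℤ → ℤ → ℂ)
    (hχ : IsChi z B1 B2 F1 F2 χ)
    (hχb : IsChi z (B1.erase b) B2 F1 F2 χb)
    (hχf : IsChi z B1 B2 (F1.erase f) F2 χf) :
    (∀ a s : ℤ,
      χ (a + 1) s * χb a s - χ a s * χb (a + 1) s = z b * χ (a + 1) (s - 1) * χb a (s + 1)) ∧
    (∀ a s : ℤ,
      χ a (s + 1) * χb a s - χ a s * χb a (s + 1) = z b * χ (a + 1) s * χb (a - 1) (s + 1)) ∧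
    (∀ a s : ℤ,
      χf (a + 1) s * χ a s - χf a s * χ (a + 1) s = z f * χf (a + 1) (s - 1) * χ a (s + 1)) ∧
    (∀ a s : ℤ,
      χf a (s + 1) * χ a s - χf a s * χ a (s + 1) = z f * χf (a + 1) s * χ (a - 1) (s + 1)) := by
  have n0 : ∀ a s, a < 0 → χ a s = 0 := fun a s h => hχ.1 a s (Or.inl h)
  have nb : ∀ a s, a < 0 → χb a s = 0 := fun a s h => hχb.1 a s (Or.inl h)
  have nf : ∀ a s, a < 0 → χf a s = 0 := fun a s h => hχf.1 a s (Or.inl h)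
  have cχ := IsChi_map hχ
  have cb := IsChi_map hχb
  have cf := IsChi_map hχf
  -- transfer to lists of complex numbers
  have hNd : ((B1.map z ++ B2.map z) ++ (F1.map z ++ F2.map z)).Nodup := by
    rw [← List.map_append, ← List.map_append, ← List.map_append, ← List.append_assoc]
    refine List.Nodup.map_on ?_ hnd
    intro x hx y hy h
    by_contra hne
    exact hzd x hx y hy hne h
  have h0 : ∀ x ∈ (B1.map z ++ B2.map z) ++ (F1.map z ++ F2.map z), x ≠ 0 := by
    intro x hx
    rw [← List.map_append, ← List.map_append, ← List.map_append, ← List.append_assoc] at hx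
    obtain ⟨i, hi, rfl⟩ := List.mem_map.1 hx
    exact hz0 i hi
  have pB : (B1.map z).Perm (z b :: (B1.erase b).map z) := (List.perm_cons_erase hb).map z
  have pF : (F1.map z).Perm (z f :: (F1.erase f).map z) := (List.perm_cons_erase hf).map z
  have lB : B1.length = (B1.erase b).length + 1 := by simpa using pB.length_eq
  have lF : F1.length = (F1.erase f).length + 1 := by simpa using pF.length_eq
  rw [List.nodup_append] at hNd
  obtain ⟨hB, hF, hBF⟩ := hNd
  have hBF' : ∀ x ∈ B1.map z ++ B2.map z, x ∉ F1.map z ++ F2.map z := fun x hx hx' => hBF x hx x hx' rfl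
  have hB0 : ∀ x ∈ B1.map z ++ B2.map z, x ≠ 0 := fun x hx => h0 x (List.mem_append_left _ hx)
  have hF0 : ∀ x ∈ F1.map z ++ F2.map z, x ≠ 0 := fun x hx => h0 x (List.mem_append_right _ hx)
  have pBB : (B1.map z ++ B2.map z).Perm (z b :: ((B1.erase b).map z ++ B2.map z)) := pB.append_right _
  have pFF : (F1.map z ++ F2.map z).Perm (z f :: ((F1.erase f).map z ++ F2.map z)) := pF.append_right _
  have hBc := pBB.nodup_iff.1 hB
  have hFc := pFF.nodup_iff.1 hF
  have hBm : ∀ x ∈ (B1.erase b).map z ++ B2.map z, x ∈ B1.map z ++ B2.map z := fun x hx =>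
    pBB.mem_iff.2 (List.mem_cons_of_mem _ hx)
  have hFm : ∀ x ∈ (F1.erase f).map z ++ F2.map z, x ∈ F1.map z ++ F2.map z := fun x hx =>
    pFF.mem_iff.2 (List.mem_cons_of_mem _ hx)
  have hzb : z b ≠ 0 := hB0 _ (pBB.mem_iff.2 (by simp))
  have hzf : z f ≠ 0 := hF0 _ (pFF.mem_iff.2 (by simp))
  have J := JT_eq hF hF0 hB hB0 hBF' cχ
  have Jb := JT_eq hF hF0 (List.nodup_cons.1 hBc).2 (fun x hx => hB0 x (hBm x hx))
    (fun x hx => hBF' x (hBm x hx)) cb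
  have Jf := JT_eq (List.nodup_cons.1 hFc).2 (fun x hx => hF0 x (hFm x hx)) hB hB0
    (fun x hx h => hBF' x hx (hFm x h)) cf
  simp only [JT, List.length_map] at J Jb Jf
  have R1 := baecklund_gen χ χb _ _ (z b) hzb B2.length ((B1.length : ℤ) - F1.length)
    (((B1.erase b).length : ℤ) - F1.length) (by omega) (by
      intro i
      rw [← th_lin]
      congr 1
      funext j
      rw [tau_perm pB, tau_cons hBc (fun x hx => hB0 x (pBB.mem_iff.2 hx))]) n0 nb J Jb
  have R2 := baecklund_gen χf χ _ _ (z f) hzf B2.length ((B1.length : ℤ) - (F1.erase f).length)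
    ((B1.length : ℤ) - F1.length) (by omega) (by
      intro i
      rw [th_perm pFF, th_cons]) nf n0 Jf J
  exact ⟨R1.1, R1.2, R2.1, R2.2⟩

end Stmt1
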